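/- arXiv:2003.08083 — 4 statements merged into one kernel-verified Lean document; each statement's English description precedes it below -/
import Mathlib

section
/- For every prime q with 3 < q < 10^5, every integer greater than two can be written as the sum of a prime and a square-free number co-prime to q. -/
/-!
Small `n`: let `p, p'` be primes whose difference is `3`-smooth. Then `q > 3` cannot divide both
`n - p` and `n - p'`, so `n` is representable as soon as both are square-free. A few such pairs
suffice for every `3 < n < 2 ^ 24` except `11`; this is checked by a sieve on bit masks.

Large `n`: choose `b ∈ {1, 3}` with `b ≢ n` modulo `4`, so that `4 ∤ n - p` for every prime
`p ≡ b` modulo `4`. If `n` is not representable, then every such `p < n` is lost: `n - p` is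
divisible by `q` or by the square of an odd prime. With primes weighted by `log p`, the total
weight is bounded below by a Chebyshev-type combination of the sums of `log m` over residue classes
modulo `4`. The weight lost to a modulus `d` is bounded above by an elementary Brun–Titchmarsh
inequality: over a residue class modulo `K`, the product of the primes in `(x / K, x]`, times the
part of `(x / K)!` coprime to `K`, divides a product of about `x / K` terms of the progression.
Summed over `q` and all squares of odd primes, the losses are less than the total.
-/

namespace PrimeAddSquarefree

section Representations

/-- `n` is the sum of a prime and a square-free number co-prime to `q`. -/
def IsRepresentable (q n : ℕ) : Prop :=
  ∃ p k : ℕ, p.Prime ∧ Squarefree k ∧ k.Coprime q ∧ n = p + k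

variable {q n p p' : ℕ}

theorem isRepresentable_of_squarefree_sub (hq : q.Prime) (hp : p.Prime) (hpn : p ≤ n)
    (hs : Squarefree (n - p)) (hqn : ¬ q ∣ n - p) : IsRepresentable q n :=
  ⟨p, n - p, hp, hs, ((hq.coprime_iff_not_dvd).mpr hqn).symm, (Nat.add_sub_cancel' hpn).symm⟩

theorem isRepresentable_of_prime_pair (hq : q.Prime) (hp : p.Prime) (hp' : p'.Prime)
    (hpp' : p ≤ p') (hpn : p' ≤ n) (hqp : ¬ q ∣ p' - p) (hs : Squarefree (n - p))
    (hs' : Squarefree (n - p')) : IsRepresentable q n := by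
  by_cases hqn : q ∣ n - p
  · refine isRepresentable_of_squarefree_sub hq hp' hpn hs' fun hqn' => hqp ?_
    have hdiff : n - p - (n - p') = p' - p := by omega
    exact hdiff ▸ Nat.dvd_sub hqn hqn'
  · exact isRepresentable_of_squarefree_sub hq hp (hpp'.trans hpn) hs hqn

theorem not_dvd_six_pow (hq : q.Prime) (hq3 : 3 < q) (e : ℕ) : ¬ q ∣ 6 ^ e := by
  intro h
  have h6 : q ∣ 2 * 3 := hq.dvd_of_dvd_pow h
  rcases hq.dvd_mul.mp h6 with h2 | h3
  · exact absurd (Nat.le_of_dvd two_pos h2) (by omega)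
  · exact absurd (Nat.le_of_dvd three_pos h3) (by omega)

end Representations

section BitSieve

/-- `f x`, arranged so that the kernel reduces `x` to a numeral, once, before entering `f`. -/
def evalThen (x : ℕ) (f : ℕ → ℕ) : ℕ := Nat.rec (f 0) (fun y _ => f (y + 1)) x

theorem evalThen_eq (x : ℕ) (f : ℕ → ℕ) : evalThen x f = f x := by cases x <;> rfl

/-- The bit mask of the multiples of `D` below `D * 2 ^ k`, built by repeated doubling. -/
def multiplesMask (D : ℕ) : ℕ → ℕ
  | 0 => 1
  | k + 1 => evalThen (multiplesMask D k) fun M => M ||| M <<< (D * 2 ^ k)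

/-- The mask of the multiples of `D` in `[A, A + L)`. Masks of the sieve are relative to the start
`A` of a window: bit `i` stands for `A + i`. Only bits `i < L` are meaningful. -/
def windowMask (A L D : ℕ) : ℕ :=
  evalThen ((D - A % D) % D) fun o =>
    if o < L then multiplesMask D (Nat.log2 (2 * (L / D) + 1)) <<< o else 0

/-- The bitwise disjunction of `f s, …, f (s + 2 ^ d - 1)`, as a balanced tree so that the kernel's
recursion stays shallow. -/
def orTree (f : ℕ → ℕ) : ℕ → ℕ → ℕ
  | 0, s => f s
  | d + 1, s => orTree f d s ||| orTree f d (s + 2 ^ d)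

/-- The mask of the multiples of `(2 * s + 3) ^ 2`. Since `15015 = 3 * 5 * 7 * 11 * 13`, the test on
`t` lets every prime pass but skips most composite numbers. -/
def oddSquareMask (A L s : ℕ) : ℕ :=
  evalThen (2 * s + 3) fun t =>
    if Nat.gcd t 15015 = 1 ∨ t ∣ 15015 then evalThen (t ^ 2) (windowMask A L) else 0

/-- The mask of the multiples of `4` and of the squares of odd primes below `2 ^ (d + 1) + 3`. -/
def nonSquarefreeMask (A L d : ℕ) : ℕ :=
  windowMask A L 4 ||| orTree (oddSquareMask A L) d 0

/-- The mask `M` moved up by `p`, with the vacated low bits set. -/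
def shiftFill (M p : ℕ) : ℕ := M <<< p ||| (2 ^ p - 1)

/-- Pairs of primes with `3`-smooth difference, found by greedy covering. -/
def primePairs : List (ℕ × ℕ) :=
  [(2, 3), (2, 5), (2, 11), (2, 29), (3, 5), (3, 7), (3, 11), (5, 41), (13, 17), (19, 127),
    (23, 59), (29, 101), (31, 67), (37, 73), (43, 59), (47, 83), (53, 89), (61, 97), (61, 109),
    (71, 107), (79, 103), (109, 113)]

/-- The mask of those `A + i` for which every pair `(p, p')` in `primePairs` fails: `i < p'`, or one
of `A + i - p`, `A + i - p'` is not square-free. -/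
def uncoveredMask (A L d : ℕ) : ℕ :=
  evalThen (nonSquarefreeMask A L d) fun M =>
    primePairs.foldr (fun P acc => acc &&& (shiftFill M P.1 ||| shiftFill M P.2)) (2 ^ L - 1)

theorem testBit_multiplesMask {D k m : ℕ} (hm : m < D * 2 ^ k) (hD : D ∣ m) :
    (multiplesMask D k).testBit m := by
  induction k generalizing m with
  | zero =>
    rw [pow_zero, mul_one] at hm
    simp [Nat.eq_zero_of_dvd_of_lt hD hm, multiplesMask]
  | succ k ih =>
    rw [multiplesMask, evalThen_eq, Nat.testBit_or, Nat.testBit_shiftLeft]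
    rcases lt_or_ge m (D * 2 ^ k) with hlt | hge
    · simp [ih hlt hD]
    · have hlt : m - D * 2 ^ k < D * 2 ^ k := by rw [pow_succ, ← mul_assoc] at hm; omega
      simp [ih hlt (Nat.dvd_sub hD (dvd_mul_right D _)), hge]

theorem dvd_add_neg_mod {A D : ℕ} (hD : 0 < D) : D ∣ A + (D - A % D) % D := by
  have hmod : A % D ≤ D := (Nat.mod_lt A hD).le
  rw [Nat.dvd_iff_mod_eq_zero, Nat.add_mod_mod, ← Nat.mod_add_mod, Nat.add_sub_cancel' hmod,
    Nat.mod_self]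

theorem testBit_windowMask {A L D i : ℕ} (hD : 0 < D) (hi : i < L) (h : D ∣ A + i) :
    (windowMask A L D).testBit i := by
  rw [windowMask, evalThen_eq]
  set o := (D - A % D) % D
  have hoD : o < D := Nat.mod_lt _ hD
  have hoA : D ∣ A + o := dvd_add_neg_mod hD
  have hoi : o ≤ i := by
    by_contra! hio
    have hdvd : D ∣ o - i := by simpa [Nat.add_sub_add_left] using Nat.dvd_sub hoA h
    exact absurd (Nat.le_of_dvd (by omega) hdvd) (by omega)
  have hdvd : D ∣ i - o := by simpa [Nat.add_sub_add_left] using Nat.dvd_sub h hoA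
  have hpow : L / D + 1 ≤ 2 ^ Nat.log2 (2 * (L / D) + 1) := by
    have := Nat.lt_log2_self (n := 2 * (L / D) + 1)
    rw [pow_succ] at this
    omega
  have hlt : i - o < D * 2 ^ Nat.log2 (2 * (L / D) + 1) :=
    calc i - o < D * (L / D + 1) := by have := Nat.lt_mul_div_succ L hD; omega
      _ ≤ _ := Nat.mul_le_mul_left D hpow
  rw [if_pos (hoi.trans_lt hi), Nat.testBit_shiftLeft, testBit_multiplesMask hlt hdvd]
  simpa using hoi

theorem testBit_orTree {f : ℕ → ℕ} {d s j i : ℕ} (hj : j < 2 ^ d) (h : (f (s + j)).testBit i) :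
    (orTree f d s).testBit i := by
  induction d generalizing s j with
  | zero => simpa [orTree, Nat.lt_one_iff.mp hj] using h
  | succ d ih =>
    rw [orTree, Nat.testBit_or, Bool.or_eq_true]
    rcases lt_or_ge j (2 ^ d) with hlt | hge
    · exact .inl (ih hlt h)
    · refine .inr (ih (j := j - 2 ^ d) (by rw [pow_succ] at hj; omega) ?_)
      rwa [add_assoc, Nat.add_sub_cancel' hge]

theorem testBit_oddSquareMask {A L s i : ℕ} (hp : (2 * s + 3).Prime) (hi : i < L)
    (h : (2 * s + 3) ^ 2 ∣ A + i) : (oddSquareMask A L s).testBit i := by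
  rw [oddSquareMask, evalThen_eq, if_pos (Nat.coprime_or_dvd_of_prime hp _), evalThen_eq]
  exact testBit_windowMask (by positivity) hi h

theorem testBit_nonSquarefreeMask {A L d p i : ℕ} (hp : p.Prime) (hpd : p < 2 ^ (d + 1) + 3)
    (hi : i < L) (h : p ^ 2 ∣ A + i) : (nonSquarefreeMask A L d).testBit i := by
  rw [nonSquarefreeMask, Nat.testBit_or, Bool.or_eq_true]
  rcases hp.eq_two_or_odd' with rfl | ⟨s, rfl⟩
  · exact .inl (testBit_windowMask (by norm_num) hi h)
  · obtain ⟨s, rfl⟩ : ∃ s', s = s' + 1 :=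
      Nat.exists_eq_succ_of_ne_zero (by rintro rfl; norm_num at hp)
    have hs : s < 2 ^ d := by rw [pow_succ] at hpd; omega
    refine .inr (testBit_orTree hs ?_)
    rw [zero_add]
    exact testBit_oddSquareMask hp hi h

theorem squarefree_of_testBit_nonSquarefreeMask {A L d i : ℕ} (hi : i < L)
    (hA : A + L ≤ (2 ^ (d + 1) + 3) ^ 2) (h : (nonSquarefreeMask A L d).testBit i = false) :
    Squarefree (A + i) := by
  have hbit : ∀ p : ℕ, p.Prime → p < 2 ^ (d + 1) + 3 → ¬ p ^ 2 ∣ A + i := fun p hp hpd hdvd => by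
    simp [testBit_nonSquarefreeMask hp hpd hi hdvd] at h
  have hpos : 0 < A + i := by
    by_contra! h0
    have hd := Nat.two_pow_pos (d + 1)
    exact hbit 2 Nat.prime_two (by omega) (by simp [Nat.le_zero.mp h0])
  rw [Nat.squarefree_iff_prime_squarefree]
  intro p hp hdvd
  rw [← sq] at hdvd
  exact hbit p hp (lt_of_pow_lt_pow_left₀ 2 (by positivity)
    ((Nat.le_of_dvd hpos hdvd).trans_lt (by omega))) hdvd

theorem testBit_shiftFill_eq_false {M p i : ℕ} :
    (shiftFill M p).testBit i = false ↔ p ≤ i ∧ M.testBit (i - p) = false := by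
  rw [shiftFill, Nat.testBit_or, Nat.testBit_shiftLeft, Nat.testBit_two_pow_sub_one]
  rcases le_or_gt p i with h | h
  · simp [h, not_lt.mpr h]
  · simp [h, not_le.mpr h]

theorem exists_testBit_eq_false_of_foldr_and {α : Type*} {f : α → ℕ} {l : List α} {b i : ℕ}
    (hb : b.testBit i) (h : (l.foldr (fun a acc => acc &&& f a) b).testBit i = false) :
    ∃ a ∈ l, (f a).testBit i = false := by
  induction l with
  | nil => simp [hb] at h
  | cons a l ih =>
    rw [List.foldr_cons, Nat.testBit_and, Bool.and_eq_false_iff] at h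
    rcases h with h | h
    · obtain ⟨a', ha', h'⟩ := ih h
      exact ⟨a', List.mem_cons_of_mem a ha', h'⟩
    · exact ⟨a, List.mem_cons_self, h⟩

theorem prime_and_sub_dvd_of_mem_primePairs : ∀ P ∈ primePairs,
    P.1.Prime ∧ P.2.Prime ∧ P.1 ≤ P.2 ∧ P.2 - P.1 ∣ 6 ^ 7 := by
  simp only [primePairs, List.forall_mem_cons]
  norm_num

theorem exists_squarefree_pair {A L d i : ℕ} (hi : i < L) (hA : A + L ≤ (2 ^ (d + 1) + 3) ^ 2)
    (h : (uncoveredMask A L d).testBit i = false) :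
    ∃ P ∈ primePairs, P.2 ≤ i ∧ Squarefree (A + i - P.1) ∧ Squarefree (A + i - P.2) := by
  rw [uncoveredMask, evalThen_eq] at h
  obtain ⟨P, hP, hbit⟩ := exists_testBit_eq_false_of_foldr_and (by simpa using hi) h
  rw [Nat.testBit_or, Bool.or_eq_false_iff, testBit_shiftFill_eq_false,
    testBit_shiftFill_eq_false] at hbit
  obtain ⟨⟨h1, hM1⟩, h2, hM2⟩ := hbit
  refine ⟨P, hP, h2, ?_, ?_⟩
  · rw [Nat.add_sub_assoc h1]
    exact squarefree_of_testBit_nonSquarefreeMask (by omega) hA hM1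
  · rw [Nat.add_sub_assoc h2]
    exact squarefree_of_testBit_nonSquarefreeMask (by omega) hA hM2

theorem isRepresentable_of_testBit_uncoveredMask {q A L d i : ℕ} (hq : q.Prime) (hq3 : 3 < q)
    (hi : i < L) (hA : A + L ≤ (2 ^ (d + 1) + 3) ^ 2)
    (h : (uncoveredMask A L d).testBit i = false) : IsRepresentable q (A + i) := by
  obtain ⟨P, hP, hPi, hs1, hs2⟩ := exists_squarefree_pair hi hA h
  obtain ⟨hp1, hp2, hle, hdvd⟩ := prime_and_sub_dvd_of_mem_primePairs P hP
  exact isRepresentable_of_prime_pair hq hp1 hp2 hle (by omega)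
    (fun hqP => not_dvd_six_pow hq hq3 7 (hqP.trans hdvd)) hs1 hs2

end BitSieve

section SmallIntegers

theorem testBit_uncoveredMask_small :
    ∀ i < 128, 3 < i → i ≠ 11 → (uncoveredMask 0 128 3).testBit i = false := by
  decide +kernel

theorem uncoveredMask_shiftRight_eq_zero :
    ∀ w < 16, uncoveredMask (w * 2 ^ 20) (2 ^ 20 + 128) 11 >>> 128 = 0 := by
  decide +kernel

theorem isRepresentable_three {q : ℕ} : IsRepresentable q 3 :=
  ⟨2, 1, Nat.prime_two, squarefree_one, Nat.coprime_one_left q, rfl⟩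

theorem isRepresentable_eleven {q : ℕ} (hq : q.Prime) (hq3 : 3 < q) : IsRepresentable q 11 :=
  isRepresentable_of_squarefree_sub hq Nat.prime_five (by norm_num)
    ((Nat.squarefree_mul (by norm_num : Nat.Coprime 2 3)).mpr
      ⟨Nat.prime_two.squarefree, Nat.prime_three.squarefree⟩)
    (not_dvd_six_pow hq hq3 1)

theorem isRepresentable_of_lt {q n : ℕ} (hq : q.Prime) (hq3 : 3 < q) (hn : 2 < n)
    (hN : n < 2 ^ 24) : IsRepresentable q n := by
  rcases eq_or_ne n 3 with rfl | hn3
  · exact isRepresentable_three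
  rcases eq_or_ne n 11 with rfl | hn11
  · exact isRepresentable_eleven hq hq3
  rcases lt_or_ge n 128 with hsmall | hlarge
  · have hbit := testBit_uncoveredMask_small n hsmall (by omega) hn11
    simpa using isRepresentable_of_testBit_uncoveredMask hq hq3 hsmall (by norm_num) hbit
  · obtain ⟨w, j, hw, hj, rfl⟩ : ∃ w j, w < 16 ∧ j < 2 ^ 20 ∧ n = w * 2 ^ 20 + (128 + j) :=
      ⟨(n - 128) / 2 ^ 20, (n - 128) % 2 ^ 20, by omega, by omega, by omega⟩
    refine isRepresentable_of_testBit_uncoveredMask (L := 2 ^ 20 + 128) (d := 11) hq hq3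
      (by omega) (by omega) ?_
    rw [← Nat.testBit_shiftRight, uncoveredMask_shiftRight_eq_zero w hw, Nat.zero_testBit]

end SmallIntegers

section ResidueClassUpperBound

open Finset

/-- The density constant of the elementary Brun–Titchmarsh bound: over the primes `p ≤ x` in one
residue class modulo `K`, the sum of `log p` is at most about `x / K * sieveWeight K`. -/
noncomputable def sieveWeight (K : ℕ) : ℝ :=
  Real.log K + ∑ p ∈ K.primeFactors, Real.log p / ((p : ℝ) - 1)

theorem log_div_sub_one_nonneg {p : ℕ} (hp : p.Prime) : 0 ≤ Real.log p / ((p : ℝ) - 1) :=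
  div_nonneg (Real.log_natCast_nonneg p) (sub_nonneg.mpr (mod_cast hp.one_le))

theorem sieveWeight_nonneg (K : ℕ) : 0 ≤ sieveWeight K :=
  add_nonneg (Real.log_natCast_nonneg K) <| sum_nonneg fun _ hp =>
    log_div_sub_one_nonneg (Nat.prime_of_mem_primeFactors hp)

theorem dvd_prod_range_add_mul {K B n : ℕ} (a : ℕ) (hB : B ∣ n.factorial) (hKB : K.Coprime B) :
    B ∣ ∏ j ∈ range n, (a + K * j) := by
  have : NeZero B := ⟨ne_zero_of_dvd_ne_zero n.factorial_ne_zero hB⟩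
  -- Modulo `B` the progression is `K` times a run of `n` consecutive integers.
  set c : ℕ := ((a : ZMod B) * (K : ZMod B)⁻¹).val with hc
  have hterm : ∀ j ∈ range n, ((a : ZMod B) + K * j) = K * ((c + j : ℕ) : ZMod B) := fun j _ => by
    push_cast
    rw [hc, ZMod.natCast_val, ZMod.cast_id', id]
    linear_combination (-(a : ZMod B)) * ZMod.coe_mul_inv_eq_one K hKB
  have hrun : B ∣ c.ascFactorial n := hB.trans (Nat.factorial_dvd_ascFactorial c n)
  rw [← ZMod.natCast_eq_zero_iff] at hrun ⊢
  rw [Nat.ascFactorial_eq_prod_range] at hrun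
  push_cast at hrun ⊢
  simp only [prod_congr rfl hterm, prod_mul_distrib, Nat.cast_add, hrun, mul_zero]

theorem factorization_factorial_mul_log_le {p : ℕ} (hp : p.Prime) (n : ℕ) :
    n.factorial.factorization p * Real.log p ≤ n * (Real.log p / ((p : ℝ) - 1)) := by
  have : Fact p.Prime := ⟨hp⟩
  have hle : (p - 1) * n.factorial.factorization p ≤ n := by
    rw [Nat.factorization_def _ hp, sub_one_mul_padicValNat_factorial]
    exact Nat.sub_le _ _
  have hp1 : (0 : ℝ) < (p : ℝ) - 1 := sub_pos.mpr (mod_cast hp.one_lt)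
  have hle' : ((p : ℝ) - 1) * n.factorial.factorization p ≤ n := by
    rw [← Nat.cast_pred hp.pos]
    exact_mod_cast hle
  rw [mul_div_assoc', le_div_iff₀ hp1]
  calc _ = ((p : ℝ) - 1) * n.factorial.factorization p * Real.log p := by ring
    _ ≤ n * Real.log p := mul_le_mul_of_nonneg_right hle' (Real.log_natCast_nonneg p)

theorem sum_factorization_factorial_mul_log_le {K : ℕ} (hK : K ≠ 0) (n : ℕ) :
    ∑ p ∈ n.factorial.primeFactors with p ∣ K, n.factorial.factorization p * Real.log p ≤
      n * ∑ p ∈ K.primeFactors, Real.log p / ((p : ℝ) - 1) := by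
  rw [mul_sum]
  have hsub : (n.factorial.primeFactors.filter (· ∣ K)) ⊆ K.primeFactors := fun p hp => by
    rw [mem_filter] at hp
    exact Nat.mem_primeFactors.mpr ⟨Nat.prime_of_mem_primeFactors hp.1, hp.2, hK⟩
  calc _ ≤ ∑ p ∈ n.factorial.primeFactors with p ∣ K, n * (Real.log p / ((p : ℝ) - 1)) :=
        sum_le_sum fun p hp =>
          factorization_factorial_mul_log_le (Nat.prime_of_mem_primeFactors (mem_filter.mp hp).1) n
    _ ≤ _ := sum_le_sum_of_subset_of_nonneg hsub fun p hp _ =>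
        mul_nonneg n.cast_nonneg (log_div_sub_one_nonneg (Nat.prime_of_mem_primeFactors hp))

theorem exists_coprime_dvd_factorial {K : ℕ} (hK : K ≠ 0) (n : ℕ) :
    ∃ B, B ∣ n.factorial ∧ K.Coprime B ∧ Real.log n.factorial ≤
      Real.log B + n * ∑ p ∈ K.primeFactors, Real.log p / ((p : ℝ) - 1) := by
  set f := n.factorial.factorization
  set D := ∏ p ∈ n.factorial.primeFactors with p ∣ K, p ^ f p with hD
  set B := ∏ p ∈ n.factorial.primeFactors with ¬ p ∣ K, p ^ f p with hB
  have hDB : D * B = n.factorial := by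
    rw [hD, hB, prod_filter_mul_prod_filter_not]
    exact Nat.prod_factorization_pow_eq_self n.factorial_ne_zero
  have hDB0 : D ≠ 0 ∧ B ≠ 0 := mul_ne_zero_iff.mp (hDB ▸ n.factorial_ne_zero)
  have hlogD : Real.log D = ∑ p ∈ n.factorial.primeFactors with p ∣ K, f p * Real.log p := by
    rw [hD, Nat.cast_prod, Real.log_prod fun p hp => by
      exact_mod_cast pow_ne_zero _ (Nat.prime_of_mem_primeFactors (mem_filter.mp hp).1).ne_zero]
    simp only [Nat.cast_pow, Real.log_pow]
  refine ⟨B, Dvd.intro_left D hDB, ?_, ?_⟩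
  · refine Nat.Coprime.prod_right fun p hp => Nat.Coprime.pow_right _ ?_
    rw [mem_filter] at hp
    exact ((Nat.prime_of_mem_primeFactors hp.1).coprime_iff_not_dvd.mpr hp.2).symm
  · rw [← hDB, Nat.cast_mul, Real.log_mul (mod_cast hDB0.1) (mod_cast hDB0.2), hlogD, add_comm]
    gcongr
    exact sum_factorization_factorial_mul_log_le hK n

variable {K a x : ℕ} {S : Finset ℕ}

theorem prod_range_add_mul_le (ha : a ≤ K) (n : ℕ) :
    ∏ j ∈ range n, (a + K * j) ≤ K ^ n * n.factorial := by
  rw [← prod_range_add_one_eq_factorial]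
  calc _ ≤ ∏ j ∈ range n, K * (j + 1) := prod_le_prod' fun j _ => by rw [mul_add_one]; omega
    _ = _ := by rw [prod_mul_distrib, prod_const, card_range]

theorem prod_dvd_prod_range_add_mul (hp : ∀ p ∈ S, p.Prime) (hx : ∀ p ∈ S, p ≤ x)
    (ha : ∀ p ∈ S, p ≡ a [MOD K]) : ∏ p ∈ S, p ∣ ∏ j ∈ range (x / K + 1), (a % K + K * j) := by
  refine prod_primes_dvd _ (fun p h => (hp p h).prime) fun p h => ?_
  have hmem : p / K ∈ range (x / K + 1) :=
    mem_range.mpr (Nat.lt_succ_of_le (Nat.div_le_div_right (hx p h)))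
  have hval : a % K + K * (p / K) = p := by rw [← ha p h, Nat.mod_add_div]
  simpa only [hval] using dvd_prod_of_mem (fun j => a % K + K * j) hmem

theorem coprime_prod_of_dvd_factorial {B n : ℕ} (hB : B ∣ n.factorial)
    (hp : ∀ p ∈ S, p.Prime) (hn : ∀ p ∈ S, n < p) : B.Coprime (∏ p ∈ S, p) := by
  refine Nat.Coprime.prod_right fun p h => Nat.Coprime.coprime_dvd_left hB ?_
  exact ((Nat.coprime_factorial_iff (hp p h).ne_one).mpr
    (by rw [(hp p h).minFac_eq]; exact hn p h)).symm

theorem mul_prod_le_of_modEq {B : ℕ} (hK : 0 < K) (haK : a.Coprime K) (hK1 : K ≠ 1)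
    (hp : ∀ p ∈ S, p.Prime) (hlt : ∀ p ∈ S, x / K < p) (hx : ∀ p ∈ S, p ≤ x)
    (ha : ∀ p ∈ S, p ≡ a [MOD K]) (hB : B ∣ (x / K).factorial) (hKB : K.Coprime B) :
    B * ∏ p ∈ S, p ≤ K ^ (x / K + 1) * (x / K + 1).factorial := by
  set P := ∏ j ∈ range (x / K + 1), (a % K + K * j)
  have ha0 : a % K ≠ 0 := fun h =>
    hK1 (Nat.eq_one_of_dvd_coprimes haK (Nat.dvd_of_mod_eq_zero h) dvd_rfl)
  have hdvd : B * ∏ p ∈ S, p ∣ P :=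
    (coprime_prod_of_dvd_factorial hB hp hlt).mul_dvd_of_dvd_of_dvd
      (dvd_prod_range_add_mul _ (hB.trans (Nat.factorial_dvd_factorial (Nat.le_succ _))) hKB)
      (prod_dvd_prod_range_add_mul hp hx ha)
  exact (Nat.le_of_dvd (prod_pos fun j _ => by omega) hdvd).trans
    (prod_range_add_mul_le (Nat.mod_lt a hK).le _)

theorem log_prod_natCast (hp : ∀ p ∈ S, p.Prime) :
    Real.log ((∏ p ∈ S, p : ℕ) : ℝ) = ∑ p ∈ S, Real.log p := by
  rw [Nat.cast_prod, Real.log_prod fun p h => mod_cast (hp p h).ne_zero]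

theorem sum_log_le_of_modEq_of_coprime (hK : 0 < K) (hK1 : K ≠ 1) (haK : a.Coprime K)
    (hp : ∀ p ∈ S, p.Prime) (hlt : ∀ p ∈ S, x / K < p) (hx : ∀ p ∈ S, p ≤ x)
    (ha : ∀ p ∈ S, p ≡ a [MOD K]) :
    ∑ p ∈ S, Real.log p ≤ ((x / K : ℕ) : ℝ) * sieveWeight K + Real.log (x + K) := by
  obtain ⟨B, hB, hKB, hlogB⟩ := exists_coprime_dvd_factorial hK.ne' (x / K)
  have hle := mul_prod_le_of_modEq hK haK hK1 hp hlt hx ha hB hKB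
  set J := x / K
  have hB0 : (B : ℝ) ≠ 0 :=
    mod_cast (Nat.pos_of_dvd_of_pos hB J.factorial_pos).ne'
  have hS0 : ((∏ p ∈ S, p : ℕ) : ℝ) ≠ 0 := mod_cast prod_ne_zero_iff.mpr fun p h => (hp p h).ne_zero
  have hlog : Real.log B + ∑ p ∈ S, Real.log p ≤
      (J + 1) * Real.log K + (Real.log (J + 1) + Real.log J.factorial) := by
    rw [← log_prod_natCast hp, ← Real.log_mul hB0 hS0,
      ← Real.log_mul (by positivity) (by positivity), ← Nat.cast_succ, ← Real.log_pow,
      ← Real.log_mul (by positivity) (by positivity)]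
    refine Real.log_le_log (by positivity) ?_
    exact_mod_cast Nat.factorial_succ J ▸ hle
  have hJK : Real.log K + Real.log (J + 1) ≤ Real.log (x + K) := by
    rw [← Real.log_mul (by positivity) (by positivity)]
    refine Real.log_le_log (by positivity) ?_
    rw [mul_add_one]
    gcongr
    exact_mod_cast Nat.mul_div_le x K
  rw [sieveWeight]
  linarith

theorem subset_singleton_of_modEq_of_not_coprime {p₀ : ℕ} (hp₀ : p₀.Prime) (h₀ : ¬ p₀.Coprime K)
    (hp : ∀ p ∈ S, p.Prime) (ha : ∀ p ∈ S, p ≡ p₀ [MOD K]) : S ⊆ {p₀} := by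
  have hdvd : p₀ ∣ K := not_not.mp (mt hp₀.coprime_iff_not_dvd.mpr h₀)
  intro p h
  have hmod : p ≡ 0 [MOD p₀] := ((ha p h).of_dvd hdvd).trans (by simp [Nat.ModEq])
  exact mem_singleton.mpr
    ((Nat.prime_dvd_prime_iff_eq hp₀ (hp p h)).mp (Nat.modEq_zero_iff_dvd.mp hmod)).symm

theorem sum_log_le_of_modEq (hK : 1 < K) (hp : ∀ p ∈ S, p.Prime) (hlt : ∀ p ∈ S, x / K < p)
    (hx : ∀ p ∈ S, p ≤ x) (ha : ∀ p ∈ S, p ≡ a [MOD K]) :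
    ∑ p ∈ S, Real.log p ≤ ((x / K : ℕ) : ℝ) * sieveWeight K + Real.log (x + K) := by
  have hJ : 0 ≤ ((x / K : ℕ) : ℝ) * sieveWeight K :=
    mul_nonneg (Nat.cast_nonneg _) (sieveWeight_nonneg K)
  rcases S.eq_empty_or_nonempty with rfl | ⟨p₀, h₀⟩
  · rw [sum_empty]
    exact add_nonneg hJ (mod_cast Real.log_natCast_nonneg (x + K))
  have ha₀ : ∀ p ∈ S, p ≡ p₀ [MOD K] := fun p h => (ha p h).trans (ha p₀ h₀).symm
  by_cases hcop : p₀.Coprime K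
  · exact sum_log_le_of_modEq_of_coprime (by omega) (by omega) hcop hp hlt hx ha₀
  calc ∑ p ∈ S, Real.log p ≤ ∑ p ∈ {p₀}, Real.log p :=
        sum_le_sum_of_subset_of_nonneg
          (subset_singleton_of_modEq_of_not_coprime (hp p₀ h₀) hcop hp ha₀)
          fun p _ _ => Real.log_natCast_nonneg p
    _ = Real.log p₀ := sum_singleton _ _
    _ ≤ Real.log (x + K) := by
        refine Real.log_le_log (mod_cast (hp p₀ h₀).pos) ?_
        exact_mod_cast (hx p₀ h₀).trans (Nat.le_add_right x K)
    _ ≤ _ := le_add_of_nonneg_left hJ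

theorem sum_log_le_of_modEq_of_div_div_lt (hK : 1 < K) (hp : ∀ p ∈ S, p.Prime)
    (hlt : ∀ p ∈ S, x / K / K < p) (hx : ∀ p ∈ S, p ≤ x) (ha : ∀ p ∈ S, p ≡ a [MOD K]) :
    ∑ p ∈ S, Real.log p ≤
      x * (sieveWeight K / K * (1 + 1 / K)) + 2 * Real.log (x + K) := by
  have hupper := sum_log_le_of_modEq (S := S.filter (x / K < ·)) hK
    (fun p h => hp p (mem_filter.mp h).1) (fun p h => (mem_filter.mp h).2)
    (fun p h => hx p (mem_filter.mp h).1) (fun p h => ha p (mem_filter.mp h).1)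
  have hlower := sum_log_le_of_modEq (S := S.filter (¬ x / K < ·)) (x := x / K) hK
    (fun p h => hp p (mem_filter.mp h).1) (fun p h => hlt p (mem_filter.mp h).1)
    (fun p h => not_lt.mp (mem_filter.mp h).2) (fun p h => ha p (mem_filter.mp h).1)
  rw [← sum_filter_add_sum_filter_not S (x / K < ·)]
  have hdiv : ((x / K : ℕ) : ℝ) ≤ x / K := Nat.cast_div_le
  have hdiv2 : ((x / K / K : ℕ) : ℝ) ≤ x / K / K := Nat.cast_div_le.trans (by gcongr)
  have hlog : Real.log (((x / K : ℕ) : ℝ) + K) ≤ Real.log (x + K) := by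
    refine Real.log_le_log (by positivity) ?_
    gcongr
    exact Nat.div_le_self x K
  calc _ ≤ (x / K * sieveWeight K + Real.log (x + K)) +
        (x / K / K * sieveWeight K + Real.log (x + K)) := by
        have := sieveWeight_nonneg K
        exact add_le_add (hupper.trans (by gcongr)) (hlower.trans (by gcongr))
    _ = _ := by field_simp; ring

end ResidueClassUpperBound

section ResidueClassLogSum

open Finset ArithmeticFunction

theorem log_eq_sum_vonMangoldt {m X : ℕ} (hm : 0 < m) (hmX : m ≤ X) :
    Real.log m = ∑ d ∈ Ioc 0 X, if d ∣ m then Λ d else 0 := by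
  rw [← vonMangoldt_sum, ← sum_filter]
  refine sum_congr (ext fun d => ?_) fun _ _ => rfl
  simp only [Nat.mem_divisors, mem_filter, mem_Ioc]
  exact ⟨fun h => ⟨⟨Nat.pos_of_dvd_of_pos h.1 hm, (Nat.le_of_dvd hm h.1).trans hmX⟩, h.1⟩,
    fun h => ⟨h.2, hm.ne'⟩⟩

theorem card_filter_Ioc_dvd_and (P : ℕ → Prop) [DecidablePred P] {d : ℕ} (hd : 0 < d) (u : ℕ) :
    #{m ∈ Ioc 0 u | P m ∧ d ∣ m} = #{e ∈ Ioc 0 (u / d) | P (d * e)} := by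
  symm
  apply card_bij (fun e _ => d * e)
  · intro e he
    simp only [mem_filter, mem_Ioc, Nat.le_div_iff_mul_le hd, mul_comm e] at he ⊢
    exact ⟨⟨Nat.mul_pos hd he.1.1, he.1.2⟩, he.2, dvd_mul_right _ _⟩
  · exact fun e _ e' _ h => Nat.eq_of_mul_eq_mul_left hd h
  · rintro _ hm
    simp only [mem_filter, mem_Ioc] at hm
    obtain ⟨⟨hpos, hle⟩, hP, e, rfl⟩ := hm
    refine ⟨e, ?_, rfl⟩
    simp only [mem_filter, mem_Ioc, Nat.le_div_iff_mul_le hd, mul_comm e]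
    exact ⟨⟨Nat.pos_of_mul_pos_left hpos, hle⟩, hP⟩

theorem sum_log_eq_sum_vonMangoldt_mul_card (P : ℕ → Prop) [DecidablePred P] {u X : ℕ}
    (huX : u ≤ X) :
    ∑ m ∈ Ioc 0 u with P m, Real.log m =
      ∑ d ∈ Ioc 0 X, Λ d * #{e ∈ Ioc 0 (u / d) | P (d * e)} := by
  calc ∑ m ∈ Ioc 0 u with P m, Real.log m
      = ∑ m ∈ Ioc 0 u with P m, ∑ d ∈ Ioc 0 X, if d ∣ m then Λ d else 0 :=
        sum_congr rfl fun m hm => by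
          simp only [mem_filter, mem_Ioc] at hm
          exact log_eq_sum_vonMangoldt hm.1.1 (hm.1.2.trans huX)
    _ = ∑ d ∈ Ioc 0 X, Λ d * #{m ∈ Ioc 0 u | P m ∧ d ∣ m} := by
        rw [sum_comm]
        refine sum_congr rfl fun d _ => ?_
        rw [← sum_filter, sum_const, nsmul_eq_mul, mul_comm, filter_filter]
    _ = _ := sum_congr rfl fun d hd => by
        rw [card_filter_Ioc_dvd_and P (mem_Ioc.mp hd).1]

theorem sum_vonMangoldt_mul_ite_le_div {k : ℕ} (hk : 0 < k) (X : ℕ) :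
    ∑ d ∈ Ioc 0 X, Λ d * (if k ≤ X / d then 1 else 0) = Chebyshev.psi ((X : ℝ) / k) := by
  rw [Chebyshev.psi, Nat.floor_div_natCast, Nat.floor_natCast]
  simp only [mul_ite, mul_one, mul_zero]
  rw [← sum_filter]
  refine sum_congr (ext fun d => ?_) fun _ _ => rfl
  simp only [mem_filter, mem_Ioc]
  constructor
  · rintro ⟨⟨hd, -⟩, hle⟩
    rw [Nat.le_div_iff_mul_le hd, mul_comm] at hle
    exact ⟨hd, (Nat.le_div_iff_mul_le hk).mpr hle⟩
  · rintro ⟨hd, hle⟩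
    refine ⟨⟨hd, hle.trans (Nat.div_le_self _ _)⟩, (Nat.le_div_iff_mul_le hd).mpr ?_⟩
    rwa [mul_comm, ← Nat.le_div_iff_mul_le hk]

theorem card_filter_Ioc_zero_modEq {k b : ℕ} (hb : 0 < b) (hbk : b ≤ k) (v : ℕ) :
    #{e ∈ Ioc 0 v | e ≡ b [MOD k]} = (v + (k - b)) / k := by
  induction v with
  | zero => rw [zero_add, Nat.div_eq_of_lt (by omega)]; rfl
  | succ v ih =>
    have hiff : k ∣ v + (k - b) + 1 ↔ v + 1 ≡ b [MOD k] := by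
      have hcast : ((v + (k - b) + 1 : ℕ) : ℤ) = ((v + 1 : ℕ) - b) + k := by
        push_cast [hbk]
        ring
      rw [Nat.ModEq.comm, Nat.modEq_iff_dvd, ← Int.natCast_dvd_natCast, hcast, dvd_add_self_right]
    rw [card_filter, sum_Ioc_succ_top v.zero_le, ← card_filter, ih, add_right_comm v 1,
      Nat.succ_div]
    simp only [hiff]

theorem card_filter_Ioc_add_modEq {k : ℕ} (hk : 0 < k) (b u : ℕ) :
    #{m ∈ Ioc u (u + k) | m ≡ b [MOD k]} = 1 := by
  have hk' : (k : ℚ) ≠ 0 := mod_cast hk.ne'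
  have h : ((u + k : ℕ) - b : ℚ) / k = (u - b) / k + 1 := by
    push_cast
    field_simp
    ring
  have hcard := Nat.Ioc_filter_modEq_card u (u + k) hk b
  rw [h, Int.floor_add_one, add_sub_cancel_left] at hcard
  exact_mod_cast hcard

/-- The sum of `log m` over the positive `m ≤ u` in the residue class of `b` modulo `k`: the
analogue of `log u!` for an arithmetic progression. -/
noncomputable def residueLogSum (k b u : ℕ) : ℝ :=
  ∑ m ∈ Ioc 0 u with m ≡ b [MOD k], Real.log m

/-- The main term `∫₀^y log t dt / k` of `residueLogSum k b y`. -/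
noncomputable def logIntegral (k : ℕ) (y : ℝ) : ℝ :=
  (y * Real.log y - y) / k

theorem mul_log_le_logIntegral_sub (k : ℕ) {u v : ℝ} (hu : 0 < u) (hv : 0 < v) :
    (v - u) / k * Real.log u ≤ logIntegral k v - logIntegral k u := by
  have h := mul_le_mul_of_nonneg_left (Real.one_sub_inv_le_log_of_pos (div_pos hv hu)) hv.le
  rw [Real.log_div hv.ne' hu.ne', inv_div, mul_sub, mul_one, mul_div_cancel₀ _ hv.ne'] at h
  rw [logIntegral, logIntegral, ← sub_div, div_mul_eq_mul_div]
  gcongr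
  linarith

theorem exists_residueLogSum_add {k : ℕ} (hk : 0 < k) (b u : ℕ) :
    ∃ m, u < m ∧ m ≤ u + k ∧ residueLogSum k b (u + k) = residueLogSum k b u + Real.log m := by
  obtain ⟨m, hm⟩ := card_eq_one.mp (card_filter_Ioc_add_modEq hk b u)
  have hmem : m ∈ (Ioc u (u + k)).filter (· ≡ b [MOD k]) := hm ▸ mem_singleton_self m
  simp only [mem_filter, mem_Ioc] at hmem
  refine ⟨m, hmem.1.1, hmem.1.2, ?_⟩
  simp only [residueLogSum, sum_filter]
  rw [← sum_Ioc_consecutive _ u.zero_le (Nat.le_add_right u k), ← sum_filter (s := Ioc u _), hm,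
    sum_singleton]

theorem residueLogSum_nonneg (k b u : ℕ) : 0 ≤ residueLogSum k b u :=
  sum_nonneg fun m _ => Real.log_natCast_nonneg m

theorem residueLogSum_le_log {k u : ℕ} (hu : 0 < u) (huk : u ≤ k) (b : ℕ) :
    residueLogSum k b u ≤ Real.log u := by
  have hcard : #{m ∈ Ioc 0 u | m ≡ b [MOD k]} ≤ 1 := by
    rw [← card_filter_Ioc_add_modEq (hu.trans_le huk) b 0, zero_add]
    exact card_le_card (filter_subset_filter _ (Ioc_subset_Ioc_right huk))
  calc residueLogSum k b u ≤ #{m ∈ Ioc 0 u | m ≡ b [MOD k]} • Real.log u :=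
        sum_le_card_nsmul _ _ _ fun m hm => by
          simp only [mem_filter, mem_Ioc] at hm
          exact Real.log_le_log (mod_cast hm.1.1) (mod_cast hm.1.2)
    _ ≤ 1 • Real.log u := nsmul_le_nsmul_left (Real.log_natCast_nonneg u) hcard
    _ = Real.log u := one_smul _ _

theorem abs_residueLogSum_sub_logIntegral_le {k u : ℕ} (hk : 0 < k) (hu : 0 < u) (b : ℕ) :
    |residueLogSum k b u - logIntegral k u| ≤ Real.log u + 1 := by
  induction u using Nat.strong_induction_on with
  | _ u ih =>
    rcases le_or_gt u k with huk | huk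
    · have hlog : 0 ≤ Real.log u := Real.log_natCast_nonneg u
      have hk' : (0 : ℝ) < k := mod_cast hk
      have hu_le : (u : ℝ) / k ≤ 1 := (div_le_one hk').mpr (mod_cast huk)
      have hu_nonneg : (0 : ℝ) ≤ u / k := by positivity
      have hF : logIntegral k u = u / k * Real.log u - u / k := by rw [logIntegral]; ring
      rw [hF, abs_le]
      constructor <;> nlinarith [residueLogSum_nonneg k b u, residueLogSum_le_log hu huk b]
    · obtain ⟨v, rfl⟩ := Nat.exists_eq_add_of_lt huk
      rw [show k + v + 1 = v + 1 + k by ring] at ih ⊢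
      obtain ⟨m, hlt, hle, hstep⟩ := exists_residueLogSum_add hk b (v + 1)
      have hih := abs_le.mp (ih (v + 1) (by omega) v.succ_pos)
      have hv : (0 : ℝ) < (v + 1 : ℕ) := mod_cast v.succ_pos
      have hvk : (0 : ℝ) < (v + 1 + k : ℕ) := by positivity
      have hm_ge : Real.log (v + 1 : ℕ) ≤ Real.log m := Real.log_le_log hv (mod_cast hlt.le)
      have hm_le : Real.log m ≤ Real.log (v + 1 + k : ℕ) :=
        Real.log_le_log (mod_cast v.succ_pos.trans hlt) (mod_cast hle)
      have hlower := mul_log_le_logIntegral_sub k hv hvk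
      have hupper := mul_log_le_logIntegral_sub k hvk hv
      have hdiff : (((v + 1 + k : ℕ) : ℝ) - (v + 1 : ℕ)) / k = 1 := by
        rw [Nat.cast_add _ k, add_sub_cancel_left, div_self (mod_cast hk.ne')]
      rw [hdiff, one_mul] at hlower
      rw [← neg_sub, neg_div, hdiff, neg_one_mul] at hupper
      rw [hstep, abs_le]
      constructor <;> linarith

theorem abs_residueLogSum_div_sub_logIntegral_le {k X j : ℕ} (hk : 0 < k) (hj : 0 < j)
    (hjX : j ≤ X) (b : ℕ) :
    |residueLogSum k b (X / j) - logIntegral k (X / j)| ≤ (1 + 1 / k) * Real.log X + 1 := by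
  have hu : 0 < X / j := Nat.div_pos hjX hj
  have h := abs_le.mp (abs_residueLogSum_sub_logIntegral_le hk hu b)
  have huy : ((X / j : ℕ) : ℝ) ≤ (X : ℝ) / j := Nat.cast_div_le
  have hyu : (X : ℝ) / j ≤ (X / j : ℕ) + 1 := by
    rw [div_le_iff₀ (mod_cast hj)]
    exact_mod_cast mul_comm j _ ▸ (Nat.lt_mul_div_succ X hj).le
  have hyX : (X : ℝ) / j ≤ X := div_le_self X.cast_nonneg (mod_cast hj)
  have hu0 : (0 : ℝ) < (X / j : ℕ) := mod_cast hu
  have hlogu : 0 ≤ Real.log (X / j : ℕ) := Real.log_natCast_nonneg _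
  set u : ℝ := ((X / j : ℕ) : ℝ)
  set y : ℝ := (X : ℝ) / j
  have hlogy : Real.log y ≤ Real.log X := Real.log_le_log (hu0.trans_le huy) hyX
  have hloguy : Real.log u ≤ Real.log y := Real.log_le_log hu0 huy
  have hlower := mul_log_le_logIntegral_sub k hu0 (hu0.trans_le huy)
  have hupper := mul_log_le_logIntegral_sub k (hu0.trans_le huy) hu0
  have hincr : (y - u) / k * Real.log y ≤ 1 / k * Real.log X :=
    mul_le_mul (div_le_div_of_nonneg_right (sub_le_iff_le_add'.mpr hyu) k.cast_nonneg) hlogy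
      (hlogu.trans hloguy) (by positivity)
  have hlower_nonneg : 0 ≤ (y - u) / k * Real.log u :=
    mul_nonneg (div_nonneg (sub_nonneg.mpr huy) k.cast_nonneg) hlogu
  rw [← neg_sub, neg_div, neg_mul] at hupper
  rw [abs_le, add_mul, one_mul]
  constructor <;> linarith

theorem le_mul_residueLogSum_div {k X j : ℕ} (hk : 0 < k) (hj : 0 < j) (hjX : j ≤ X) (a : ℝ)
    (b : ℕ) :
    a * (X / k * (Real.log X - 1) / j - X / k * (Real.log j / j)) -
      |a| * ((1 + 1 / k) * Real.log X + 1) ≤ a * residueLogSum k b (X / j) := by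
  have hX : (X : ℝ) ≠ 0 := mod_cast (hj.trans_le hjX).ne'
  have hmain : logIntegral k (X / j) =
      X / k * (Real.log X - 1) / j - X / k * (Real.log j / j) := by
    rw [logIntegral, Real.log_div hX (by positivity)]
    ring
  have herr := mul_le_mul_of_nonneg_left
    (abs_residueLogSum_div_sub_logIntegral_le hk hj hjX b) (abs_nonneg a)
  rw [← abs_mul] at herr
  rw [← hmain]
  linarith [(abs_le.mp herr).1]

end ResidueClassLogSum

section ChebyshevModFour

open Finset ArithmeticFunction

theorem card_filter_Ioc_zero_mul_modEq {k d c b : ℕ} (hdk : k.Coprime d)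
    (hdc : d * c ≡ b [MOD k]) (hc : 0 < c) (hck : c ≤ k) (v : ℕ) :
    #{e ∈ Ioc 0 v | d * e ≡ b [MOD k]} = (v + (k - c)) / k := by
  rw [← card_filter_Ioc_zero_modEq hc hck]
  refine congrArg card (filter_congr fun e _ => ⟨fun h => ?_, fun h => (h.mul_left d).trans hdc⟩)
  exact Nat.ModEq.cancel_left_of_coprime hdk (h.trans hdc.symm)

theorem card_filter_mul_modEq_four_of_even {d b : ℕ} (hd : Even d) (hb : Odd b) (v : ℕ) :
    #{e ∈ Ioc 0 v | d * e ≡ b [MOD 4]} = 0 := by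
  refine card_eq_zero.mpr (filter_eq_empty_iff.mpr fun e _ h => ?_)
  have hmod : d * e % 2 = b % 2 := h.of_dvd (by norm_num : 2 ∣ 4)
  rw [Nat.even_iff.mp (hd.mul_right e), Nat.odd_iff.mp hb] at hmod
  omega

/-- The coefficients of a Chebyshev-type combination modulo `4`: a triple `(j, α, β)` stands for
`α T_b(X / j) + β T_{4 - b}(X / j)`, where `T_b = residueLogSum 4 b`. They are chosen such that
`∑ (α + β) / j = 0`, which removes the main term `X log X`. -/
def chebyshevWeights : Finset (ℕ × ℤ × ℤ) :=
  {(1, 5, 0), (3, 0, -5), (5, -5, 0), (7, 0, -5), (10, 0, -5), (12, -5, 0), (15, -5, 0),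
    (21, 5, -5), (28, -5, 0), (30, 4, -5), (35, -9, 5), (60, 0, -5), (70, 1, -8), (84, 1, 6),
    (105, -5, 9), (140, 5, -1), (210, 3, 2), (420, -3, -11)}

/-- The combination of the sums `residueLogSum 4` described by `chebyshevWeights`. -/
noncomputable def weightedLogSum (b X : ℕ) : ℝ :=
  ∑ c ∈ chebyshevWeights,
    (c.2.1 * residueLogSum 4 b (X / c.1) + c.2.2 * residueLogSum 4 (4 - b) (X / c.1))

/-- The coefficient of `Λ d` in `weightedLogSum b X`, as a function of `t = X / d`, where
`r = 1` if `d ≡ b` modulo `4` and `r = 3` if `d ≡ -b`. -/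
def weightedCount (r t : ℕ) : ℤ :=
  ∑ c ∈ chebyshevWeights,
    (c.2.1 * ((t / c.1 + (4 - r)) / 4 : ℕ) + c.2.2 * ((t / c.1 + r) / 4 : ℕ))

/-- An upper bound for the amount by which `weightedCount` exceeds its intended values `5` and
`0`, for `r = 1` and `r = 3`. -/
def weightExcess (t : ℕ) : ℕ :=
  (if 83 ≤ t then 2 else 0) + (if 163 ≤ t then 4 else 0) + if 200 ≤ t then 7 else 0

theorem weightExcess_mono : Monotone weightExcess := fun s t h => by
  unfold weightExcess
  split_ifs <;> omega

theorem dvd_of_mem_chebyshevWeights : ∀ c ∈ chebyshevWeights, c.1 ∣ 420 := by decide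

theorem weightedCount_add_period (r t : ℕ) : weightedCount r (t + 1680) = weightedCount r t := by
  have hdiv : ∀ c ∈ chebyshevWeights, ∀ s : ℕ,
      ((t + 1680) / c.1 + s) / 4 = (t / c.1 + s) / 4 + 420 / c.1 := fun c hc s => by
    obtain ⟨m, hm⟩ := dvd_of_mem_chebyshevWeights c hc
    have hpos : 0 < c.1 := Nat.pos_of_ne_zero fun h => by simp [h] at hm
    rw [show 1680 = c.1 * (4 * m) by linarith, hm, Nat.add_mul_div_left _ _ hpos,
      Nat.mul_div_cancel_left _ hpos]
    omega
  have hzero : ∑ c ∈ chebyshevWeights, (c.2.1 + c.2.2) * ((420 / c.1 : ℕ) : ℤ) = 0 := by decide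
  rw [weightedCount, weightedCount, ← sub_eq_zero, ← sum_sub_distrib, ← hzero]
  refine sum_congr rfl fun c hc => ?_
  rw [hdiv c hc, hdiv c hc]
  push_cast
  ring

theorem weightedCount_le (t : ℕ) :
    weightedCount 1 t ≤ 5 + weightExcess t ∧ weightedCount 3 t ≤ weightExcess t := by
  have hperiod : ∀ t < 1680,
      weightedCount 1 t ≤ 5 + weightExcess t ∧ weightedCount 3 t ≤ weightExcess t := by
    decide +kernel
  induction t using Nat.strong_induction_on with
  | _ t ih =>
    rcases lt_or_ge t 1680 with h | h
    · exact hperiod t h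
    · obtain ⟨s, rfl⟩ := Nat.exists_eq_add_of_le' h
      have hmono : (weightExcess s : ℤ) ≤ weightExcess (s + 1680) :=
        mod_cast weightExcess_mono (Nat.le_add_right s 1680)
      rw [weightedCount_add_period, weightedCount_add_period]
      obtain ⟨h1, h3⟩ := ih s (by omega)
      constructor <;> linarith

theorem weightedLogSum_eq_sum_vonMangoldt (b X : ℕ) :
    weightedLogSum b X = ∑ d ∈ Ioc 0 X, Λ d * (∑ c ∈ chebyshevWeights,
      (c.2.1 * (#{e ∈ Ioc 0 (X / d / c.1) | d * e ≡ b [MOD 4]} : ℤ) +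
        c.2.2 * (#{e ∈ Ioc 0 (X / d / c.1) | d * e ≡ 4 - b [MOD 4]} : ℤ)) : ℤ) := by
  push_cast
  simp only [weightedLogSum, mul_sum]
  rw [sum_comm]
  refine sum_congr rfl fun c _ => ?_
  rw [residueLogSum, residueLogSum, sum_log_eq_sum_vonMangoldt_mul_card _ (Nat.div_le_self X c.1),
    sum_log_eq_sum_vonMangoldt_mul_card _ (Nat.div_le_self X c.1), mul_sum, mul_sum,
    ← sum_add_distrib]
  refine sum_congr rfl fun d _ => ?_
  rw [Nat.div_right_comm]
  ring

theorem weightedLogSum_coeff_le {b : ℕ} (hb : b = 1 ∨ b = 3) (d t : ℕ) :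
    ∑ c ∈ chebyshevWeights,
      (c.2.1 * (#{e ∈ Ioc 0 (t / c.1) | d * e ≡ b [MOD 4]} : ℤ) +
        c.2.2 * (#{e ∈ Ioc 0 (t / c.1) | d * e ≡ 4 - b [MOD 4]} : ℤ)) ≤
      (if d ≡ b [MOD 4] then 5 else 0) + weightExcess t := by
  have hb_odd : Odd b := by rcases hb with rfl | rfl <;> decide
  have hb_odd' : Odd (4 - b) := by rcases hb with rfl | rfl <;> decide
  rcases Nat.even_or_odd d with hd | hd
  · simp only [card_filter_mul_modEq_four_of_even hd hb_odd,
      card_filter_mul_modEq_four_of_even hd hb_odd', Nat.cast_zero, mul_zero, add_zero,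
      sum_const_zero]
    positivity
  have hcop : Nat.Coprime 4 d := hd.coprime_two_left.pow_left 2
  have hcard {c r : ℕ} (hc : 0 < c) (hc4 : c ≤ 4) (hr : d * c ≡ r [MOD 4]) (v : ℕ) :=
    card_filter_Ioc_zero_mul_modEq hcop hr hc hc4 v
  obtain ⟨hle1, hle3⟩ := weightedCount_le t
  have hd4 : d % 4 = 1 ∨ d % 4 = 3 := Nat.odd_mod_four_iff.mp (Nat.odd_iff.mp hd)
  by_cases hdb : d ≡ b [MOD 4]
  · have h1 : d * 1 ≡ b [MOD 4] := by rwa [mul_one]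
    have h3 : d * 3 ≡ 4 - b [MOD 4] := by unfold Nat.ModEq at *; omega
    rw [if_pos hdb]
    simp only [hcard one_pos (by norm_num) h1, hcard three_pos (by norm_num) h3]
    exact hle1
  · have h1 : d * 1 ≡ 4 - b [MOD 4] := by unfold Nat.ModEq at *; omega
    have h3 : d * 3 ≡ b [MOD 4] := by unfold Nat.ModEq at *; omega
    rw [if_neg hdb, zero_add]
    simp only [hcard one_pos (by norm_num) h1, hcard three_pos (by norm_num) h3]
    exact hle3

theorem weightedLogSum_le {b : ℕ} (hb : b = 1 ∨ b = 3) (X : ℕ) :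
    weightedLogSum b X ≤ 5 * ∑ d ∈ Ioc 0 X with d ≡ b [MOD 4], Λ d +
      2 * Chebyshev.psi (X / 83) + 4 * Chebyshev.psi (X / 163) + 7 * Chebyshev.psi (X / 200) := by
  have hpsi83 := sum_vonMangoldt_mul_ite_le_div (k := 83) (by norm_num) X
  have hpsi163 := sum_vonMangoldt_mul_ite_le_div (k := 163) (by norm_num) X
  have hpsi200 := sum_vonMangoldt_mul_ite_le_div (k := 200) (by norm_num) X
  push_cast at hpsi83 hpsi163 hpsi200
  rw [weightedLogSum_eq_sum_vonMangoldt, ← hpsi83, ← hpsi163, ← hpsi200, sum_filter]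
  simp only [mul_sum, ← sum_add_distrib]
  refine sum_le_sum fun d _ => ?_
  have hcoeff := mul_le_mul_of_nonneg_left
    (Int.cast_le (R := ℝ).mpr (weightedLogSum_coeff_le hb d (X / d))) (vonMangoldt_nonneg (n := d))
  refine hcoeff.trans_eq ?_
  rw [weightExcess]
  push_cast
  simp only [mul_ite, mul_zero, mul_one]
  split_ifs <;> ring

end ChebyshevModFour

section PrimesModFourLowerBound

open Finset ArithmeticFunction

theorem le_log_seven : 1.9458 ≤ Real.log 7 := by
  have h : Real.log ((2 : ℝ) ^ 5 * 3 * 5 ^ 2) ≤ Real.log (7 ^ 4) :=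
    Real.log_le_log (by norm_num) (by norm_num)
  rw [Real.log_mul (by norm_num) (by norm_num), Real.log_mul (by norm_num) (by norm_num),
    Real.log_pow, Real.log_pow, Real.log_pow] at h
  push_cast at h
  linarith [Real.log_two_gt_d9, Real.log_three_gt_d9, Real.log_five_gt_d9]

theorem sum_chebyshevWeights_div : ∑ c ∈ chebyshevWeights, (c.2.1 + c.2.2 : ℝ) / c.1 = 0 := by
  norm_num [chebyshevWeights]

theorem sum_chebyshevWeights_mul_log :
    ∑ c ∈ chebyshevWeights, (c.2.1 + c.2.2 : ℝ) / c.1 * Real.log c.1 =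
      -4 * (19 / 42 * Real.log 2 + 339 / 560 * Real.log 3 + 59 / 112 * Real.log 5 +
        29 / 120 * Real.log 7) := by
  have hlog (a b c d : ℕ) : Real.log ((2 : ℝ) ^ a * 3 ^ b * 5 ^ c * 7 ^ d) =
      a * Real.log 2 + b * Real.log 3 + c * Real.log 5 + d * Real.log 7 := by
    rw [Real.log_mul (by positivity) (by positivity), Real.log_mul (by positivity) (by positivity),
      Real.log_mul (by positivity) (by positivity), Real.log_pow, Real.log_pow, Real.log_pow,
      Real.log_pow]
  have h10 := hlog 1 0 1 0
  have h12 := hlog 2 1 0 0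
  have h15 := hlog 0 1 1 0
  have h28 := hlog 2 0 0 1
  have h30 := hlog 1 1 1 0
  have h35 := hlog 0 0 1 1
  have h60 := hlog 2 1 1 0
  have h70 := hlog 1 0 1 1
  have h84 := hlog 2 1 0 1
  have h105 := hlog 0 1 1 1
  have h140 := hlog 2 0 1 1
  have h210 := hlog 1 1 1 1
  have h420 := hlog 2 1 1 1
  norm_num at h10 h12 h15 h28 h30 h35 h60 h70 h84 h105 h140 h210 h420
  unfold chebyshevWeights
  repeat rw [sum_insert (by decide)]
  rw [sum_singleton]
  push_cast
  rw [Real.log_one, h10, h12, h15, h28, h30, h35, h60, h70, h84, h105, h140, h210, h420]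
  ring

theorem le_weightedLogSum {b X : ℕ} (hX : 420 ≤ X) :
    2.2963 * (X : ℝ) - 133 * (5 / 4 * Real.log X + 1) ≤ weightedLogSum b X := by
  set err := 5 / 4 * Real.log X + 1
  have hterm : ∀ c ∈ chebyshevWeights,
      (X : ℝ) / 4 * (Real.log X - 1) * ((c.2.1 + c.2.2) / c.1) -
        X / 4 * ((c.2.1 + c.2.2) / c.1 * Real.log c.1) - ((|c.2.1| + |c.2.2| : ℤ) : ℝ) * err ≤
      c.2.1 * residueLogSum 4 b (X / c.1) + c.2.2 * residueLogSum 4 (4 - b) (X / c.1) := by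
    intro c hc
    have hpos : 0 < c.1 := Nat.pos_of_dvd_of_pos (dvd_of_mem_chebyshevWeights c hc) (by norm_num)
    have hcX : c.1 ≤ X := (Nat.le_of_dvd (by norm_num) (dvd_of_mem_chebyshevWeights c hc)).trans hX
    have herr : (1 + 1 / (4 : ℕ)) * Real.log X + 1 = err := by norm_num [err]
    have h1 := le_mul_residueLogSum_div four_pos hpos hcX c.2.1 b
    have h2 := le_mul_residueLogSum_div four_pos hpos hcX c.2.2 (4 - b)
    rw [herr] at h1 h2
    push_cast at h1 h2 ⊢
    calc _ = _ := by ring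
      _ ≤ _ := add_le_add h1 h2
  refine le_trans ?_ (sum_le_sum hterm)
  rw [sum_sub_distrib, sum_sub_distrib, ← mul_sum, ← mul_sum, ← sum_mul, ← Int.cast_sum,
    sum_chebyshevWeights_div, sum_chebyshevWeights_mul_log,
    show ∑ c ∈ chebyshevWeights, (|c.2.1| + |c.2.2|) = 133 by decide]
  push_cast
  have hconst : (2.2963 : ℝ) ≤ 19 / 42 * Real.log 2 + 339 / 560 * Real.log 3 +
      59 / 112 * Real.log 5 + 29 / 120 * Real.log 7 := by
    linarith [Real.log_two_gt_d9, Real.log_three_gt_d9, Real.log_five_gt_d9, le_log_seven]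
  linarith [mul_le_mul_of_nonneg_right hconst (Nat.cast_nonneg (α := ℝ) X)]

theorem log_four_lt : Real.log 4 < 1.3862944 := by
  rw [show (4 : ℝ) = 2 ^ 2 by norm_num, Real.log_pow]
  push_cast
  linarith [Real.log_two_lt_d9]

theorem psi_div_le {X k c : ℝ} (hc : 0 < c) (hck : c ^ 2 ≤ k) (hk : 1 ≤ k) (hkX : k ≤ X) :
    Chebyshev.psi (X / k) ≤ 1.3862944 * X / k + 2 / c * (√X * Real.log X) := by
  have hk0 : 0 < k := one_pos.trans_le hk
  have hX0 : 0 < X := hk0.trans_le hkX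
  have hdiv : 1 ≤ X / k := (one_le_div hk0).mpr hkX
  have hsqrt : √(X / k) ≤ √X / c := by
    rw [Real.sqrt_div hX0.le]
    exact div_le_div_of_nonneg_left X.sqrt_nonneg hc (Real.le_sqrt_of_sq_le hck)
  have hlog : Real.log (X / k) ≤ Real.log X :=
    Real.log_le_log (by positivity) (div_le_self hX0.le hk)
  calc Chebyshev.psi (X / k) ≤ Real.log 4 * (X / k) + 2 * √(X / k) * Real.log (X / k) :=
        Chebyshev.psi_le hdiv
    _ ≤ 1.3862944 * (X / k) + 2 * (√X / c) * Real.log X := by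
        gcongr
        · exact log_four_lt.le
        · exact Real.log_nonneg hdiv
    _ = _ := by ring

theorem psi_sub_theta_le_sqrt {X : ℝ} (hX : 1 ≤ X) :
    Chebyshev.psi X - Chebyshev.theta X ≤ 16.2 * √X := by
  have hpow {t : ℝ} (ht : t ≤ 1 / 2) : Chebyshev.psi (X ^ t) ≤ 5.4 * √X := by
    have hle : X ^ t ≤ √X := by
      rw [Real.sqrt_eq_rpow]
      exact Real.rpow_le_rpow_of_exponent_le hX ht
    have hpsi := Chebyshev.psi_le_const_mul_self (x := X ^ t) (by positivity)
    refine hpsi.trans (mul_le_mul ?_ hle (by positivity) (by norm_num))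
    linarith [log_four_lt]
  have h := Chebyshev.psi_sub_theta_le_psi_add_psi_add_psi X
  linarith [hpow (t := 2⁻¹) (by norm_num), hpow (t := 3⁻¹) (by norm_num),
    hpow (t := 5⁻¹) (by norm_num)]

theorem sum_vonMangoldt_le_sum_log_add (P : ℕ → Prop) [DecidablePred P] (X : ℕ) :
    ∑ d ∈ Ioc 0 X with P d, Λ d ≤
      ∑ p ∈ Ioc 0 X with p.Prime ∧ P p, Real.log p + (Chebyshev.psi X - Chebyshev.theta X) := by
  rw [Chebyshev.psi_sub_theta_eq_sum_not_prime, Nat.floor_natCast]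
  simp only [sum_filter]
  rw [← sum_add_distrib]
  refine sum_le_sum fun d _ => ?_
  have hL : 0 ≤ Λ d := vonMangoldt_nonneg
  by_cases hp : d.Prime
  · simp [hp, vonMangoldt_apply_prime hp]
  · simp only [hp, false_and, if_false, not_false_eq_true, if_true, zero_add]
    split_ifs <;> linarith

theorem le_sum_log_modEq_four {b X : ℕ} (hb : b = 1 ∨ b = 3) (hX : 420 ≤ X) :
    0.436 * (X : ℝ) - 0.4125 * (√X * Real.log X) - 16.2 * √X - 34 * Real.log X - 27 ≤
      ∑ p ∈ Ioc 0 X with p.Prime ∧ p ≡ b [MOD 4], Real.log p := by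
  have hX' : (420 : ℝ) ≤ X := mod_cast hX
  have hlower := le_weightedLogSum (b := b) hX
  have hupper := weightedLogSum_le hb X
  have hpsi83 := psi_div_le (X := X) (k := 83) (c := 9.1) (by norm_num) (by norm_num)
    (by norm_num) (by linarith)
  have hpsi163 := psi_div_le (X := X) (k := 163) (c := 12.7) (by norm_num) (by norm_num)
    (by norm_num) (by linarith)
  have hpsi200 := psi_div_le (X := X) (k := 200) (c := 14.1) (by norm_num) (by norm_num)
    (by norm_num) (by linarith)
  have hprimes := sum_vonMangoldt_le_sum_log_add (· ≡ b [MOD 4]) X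
  have hprimePowers := psi_sub_theta_le_sqrt (X := X) (by linarith)
  have hlog : 0 ≤ Real.log X := Real.log_natCast_nonneg X
  have hsqrt_log : 0 ≤ √X * Real.log X := mul_nonneg (Real.sqrt_nonneg _) hlog
  norm_num at hpsi83 hpsi163 hpsi200 ⊢
  -- `0.436 < (2.2963 - 1.3862944 * (2 / 83 + 4 / 163 + 7 / 200)) / 5`
  linarith

end PrimesModFourLowerBound

section SievedPrimes

open Finset

/-- The primes `p ≡ b` modulo `4` used to represent `n`. Those up to `n / 36 ^ 2` are left out, as
the Brun–Titchmarsh bound modulo `K ≥ 36` only counts primes above `n / K ^ 2`. -/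
def sievedPrimes (n b : ℕ) : Finset ℕ :=
  {p ∈ Ioo (n / 36 ^ 2) n | p.Prime ∧ p ≡ b [MOD 4]}

/-- The weight of the primes `p` of `sievedPrimes n b` that are lost because `d` divides `n - p`. -/
noncomputable def lostWeight (n b d : ℕ) : ℝ :=
  ∑ p ∈ sievedPrimes n b with d ∣ n - p, Real.log p

/-- The upper bound for `lostWeight n b d / n`, up to lower-order terms, when `d` is coprime to `6`:
the primes in question lie in two residue classes modulo `12 * d`. -/
noncomputable def lostDensity (d : ℕ) : ℝ :=
  sieveWeight (12 * d) / (6 * d) * (1 + 1 / (12 * d))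

variable {n b d : ℕ}

theorem lostWeight_nonneg : 0 ≤ lostWeight n b d :=
  sum_nonneg fun p _ => Real.log_natCast_nonneg p

theorem lostWeight_eq_zero (hnd : n < d) : lostWeight n b d = 0 := by
  have hempty : {p ∈ sievedPrimes n b | d ∣ n - p} = ∅ := filter_eq_empty_iff.mpr fun p hp hd => by
    simp only [sievedPrimes, mem_filter, mem_Ioo] at hp
    have := Nat.le_of_dvd (by omega) hd
    omega
  rw [lostWeight, hempty, sum_empty]

theorem modEq_twelve_of_prime_of_modEq_four {p : ℕ} (hp : p.Prime) (hp3 : 3 < p)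
    (hpb : p ≡ b [MOD 4]) : p ≡ 9 * b + 4 [MOD 12] ∨ p ≡ 9 * b + 8 [MOD 12] := by
  have h3 : ¬ 3 ∣ p := fun h => hp3.ne ((Nat.prime_dvd_prime_iff_eq Nat.prime_three hp).mp h)
  have h3' : p % 3 = 1 ∨ p % 3 = 2 := by omega
  unfold Nat.ModEq at *
  rcases h3' with h1 | h2
  · left; omega
  · right; omega

theorem sum_log_modEq_dvd_sub_le {m : ℕ} (a : ℕ) (hmd : m.Coprime d) (h36 : 36 ≤ m * d) :
    ∑ p ∈ Ioo (n / 36 ^ 2) n with p.Prime ∧ p ≡ a [MOD m] ∧ d ∣ n - p, Real.log p ≤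
      n * (sieveWeight (m * d) / (m * d : ℕ) * (1 + 1 / (m * d : ℕ))) +
        2 * Real.log (n + (m * d : ℕ)) := by
  have hdiv : n / (m * d) / (m * d) ≤ n / 36 ^ 2 := by
    rw [Nat.div_div_eq_div_mul]
    exact Nat.div_le_div_left (by nlinarith) (by norm_num)
  obtain ⟨c, hca, hcn⟩ := Nat.chineseRemainder hmd a n
  refine sum_log_le_of_modEq_of_div_div_lt (a := c) (by omega) ?_ ?_ ?_ ?_ <;> intro p hp <;>
    simp only [mem_filter, mem_Ioo] at hp <;> obtain ⟨⟨hlt, hpn⟩, hprime, hpa, hpd⟩ := hp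
  · exact hprime
  · exact hdiv.trans_lt hlt
  · exact hpn.le
  · have hpn' : p ≡ n [MOD d] := (Nat.modEq_iff_dvd' hpn.le).mpr hpd
    exact (Nat.modEq_and_modEq_iff_modEq_mul hmd).mp ⟨hpa.trans hca.symm, hpn'.trans hcn.symm⟩

theorem lostWeight_le_sum_add_sum (hn : 3 * 36 ^ 2 ≤ n) :
    lostWeight n b d ≤
      ∑ p ∈ Ioo (n / 36 ^ 2) n with p.Prime ∧ p ≡ 9 * b + 4 [MOD 12] ∧ d ∣ n - p, Real.log p +
      ∑ p ∈ Ioo (n / 36 ^ 2) n with p.Prime ∧ p ≡ 9 * b + 8 [MOD 12] ∧ d ∣ n - p, Real.log p := by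
  simp only [lostWeight, sievedPrimes, filter_filter, sum_filter, ← sum_add_distrib]
  refine sum_le_sum fun p hp => ?_
  have hlog := Real.log_natCast_nonneg p
  have hp3 : 3 < p := by rw [mem_Ioo] at hp; omega
  by_cases h : (p.Prime ∧ p ≡ b [MOD 4]) ∧ d ∣ n - p
  · obtain ⟨⟨hprime, hpb⟩, hd⟩ := h
    rcases modEq_twelve_of_prime_of_modEq_four hprime hp3 hpb with h | h <;>
      simp only [hprime, hpb, hd, h, and_self, if_true] <;> split_ifs <;> linarith
  · rw [if_neg h]
    split_ifs <;> linarith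

theorem lostWeight_le (hn : 3 * 36 ^ 2 ≤ n) (hd : 3 ≤ d) (hd12 : Nat.Coprime 12 d) :
    lostWeight n b d ≤ n * lostDensity d + 4 * Real.log (13 * n) := by
  have hn1 : (1 : ℝ) ≤ n := mod_cast (by omega : 1 ≤ n)
  have hlog0 : 0 ≤ Real.log (13 * n) := Real.log_nonneg (by linarith)
  rcases lt_or_ge n d with hnd | hdn
  · rw [lostWeight_eq_zero hnd]
    have := sieveWeight_nonneg (12 * d)
    unfold lostDensity
    positivity
  have hlog : Real.log (n + (12 * d : ℕ)) ≤ Real.log (13 * n) := by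
    have hdn' : (d : ℝ) ≤ n := mod_cast hdn
    refine Real.log_le_log (by positivity) ?_
    push_cast
    linarith
  have h4 := sum_log_modEq_dvd_sub_le (n := n) (9 * b + 4) hd12 (by omega)
  have h8 := sum_log_modEq_dvd_sub_le (n := n) (9 * b + 8) hd12 (by omega)
  have hdensity : n * lostDensity d = 2 * (n * (sieveWeight (12 * d) / (12 * d : ℕ) *
      (1 + 1 / (12 * d : ℕ)))) := by
    unfold lostDensity
    push_cast
    field_simp
    ring
  linarith [lostWeight_le_sum_add_sum (b := b) (d := d) hn]

theorem sieveWeight_thirty_six : sieveWeight 36 = 3 * Real.log 2 + 5 / 2 * Real.log 3 := by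
  have hfactors : Nat.primeFactors 36 = {2, 3} := by
    rw [show 36 = 2 ^ 2 * 3 ^ 2 by norm_num, Nat.primeFactors_mul (by norm_num) (by norm_num),
      Nat.primeFactors_prime_pow two_ne_zero Nat.prime_two,
      Nat.primeFactors_prime_pow two_ne_zero Nat.prime_three, singleton_union]
  have hlog : Real.log 36 = 2 * Real.log 2 + 2 * Real.log 3 := by
    rw [show (36 : ℝ) = 2 ^ 2 * 3 ^ 2 by norm_num, Real.log_mul (by norm_num) (by norm_num),
      Real.log_pow, Real.log_pow, Nat.cast_ofNat]
  rw [sieveWeight, hfactors, sum_insert (by simp), sum_singleton, Nat.cast_ofNat, hlog]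
  push_cast
  ring

theorem lostWeight_nine_le (hn : 3 ≤ n) :
    lostWeight n b 9 ≤ 0.1378 * n + 2 * Real.log (13 * n) := by
  have hn3 : (3 : ℝ) ≤ n := mod_cast hn
  have h := sum_log_modEq_dvd_sub_le (n := n) (m := 4) (d := 9) b (by norm_num) le_rfl
  have hweight : sieveWeight 36 / 36 * (1 + 1 / 36) ≤ 0.1378 := by
    rw [sieveWeight_thirty_six]
    linarith [Real.log_two_lt_d9, Real.log_three_lt_d9]
  have hlog : Real.log (n + 36) ≤ Real.log (13 * n) :=
    Real.log_le_log (by positivity) (by linarith)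
  simp only [lostWeight, sievedPrimes, filter_filter, and_assoc]
  norm_num only [Nat.cast_ofNat] at h hweight ⊢
  linarith [mul_le_mul_of_nonneg_left hweight n.cast_nonneg]

end SievedPrimes

section LostDensity

open Finset

variable {r e k : ℕ} {ℓ : ℝ}

theorem coprime_twelve_of_prime (hr : r.Prime) (hr5 : 5 ≤ r) : Nat.Coprime 12 r := by
  have h2 : Nat.Coprime 2 r := (Nat.coprime_primes Nat.prime_two hr).mpr (by omega)
  have h3 : Nat.Coprime 3 r := (Nat.coprime_primes Nat.prime_three hr).mpr (by omega)
  exact (h2.pow_left 2).mul_left h3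

theorem sieveWeight_twelve_mul_prime_pow (hr : r.Prime) (hr5 : 5 ≤ r) (he : e ≠ 0) :
    sieveWeight (12 * r ^ e) = 3 * Real.log 2 + 3 / 2 * Real.log 3 + e * Real.log r +
      Real.log r / ((r : ℝ) - 1) := by
  have hfactors : (12 * r ^ e).primeFactors = {r, 2, 3} := by
    rw [show 12 * r ^ e = 2 ^ 2 * 3 * r ^ e by norm_num,
      Nat.primeFactors_mul (by norm_num) (pow_ne_zero _ hr.ne_zero),
      Nat.primeFactors_mul (by norm_num) (by norm_num),
      Nat.primeFactors_prime_pow he hr, Nat.primeFactors_prime_pow two_ne_zero Nat.prime_two,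
      Nat.prime_three.primeFactors, singleton_union, union_comm, singleton_union]
  have hlog : Real.log 12 = 2 * Real.log 2 + Real.log 3 := by
    rw [show (12 : ℝ) = 2 ^ 2 * 3 by norm_num, Real.log_mul (by norm_num) (by norm_num),
      Real.log_pow, Nat.cast_ofNat]
  rw [sieveWeight, hfactors, sum_insert (by simp; omega), sum_insert (by simp), sum_singleton]
  push_cast
  rw [Real.log_mul (by norm_num) (by positivity), Real.log_pow, hlog]
  ring

theorem lostDensity_prime_pow_le (hr : r.Prime) (hr5 : 5 ≤ r) (he : e ≠ 0)
    (hℓ : Real.log r ≤ ℓ) :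
    lostDensity (r ^ e) ≤ (3.7274 + (e + 1 / ((r : ℝ) - 1)) * ℓ) / (6 * r ^ e) *
      (1 + 1 / (12 * r ^ e)) := by
  have hr1 : (0 : ℝ) < (r : ℝ) - 1 := sub_pos.mpr (mod_cast hr.one_lt)
  have hweight : sieveWeight (12 * r ^ e) ≤ 3.7274 + (e + 1 / ((r : ℝ) - 1)) * ℓ :=
    calc _ = 3 * Real.log 2 + 3 / 2 * Real.log 3 + (e + 1 / ((r : ℝ) - 1)) * Real.log r := by
          rw [sieveWeight_twelve_mul_prime_pow hr hr5 he]
          ring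
      _ ≤ _ := add_le_add (by linarith [Real.log_two_lt_d9, Real.log_three_lt_d9])
          (mul_le_mul_of_nonneg_left hℓ (by positivity))
  unfold lostDensity
  push_cast
  gcongr

theorem log_le_log_add_div_sub_one {x y : ℝ} (hx : 0 < x) (hy : 0 < y) :
    Real.log x ≤ Real.log y + (x / y - 1) := by
  have := Real.log_le_sub_one_of_pos (div_pos hx hy)
  rw [Real.log_div hx.ne' hy.ne'] at this
  linarith

theorem log_seven_le : Real.log 7 ≤ 1.95 := by
  have h : 3 * Real.log 7 + Real.log 5 ≤ 6 * Real.log 2 + 3 * Real.log 3 := by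
    have hpow : Real.log (7 ^ 3 * 5) ≤ Real.log (2 ^ 6 * 3 ^ 3) :=
      Real.log_le_log (by norm_num) (by norm_num)
    simp only [Real.log_mul, Real.log_pow, ne_eq, pow_eq_zero_iff, OfNat.ofNat_ne_zero,
      not_false_eq_true] at hpow
    exact_mod_cast hpow
  linarith [Real.log_two_lt_d9, Real.log_three_lt_d9, Real.log_five_gt_d9]

theorem lostDensity_five_le : lostDensity 5 ≤ 0.1946 := by
  have h := lostDensity_prime_pow_le Nat.prime_five le_rfl one_ne_zero Real.log_five_lt_d9.le
  norm_num at h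
  linarith

theorem lostDensity_five_sq_le : lostDensity (5 ^ 2) ≤ 0.0492 := by
  have h := lostDensity_prime_pow_le Nat.prime_five le_rfl two_ne_zero Real.log_five_lt_d9.le
  norm_num at h ⊢
  linarith

theorem lostDensity_prime_le (hr : r.Prime) (hr7 : 7 ≤ r) : lostDensity r ≤ 0.1453 := by
  have hr7' : (7 : ℝ) ≤ r := mod_cast hr7
  have hlog : Real.log r ≤ 0.95 + r / 7 := by
    linarith [log_le_log_add_div_sub_one (by positivity : (0 : ℝ) < r) (by norm_num : (0 : ℝ) < 7),
      log_seven_le]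
  have hinv : 1 / ((r : ℝ) - 1) ≤ 1 / 6 := one_div_le_one_div_of_le (by norm_num) (by linarith)
  have hmain : (3.7274 + (1 + 1 / ((r : ℝ) - 1)) * (0.95 + r / 7)) / (6 * r) ≤ 0.143 := by
    rw [div_le_iff₀ (by positivity)]
    linarith [mul_le_mul_of_nonneg_right hinv (by positivity : (0 : ℝ) ≤ 0.95 + r / 7)]
  have hcorrection : 1 + 1 / (12 * (r : ℝ)) ≤ 1 + 1 / 84 :=
    add_le_add_right (one_div_le_one_div_of_le (by norm_num) (by linarith)) 1
  calc lostDensity r ≤ (3.7274 + (1 + 1 / ((r : ℝ) - 1)) * (0.95 + r / 7)) / (6 * r) *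
        (1 + 1 / (12 * r)) := by
        simpa only [pow_one, Nat.cast_one] using
          lostDensity_prime_pow_le hr (by omega) one_ne_zero hlog
    _ ≤ 0.143 * (1 + 1 / 84) := mul_le_mul hmain hcorrection (by positivity) (by norm_num)
    _ ≤ 0.1453 := by norm_num

theorem sum_lostDensity_sq_le :
    ∑ r ∈ {7, 11, 13, 17, 19, 23}, lostDensity (r ^ 2) ≤ 0.0621 := by
  have hlog : Real.log 11 ≤ 2.4850 ∧ Real.log 13 ≤ 2.6432 ∧ Real.log 17 ≤ 2.8904 ∧
      Real.log 19 ≤ 2.9958 ∧ Real.log 23 ≤ 3.1781 := by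
    have h11 : Real.log 11 ≤ Real.log (2 * (2 * 3)) := Real.log_le_log (by norm_num) (by norm_num)
    have h13 : Real.log 13 ≤ Real.log (2 * 7) := Real.log_le_log (by norm_num) (by norm_num)
    have h17 : Real.log 17 ≤ Real.log (2 * (3 * 3)) := Real.log_le_log (by norm_num) (by norm_num)
    have h19 : Real.log 19 ≤ Real.log (2 * (2 * 5)) := Real.log_le_log (by norm_num) (by norm_num)
    have h23 : Real.log 23 ≤ Real.log (2 * (2 * (2 * 3))) :=
      Real.log_le_log (by norm_num) (by norm_num)
    simp only [Real.log_mul, ne_eq, mul_eq_zero, OfNat.ofNat_ne_zero, or_self,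
      not_false_eq_true] at h11 h13 h17 h19 h23
    refine ⟨?_, ?_, ?_, ?_, ?_⟩ <;>
      linarith [Real.log_two_lt_d9, Real.log_three_lt_d9, Real.log_five_lt_d9, log_seven_le]
  obtain ⟨h11, h13, h17, h19, h23⟩ := hlog
  have hbound : ∀ (r : ℕ) (ℓ : ℝ), r.Prime → 5 ≤ r → Real.log r ≤ ℓ → lostDensity (r ^ 2) ≤
      (3.7274 + (2 + 1 / ((r : ℝ) - 1)) * ℓ) / (6 * r ^ 2) * (1 + 1 / (12 * r ^ 2)) :=
    fun r ℓ hr hr5 hℓ => lostDensity_prime_pow_le hr hr5 two_ne_zero hℓ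
  have b7 := hbound 7 _ (by norm_num) (by norm_num) log_seven_le
  have b11 := hbound 11 _ (by norm_num) (by norm_num) h11
  have b13 := hbound 13 _ (by norm_num) (by norm_num) h13
  have b17 := hbound 17 _ (by norm_num) (by norm_num) h17
  have b19 := hbound 19 _ (by norm_num) (by norm_num) h19
  have b23 := hbound 23 _ (by norm_num) (by norm_num) h23
  norm_num at b7 b11 b13 b17 b19 b23 ⊢
  linarith

theorem eq_six_mul_sub_one_or_add_one_of_prime (hr : r.Prime) (hr5 : 5 ≤ r) :
    r = 6 * ((r + 1) / 6) - 1 ∨ r = 6 * ((r + 1) / 6) + 1 := by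
  have h2 : ¬ 2 ∣ r := fun h => by
    have := (Nat.prime_dvd_prime_iff_eq Nat.prime_two hr).mp h
    omega
  have h3 : ¬ 3 ∣ r := fun h => by
    have := (Nat.prime_dvd_prime_iff_eq Nat.prime_three hr).mp h
    omega
  omega

theorem lostDensity_sq_le_of_ge (hr : r.Prime) (hr29 : 29 ≤ r) (hk : (r + 1) / 6 = k) :
    lostDensity (r ^ 2) ≤ 0.004956 * ((7.5 + 2 * Real.log k) / k ^ 2) := by
  have hr29' : (29 : ℝ) ≤ r := mod_cast hr29
  have hk5 : (5 : ℝ) ≤ k := mod_cast (by omega : 5 ≤ k)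
  have hrk : (r : ℝ) ≤ 6 * k + 1 := mod_cast (by
    have := eq_six_mul_sub_one_or_add_one_of_prime hr (by omega)
    omega : r ≤ 6 * k + 1)
  have hkr : 6 * (k : ℝ) ≤ r + 1 := mod_cast (by omega : 6 * k ≤ r + 1)
  have hlogk : Real.log r ≤ 1.8252 + Real.log k := by
    have h := log_le_log_add_div_sub_one (by positivity : (0 : ℝ) < r)
      (by positivity : (0 : ℝ) < 2 * (3 * k))
    rw [Real.log_mul (by norm_num) (by positivity), Real.log_mul (by norm_num) (by positivity)] at h
    have hratio : r / (2 * (3 * (k : ℝ))) ≤ 1 + 1 / 30 := by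
      rw [div_le_iff₀ (by positivity)]
      linarith
    linarith [Real.log_two_lt_d9, Real.log_three_lt_d9]
  have hloglin : 1 / ((r : ℝ) - 1) * Real.log r ≤ 0.1222 := by
    have h := log_le_log_add_div_sub_one (by positivity : (0 : ℝ) < r)
      (by norm_num : (0 : ℝ) < 2 * (3 * 5))
    rw [Real.log_mul (by norm_num) (by norm_num), Real.log_mul (by norm_num) (by norm_num)] at h
    rw [one_div_mul_eq_div, div_le_iff₀ (by linarith)]
    linarith [Real.log_two_lt_d9, Real.log_three_lt_d9, Real.log_five_lt_d9]
  have hnum : 3.7274 + (2 + 1 / ((r : ℝ) - 1)) * Real.log r ≤ 7.5 + 2 * Real.log k := by linarith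
  have hrsq : (5.8 * (k : ℝ)) ^ 2 ≤ (r : ℝ) ^ 2 := by gcongr; linarith
  calc lostDensity (r ^ 2)
      ≤ (3.7274 + (2 + 1 / ((r : ℝ) - 1)) * Real.log r) / (6 * r ^ 2) * (1 + 1 / (12 * r ^ 2)) :=
        lostDensity_prime_pow_le hr (by omega) two_ne_zero le_rfl
    _ ≤ (7.5 + 2 * Real.log k) / (6 * (5.8 * k) ^ 2) * (1 + 1 / (12 * 29 ^ 2)) := by gcongr
    _ = (1 + 1 / (12 * 29 ^ 2)) / (6 * 5.8 ^ 2) * ((7.5 + 2 * Real.log k) / k ^ 2) := by ring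
    _ ≤ 0.004956 * ((7.5 + 2 * Real.log k) / k ^ 2) := by gcongr; norm_num

end LostDensity

section SumOverPrimes

open Finset

/-- A function decreasing by at least `(c + 2 * log k) / k ^ 2` from `k` to `k + 1`; it is the
approximate antiderivative `(c + 2 + 2 * log k) / k`, shifted by one half. -/
noncomputable def logTail (c : ℝ) (k : ℕ) : ℝ :=
  (c + 2 + 2 * Real.log k) / (k - 1 / 2)

variable {c : ℝ} {k m M N : ℕ}

theorem logTail_nonneg (hc : 0 ≤ c) (hk : 1 ≤ k) : 0 ≤ logTail c k := by
  have hk' : (1 : ℝ) ≤ k := mod_cast hk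
  exact div_nonneg (by linarith [Real.log_natCast_nonneg k]) (by linarith)

theorem div_sq_le_logTail_sub (hc : 0 ≤ c) (hk : 1 ≤ k) :
    (c + 2 * Real.log k) / k ^ 2 ≤ logTail c k - logTail c (k + 1) := by
  have hk' : (1 : ℝ) ≤ k := mod_cast hk
  have hlog0 : 0 ≤ Real.log k := Real.log_natCast_nonneg k
  have hlog : Real.log (k + 1) ≤ Real.log k + 1 / k := by
    have h := log_le_log_add_div_sub_one (by positivity : (0 : ℝ) < k + 1)
      (by positivity : (0 : ℝ) < k)
    rwa [add_div, div_self (by positivity), add_sub_cancel_left] at h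
  unfold logTail
  push_cast
  generalize (k : ℝ) = x at *
  have hx : (0 : ℝ) < x - 1 / 2 := by linarith
  have hsucc : (c + 2 + 2 * Real.log (x + 1)) / (x + 1 - 1 / 2) ≤
      (c + 2 + 2 * (Real.log x + 1 / x)) / (x + 1 / 2) := by
    rw [show x + 1 - 1 / 2 = x + 1 / 2 by ring]
    gcongr
  have hdiff : (c + 2 + 2 * Real.log x) / (x - 1 / 2) -
      (c + 2 + 2 * (Real.log x + 1 / x)) / (x + 1 / 2) - (c + 2 * Real.log x) / x ^ 2 =
      ((c + 2 * Real.log x) / 4 + x) / (x ^ 2 * ((x - 1 / 2) * (x + 1 / 2))) := by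
    have : 2 * x - 1 ≠ 0 := by linarith
    field_simp
    ring
  have hdiff0 : 0 ≤ ((c + 2 * Real.log x) / 4 + x) / (x ^ 2 * ((x - 1 / 2) * (x + 1 / 2))) := by
    positivity
  linarith

theorem sum_Ico_div_sq_le_logTail (hc : 0 ≤ c) (hm : 1 ≤ m) (hmM : m ≤ M) :
    ∑ k ∈ Ico m M, (c + 2 * Real.log k) / k ^ 2 ≤ logTail c m :=
  calc _ ≤ ∑ k ∈ Ico m M, -(logTail c (k + 1) - logTail c k) := sum_le_sum fun k hk => by
        rw [neg_sub]
        exact div_sq_le_logTail_sub hc (hm.trans (mem_Ico.mp hk).1)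
    _ = logTail c m - logTail c M := by
        rw [sum_neg_distrib, sum_Ico_sub _ hmM, neg_sub]
    _ ≤ logTail c m := sub_le_self _ (logTail_nonneg hc (hm.trans hmM))

theorem logTail_five_le : logTail 7.5 5 ≤ 2.827 := by
  have := Real.log_five_lt_d9
  unfold logTail
  push_cast
  norm_num
  linarith

theorem sum_primes_le_two_mul_sum {F : ℕ → ℝ} (hm : 1 ≤ m) (hF : ∀ k, m ≤ k → 0 ≤ F k) :
    ∑ r ∈ Icc (6 * m - 1) N with r.Prime, F ((r + 1) / 6) ≤
      2 * ∑ k ∈ Ico m ((N + 1) / 6 + 1), F k := by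
  have hmaps : ∀ r ∈ {r ∈ Icc (6 * m - 1) N | r.Prime},
      (r + 1) / 6 ∈ Ico m ((N + 1) / 6 + 1) := fun r hr => by
    simp only [mem_filter, mem_Icc] at hr
    rw [mem_Ico]
    omega
  rw [← sum_fiberwise_of_maps_to hmaps, mul_sum]
  refine sum_le_sum fun k hk => ?_
  have hsub : {r ∈ {r ∈ Icc (6 * m - 1) N | r.Prime} | (r + 1) / 6 = k} ⊆
      {6 * k - 1, 6 * k + 1} := fun r hr => by
    simp only [mem_filter, mem_Icc] at hr
    obtain ⟨⟨⟨hmr, -⟩, hprime⟩, rfl⟩ := hr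
    rw [mem_insert, mem_singleton]
    exact eq_six_mul_sub_one_or_add_one_of_prime hprime (by omega)
  rw [sum_congr rfl fun r hr => by rw [(mem_filter.mp hr).2], sum_const, nsmul_eq_mul]
  gcongr
  · exact hF k (mem_Ico.mp hk).1
  · exact mod_cast (card_le_card hsub).trans card_le_two

theorem sum_le_sum_sum_filter {α ι : Type*} {S : Finset α} {I : Finset ι} {P : ι → α → Prop}
    [∀ i, DecidablePred (P i)] {f : α → ℝ} (hf : ∀ x ∈ S, 0 ≤ f x)
    (hP : ∀ x ∈ S, ∃ i ∈ I, P i x) :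
    ∑ x ∈ S, f x ≤ ∑ i ∈ I, ∑ x ∈ S with P i x, f x := by
  simp only [sum_filter]
  rw [sum_comm]
  refine sum_le_sum fun x hx => ?_
  obtain ⟨i, hi, hix⟩ := hP x hx
  calc f x = if P i x then f x else 0 := (if_pos hix).symm
    _ ≤ _ := single_le_sum (f := fun i => if P i x then f x else 0)
        (fun j _ => ite_nonneg (hf x hx) le_rfl) hi

theorem sum_primes_Icc_three_le {f : ℕ → ℝ} (hf : ∀ r, 0 ≤ f r) :
    ∑ r ∈ Icc 3 N with r.Prime, f r ≤ f 3 + f 5 + ∑ r ∈ {7, 11, 13, 17, 19, 23}, f r +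
      ∑ r ∈ Icc 29 N with r.Prime, f r := by
  have hsub : {r ∈ Icc 3 N | r.Prime} ⊆
      ({3, 5, 7, 11, 13, 17, 19, 23} : Finset ℕ) ∪ {r ∈ Icc 29 N | r.Prime} := fun r hr => by
    simp only [mem_filter, mem_Icc] at hr
    rcases lt_or_ge r 29 with hlt | hge
    · obtain ⟨⟨h3, -⟩, hprime⟩ := hr
      clear hf
      interval_cases r <;> revert hprime <;> norm_num
    · exact mem_union_right _ (mem_filter.mpr ⟨mem_Icc.mpr ⟨hge, hr.1.2⟩, hr.2⟩)
  refine (sum_le_sum_of_subset_of_nonneg hsub fun r _ _ => hf r).trans_eq ?_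
  rw [sum_union, sum_insert (by simp), sum_insert (by simp)]
  · ring
  · refine disjoint_left.mpr fun r hr hr' => ?_
    simp only [mem_insert, mem_singleton, mem_filter, mem_Icc] at hr hr'
    omega

end SumOverPrimes

section LargeIntegers

open Finset

variable {q n b : ℕ}

theorem lostWeight_prime_sq_le {r : ℕ} (hn : 3 * 36 ^ 2 ≤ n) (hr : r.Prime) (hr5 : 5 ≤ r) :
    lostWeight n b (r ^ 2) ≤ n * lostDensity (r ^ 2) + 4 * Real.log (13 * n) :=
  lostWeight_le hn (by nlinarith) ((coprime_twelve_of_prime hr hr5).pow_right 2)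

theorem lostWeight_add_lostWeight_five_sq_le (hn : 3 * 36 ^ 2 ≤ n) (hq : q.Prime) (hq5 : 5 ≤ q) :
    lostWeight n b q + (if 5 = q then 0 else lostWeight n b (5 ^ 2)) ≤
      0.1946 * n + 8 * Real.log (13 * n) := by
  -- The loss to `q` is largest for `q = 5`, but then it includes the loss to `5 ^ 2`.
  have hn0 : (1 : ℝ) ≤ n := mod_cast (by omega : 1 ≤ n)
  have hlog0 : 0 ≤ Real.log (13 * n) := Real.log_nonneg (by linarith)
  have hqn := lostWeight_le (b := b) hn (by omega) (coprime_twelve_of_prime hq hq5)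
  split_ifs with h
  · subst h
    linarith [mul_le_mul_of_nonneg_left lostDensity_five_le n.cast_nonneg]
  · have hq6 : q ≠ 6 := by rintro rfl; norm_num at hq
    have hprime : lostWeight n b q ≤ n * 0.1453 + 4 * Real.log (13 * n) :=
      hqn.trans (by gcongr; exact lostDensity_prime_le hq (by omega))
    have hsq : lostWeight n b (5 ^ 2) ≤ n * 0.0492 + 4 * Real.log (13 * n) :=
      (lostWeight_prime_sq_le hn Nat.prime_five le_rfl).trans
        (by gcongr; exact lostDensity_five_sq_le)
    linarith

theorem sum_lostWeight_sq_le (hn : 3 * 36 ^ 2 ≤ n) :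
    ∑ r ∈ {7, 11, 13, 17, 19, 23}, lostWeight n b (r ^ 2) ≤
      0.0621 * n + 24 * Real.log (13 * n) := by
  have hr : ∀ r ∈ ({7, 11, 13, 17, 19, 23} : Finset ℕ), r.Prime ∧ 5 ≤ r := by
    simp only [mem_insert, mem_singleton]
    rintro r (rfl | rfl | rfl | rfl | rfl | rfl) <;> norm_num
  calc _ ≤ ∑ r ∈ {7, 11, 13, 17, 19, 23}, (n * lostDensity (r ^ 2) + 4 * Real.log (13 * n)) :=
        sum_le_sum fun r h => lostWeight_prime_sq_le hn (hr r h).1 (hr r h).2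
    _ = n * ∑ r ∈ {7, 11, 13, 17, 19, 23}, lostDensity (r ^ 2) + 24 * Real.log (13 * n) := by
        rw [sum_add_distrib, ← mul_sum, sum_const, nsmul_eq_mul, ← mul_assoc]
        norm_num
    _ ≤ _ := by
        linarith [mul_le_mul_of_nonneg_left sum_lostDensity_sq_le n.cast_nonneg]

theorem sum_lostWeight_sq_le_of_ge (hn : 3 * 36 ^ 2 ≤ n) :
    ∑ r ∈ Icc 29 n.sqrt with r.Prime, lostWeight n b (r ^ 2) ≤
      0.0281 * n + (4 / 3 * √n - 30) * Real.log (13 * n) := by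
  have hn0 : (1 : ℝ) ≤ n := mod_cast (by omega : 1 ≤ n)
  have hlog0 : 0 ≤ Real.log (13 * n) := Real.log_nonneg (by linarith)
  set L := Real.log (13 * n)
  set M := (n.sqrt + 1) / 6 + 1
  have hsqrt : 62 ≤ n.sqrt := Nat.le_sqrt.mpr (by omega)
  have hM : ((M - 5 : ℕ) : ℝ) ≤ √n / 6 - 23 / 6 := by
    have hM' : 6 * (M - 5) + 23 ≤ n.sqrt := by omega
    have : (6 * (M - 5 : ℕ) + 23 : ℝ) ≤ n.sqrt := mod_cast hM'
    linarith [Real.nat_sqrt_le_real_sqrt (a := n)]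
  set F : ℕ → ℝ := fun k => n * (0.004956 * ((7.5 + 2 * Real.log k) / k ^ 2)) + 4 * L
  have hF : ∀ k, 5 ≤ k → 0 ≤ F k := fun k _ => by
    have := Real.log_natCast_nonneg k
    positivity
  have hterm : ∀ r ∈ {r ∈ Icc 29 n.sqrt | r.Prime}, lostWeight n b (r ^ 2) ≤ F ((r + 1) / 6) := by
    intro r hr
    simp only [mem_filter, mem_Icc] at hr
    calc _ ≤ n * lostDensity (r ^ 2) + 4 * L := lostWeight_prime_sq_le hn hr.2 (by omega)
      _ ≤ _ := by
        unfold F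
        gcongr
        exact lostDensity_sq_le_of_ge hr.2 hr.1.1 rfl
  have htail : ∑ k ∈ Ico 5 M, (7.5 + 2 * Real.log k) / k ^ 2 ≤ (2.827 : ℝ) :=
    (sum_Ico_div_sq_le_logTail (by norm_num) (by norm_num) (by omega)).trans logTail_five_le
  calc _ ≤ 2 * ∑ k ∈ Ico 5 M, F k :=
        (sum_le_sum hterm).trans (sum_primes_le_two_mul_sum (m := 5) (by norm_num) hF)
    _ = 0.009912 * (n * ∑ k ∈ Ico 5 M, (7.5 + 2 * Real.log k) / k ^ 2) +
          (M - 5 : ℕ) * (8 * L) := by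
        rw [sum_add_distrib, ← mul_sum, ← mul_sum, sum_const, Nat.card_Ico, nsmul_eq_mul]
        ring
    _ ≤ 0.009912 * (n * 2.827) + (√n / 6 - 23 / 6) * (8 * L) := by gcongr
    _ ≤ _ := by linarith

theorem sum_log_sievedPrimes_le_sum_lostWeight
    (hlost : ∀ p ∈ sievedPrimes n b, q ∣ n - p ∨ ∃ r, r.Prime ∧ r ≠ 2 ∧ r ^ 2 ∣ n - p) :
    ∑ p ∈ sievedPrimes n b, Real.log p ≤ lostWeight n b q +
      ∑ r ∈ Icc 3 n.sqrt with r.Prime, if r = q then 0 else lostWeight n b (r ^ 2) := by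
  rw [← sum_filter_add_sum_filter_not _ (fun p => q ∣ n - p), ← lostWeight]
  have hlog : ∀ p : ℕ, 0 ≤ Real.log p := Real.log_natCast_nonneg
  have hcover : ∀ p ∈ {p ∈ sievedPrimes n b | ¬ q ∣ n - p},
      ∃ r ∈ {r ∈ {r ∈ Icc 3 n.sqrt | r.Prime} | ¬ r = q}, r ^ 2 ∣ n - p := fun p hp => by
    obtain ⟨hp, hqp⟩ := mem_filter.mp hp
    obtain ⟨r, hr, hr2, hrp⟩ := (hlost p hp).resolve_left hqp
    simp only [sievedPrimes, mem_filter, mem_Ioo] at hp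
    have hrn : r ^ 2 ≤ n := (Nat.le_of_dvd (by omega) hrp).trans (n.sub_le p)
    have hrq : r ≠ q := by rintro rfl; exact hqp ((dvd_pow_self r two_ne_zero).trans hrp)
    have := hr.two_le
    have hrI : r ∈ Icc 3 n.sqrt := mem_Icc.mpr ⟨by omega, Nat.le_sqrt'.mpr hrn⟩
    exact ⟨r, mem_filter.mpr ⟨mem_filter.mpr ⟨hrI, hr⟩, hrq⟩, hrp⟩
  gcongr
  calc _ ≤ ∑ r ∈ {r ∈ {r ∈ Icc 3 n.sqrt | r.Prime} | ¬ r = q},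
          ∑ p ∈ {p ∈ sievedPrimes n b | ¬ q ∣ n - p} with r ^ 2 ∣ n - p, Real.log p :=
        sum_le_sum_sum_filter (fun p _ => hlog p) hcover
    _ ≤ ∑ r ∈ {r ∈ {r ∈ Icc 3 n.sqrt | r.Prime} | ¬ r = q}, lostWeight n b (r ^ 2) :=
        sum_le_sum fun r _ => sum_le_sum_of_subset_of_nonneg
          (filter_subset_filter _ (filter_subset _ _)) fun p _ _ => hlog p
    _ = _ := by
        rw [sum_filter]
        simp only [ite_not]

theorem sum_log_sievedPrimes_le (hn : 3 * 36 ^ 2 ≤ n) (hq : q.Prime) (hq5 : 5 ≤ q)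
    (hlost : ∀ p ∈ sievedPrimes n b, q ∣ n - p ∨ ∃ r, r.Prime ∧ r ≠ 2 ∧ r ^ 2 ∣ n - p) :
    ∑ p ∈ sievedPrimes n b, Real.log p ≤
      0.4226 * n + (4 / 3 * √n + 4) * Real.log (13 * n) := by
  set f : ℕ → ℝ := fun r => if r = q then 0 else lostWeight n b (r ^ 2)
  have hf : ∀ r, 0 ≤ f r := fun r => ite_nonneg le_rfl lostWeight_nonneg
  have hfle : ∀ r, f r ≤ lostWeight n b (r ^ 2) := fun r => by
    unfold f
    split_ifs
    exacts [lostWeight_nonneg, le_rfl]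
  have hsplit := sum_primes_Icc_three_le (N := n.sqrt) hf
  have hunion : ∑ p ∈ sievedPrimes n b, Real.log p ≤
      lostWeight n b q + ∑ r ∈ Icc 3 n.sqrt with r.Prime, f r :=
    sum_log_sievedPrimes_le_sum_lostWeight hlost
  have h5 : lostWeight n b q + f 5 ≤ 0.1946 * n + 8 * Real.log (13 * n) :=
    lostWeight_add_lostWeight_five_sq_le hn hq hq5
  have h3 : f 3 ≤ 0.1378 * n + 2 * Real.log (13 * n) :=
    (hfle 3).trans (lostWeight_nine_le (by omega))
  have hsmall := (sum_le_sum fun r _ => hfle r).trans (sum_lostWeight_sq_le (b := b) hn)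
  have hlarge := (sum_le_sum fun r _ => hfle r).trans (sum_lostWeight_sq_le_of_ge (b := b) hn)
  linarith

theorem sum_log_modEq_four_le_add (hn : 2 ≤ n) :
    ∑ p ∈ Ioc 0 n with p.Prime ∧ p ≡ b [MOD 4], Real.log p ≤
      ∑ p ∈ sievedPrimes n b, Real.log p + 0.0011 * n + Real.log n := by
  unfold sievedPrimes
  set m := n / 36 ^ 2
  have hsmall : ∑ p ∈ Ioc 0 m with p.Prime ∧ p ≡ b [MOD 4], Real.log p ≤ 0.0011 * n := by
    have hm : (m : ℝ) ≤ n / 36 ^ 2 := mod_cast Nat.cast_div_le (m := n) (n := 36 ^ 2) (α := ℝ)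
    calc _ ≤ Chebyshev.theta m := by
          rw [Chebyshev.theta, Nat.floor_natCast]
          exact sum_le_sum_of_subset_of_nonneg (monotone_filter_right _ fun p _ h => h.1)
            fun p _ _ => Real.log_natCast_nonneg p
      _ ≤ Real.log 4 * m := Chebyshev.theta_le_log4_mul_x m.cast_nonneg
      _ ≤ 1.3862944 * (n / 36 ^ 2) := by gcongr; exact log_four_lt.le
      _ ≤ 0.0011 * n := by linarith [(n.cast_nonneg : (0 : ℝ) ≤ n)]
  have hmn : m < n := Nat.div_lt_self (by omega) (by norm_num)
  have hlast : (if n.Prime ∧ n ≡ b [MOD 4] then Real.log n else 0) ≤ Real.log n := by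
    have := Real.log_natCast_nonneg n
    split_ifs <;> linarith
  rw [sum_filter] at hsmall
  rw [sum_filter, sum_filter, ← sum_Ioc_consecutive _ m.zero_le hmn.le, ← Ioo_insert_right hmn,
    sum_insert right_notMem_Ioo]
  linarith

theorem lower_order_terms_lt (hn : 2 ^ 24 ≤ n) :
    0.4226 * (n : ℝ) + (4 / 3 * √n + 4) * Real.log (13 * n) + 0.0011 * n + Real.log n <
      0.436 * n - 0.4125 * (√n * Real.log n) - 16.2 * √n - 34 * Real.log n - 27 := by
  have hn' : (2 : ℝ) ^ 24 ≤ n := mod_cast hn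
  have hlog13 : Real.log 13 ≤ 2.645 := by
    have h : Real.log 13 ≤ Real.log (2 * 7) := Real.log_le_log (by norm_num) (by norm_num)
    rw [Real.log_mul (by norm_num) (by norm_num)] at h
    linarith [Real.log_two_lt_d9, log_seven_le]
  rw [Real.log_mul (by norm_num) (by positivity)]
  obtain ⟨s, hs⟩ : ∃ s, √(n : ℝ) = s := ⟨_, rfl⟩
  have hns : (n : ℝ) = s ^ 2 := by rw [← hs, Real.sq_sqrt n.cast_nonneg]
  have hs0 : 4096 ≤ s := hs ▸ Real.le_sqrt_of_sq_le (by linarith)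
  have hlogn : Real.log n ≤ 14.6356 + s / 2048 := by
    have h := log_le_log_add_div_sub_one (by linarith : 0 < s) (by norm_num : (0 : ℝ) < 2 ^ 12)
    rw [Real.log_pow] at h
    rw [hns, Real.log_pow]
    push_cast at h ⊢
    linarith [Real.log_two_lt_d9]
  rw [hs]
  have h1 : s * Real.log n ≤ s * (14.6356 + s / 2048) := by gcongr
  have h2 : (4 / 3 * s + 4) * (Real.log 13 + Real.log n) ≤
      (4 / 3 * s + 4) * (2.645 + (14.6356 + s / 2048)) := by gcongr
  rw [hns] at *
  nlinarith

theorem isRepresentable_of_ge (hq : q.Prime) (hq3 : 3 < q) (hn : 2 ^ 24 ≤ n) :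
    IsRepresentable q n := by
  obtain ⟨b, hb, hnb⟩ : ∃ b, (b = 1 ∨ b = 3) ∧ ¬ n ≡ b [MOD 4] := by
    by_cases h : n ≡ 1 [MOD 4]
    · exact ⟨3, .inr rfl, fun h' => absurd (h.symm.trans h') (by decide)⟩
    · exact ⟨1, .inl rfl, h⟩
  by_contra hnot
  have hlost : ∀ p ∈ sievedPrimes n b, q ∣ n - p ∨ ∃ r, r.Prime ∧ r ≠ 2 ∧ r ^ 2 ∣ n - p := by
    intro p hp
    simp only [sievedPrimes, mem_filter, mem_Ioo] at hp
    obtain ⟨⟨-, hpn⟩, hprime, hpb⟩ := hp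
    by_contra! hkeep
    refine hnot (isRepresentable_of_squarefree_sub hq hprime hpn.le ?_ hkeep.1)
    refine Nat.squarefree_iff_prime_squarefree.mpr fun r hr hrr => ?_
    rw [← sq] at hrr
    rcases eq_or_ne r 2 with rfl | hr2
    · exact hnb (((Nat.modEq_iff_dvd' hpn.le).mpr hrr).symm.trans hpb)
    · exact hkeep.2 r hr hr2 hrr
  have hq4 : q ≠ 4 := by rintro rfl; norm_num at hq
  have hupper := sum_log_sievedPrimes_le (by omega) hq (by omega) hlost
  have hsieved : ∑ p ∈ Ioc 0 n with p.Prime ∧ p ≡ b [MOD 4], Real.log p ≤ _ :=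
    sum_log_modEq_four_le_add (by omega)
  have hlower := le_sum_log_modEq_four (X := n) hb (by omega)
  linarith [lower_order_terms_lt hn]

end LargeIntegers

end PrimeAddSquarefree

theorem prime_add_squarefree_coprime_general (q : ℕ) (hq : q.Prime) (hq3 : 3 < q) (n : ℕ)
    (hn : 2 < n) :
    ∃ p k : ℕ, p.Prime ∧ Squarefree k ∧ Nat.gcd k q = 1 ∧ n = p + k := by
  rcases lt_or_ge n (2 ^ 24) with hsmall | hlarge
  · exact PrimeAddSquarefree.isRepresentable_of_lt hq hq3 hn hsmall
  · exact PrimeAddSquarefree.isRepresentable_of_ge hq hq3 hlarge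

/-- For every prime `q` with `3 < q < 10^5`, every integer greater than two can be
written as the sum of a prime and a square-free number co-prime to `q`. -/
theorem prime_add_squarefree_coprime (q : ℕ) (hq : q.Prime) (hq3 : 3 < q)
    (hq5 : q < 10 ^ 5) (n : ℕ) (hn : 2 < n) :
    ∃ p k : ℕ, p.Prime ∧ Squarefree k ∧ Nat.gcd k q = 1 ∧ n = p + k :=
  prime_add_squarefree_coprime_general q hq hq3 n hn
end

section
/- For every prime q with 2 ≤ q < 10^5, every integer greater than four can be written as the sum of two primes and a square-free number co-prime to q. -/
/-!
Subtracting the prime 2 or 3 reduces the problem to writing an even `N ≥ 4` as the sum of a prime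
and a squarefree number coprime to `q`.

For `N < 10 ^ 6` a sieve finds primes `p`, `p'` differing by a power of two with `N - p` and
`N - p'` both squarefree; these two odd numbers differ by a power of two, so `q` cannot divide both.

For `N ≥ 10 ^ 6`, if there is no representation then for every prime `3 < p ≤ N` either `q` or the
square of an odd prime `r ≠ q` divides `N - p`, which confines `p` to one residue class for each
such divisor. Chebyshev's method bounds `∑ log p` over a class modulo `k`: the product of `J`
consecutive terms of the progression is divisible by the primes among them and by the part of `J!`
prime to `k`. Adding up these bounds gives `θ(N) ≤ 0.858 N + O(√N log N)`, while Chebyshev's lower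
bound is `θ(N) ≥ 0.921 N - O(√N log N)`.
-/

/-- `N` is the sum of a prime and a squarefree number coprime to `q`. -/
def IsPrimeAddSquarefreeCoprime (q N : ℕ) : Prop :=
  ∃ p m, p.Prime ∧ Squarefree m ∧ m.Coprime q ∧ N = p + m

section Sieve

/-- The bit mask of the multiples `k * i` with `i < 2 ^ j`, built by repeated doubling. -/
def multiplesMask (k : ℕ) : ℕ → ℕ
  | 0 => 1
  | j + 1 => multiplesMask k j ||| multiplesMask k j <<< (k * 2 ^ j)

/-- A bit mask containing every odd multiple of `d` below `2 * B`, for odd `d`. Bit `i` stands for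
the odd number `2 * i + 1`, here and in the masks below. -/
def oddMultiplesMask (B d : ℕ) : ℕ :=
  multiplesMask d (Nat.log2 (B / d) + 1) <<< (d / 2)

/-- The bit mask of the odd numbers below `2 * B` having a divisor `(2 * i + 3) ^ 2` with `i < R`;
it may contain spurious bits at positions from `B` on. -/
def nonSquarefreeMask (B : ℕ) : ℕ → ℕ
  | 0 => 0
  | R + 1 => nonSquarefreeMask B R ||| oddMultiplesMask B ((2 * R + 3) ^ 2)

/-- The bit mask of the squarefree odd numbers below `2 * B`, once `2 * B ≤ (2 * R + 3) ^ 2`;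
bits from position `B` on are meaningless. -/
def squarefreeMask (B R : ℕ) : ℕ := nonSquarefreeMask B R ^^^ (2 ^ B - 1)

theorem testBit_multiplesMask (k j : ℕ) {i : ℕ} (hi : i < 2 ^ j) :
    (multiplesMask k j).testBit (k * i) = true := by
  induction j generalizing i with
  | zero => simp_all [multiplesMask]
  | succ j ih =>
    rw [multiplesMask, Nat.testBit_or, Bool.or_eq_true]
    rcases lt_or_ge i (2 ^ j) with h | h
    · exact Or.inl (ih h)
    · right
      have hsub : k * i - k * 2 ^ j = k * (i - 2 ^ j) := (Nat.mul_sub ..).symm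
      rw [Nat.testBit_shiftLeft, hsub, ih (by omega)]
      simpa using Nat.mul_le_mul_left k h

theorem testBit_oddMultiplesMask {B d i : ℕ} (hd : Odd d) (hi : i < B) (h : d ∣ 2 * i + 1) :
    (oddMultiplesMask B d).testBit i = true := by
  obtain ⟨c, hc⟩ := h
  obtain ⟨b, rfl⟩ : Odd c := (Nat.odd_mul.1 (hc ▸ odd_two_mul_add_one i)).2
  have hi_eq : i = d / 2 + d * b := by
    obtain ⟨e, rfl⟩ := hd
    rw [show (2 * e + 1) / 2 = e by omega]
    linarith
  have hb : b < 2 ^ (Nat.log2 (B / d) + 1) := by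
    refine lt_of_le_of_lt ?_ Nat.lt_log2_self
    rw [Nat.le_div_iff_mul_le hd.pos, mul_comm]
    omega
  rw [oddMultiplesMask, Nat.testBit_shiftLeft, hi_eq, Nat.add_sub_cancel_left,
    testBit_multiplesMask d _ hb]
  simp

theorem testBit_nonSquarefreeMask {B R i j : ℕ} (hi : i < B) (hj : j < R)
    (h : (2 * j + 3) ^ 2 ∣ 2 * i + 1) : (nonSquarefreeMask B R).testBit i = true := by
  induction R with
  | zero => exact absurd hj j.not_lt_zero
  | succ R ih =>
    rw [nonSquarefreeMask, Nat.testBit_or, Bool.or_eq_true]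
    rcases Nat.lt_succ_iff_lt_or_eq.1 hj with hj | rfl
    · exact Or.inl (ih hj)
    · exact Or.inr (testBit_oddMultiplesMask (Odd.pow ⟨j + 1, by ring⟩) hi h)

theorem squarefree_of_testBit_squarefreeMask {B R i : ℕ} (hR : 2 * B ≤ (2 * R + 3) ^ 2)
    (hi : i < B) (h : (squarefreeMask B R).testBit i = true) : Squarefree (2 * i + 1) := by
  rw [Nat.squarefree_iff_prime_squarefree]
  intro r hr hdvd
  obtain ⟨j, rfl⟩ : ∃ j, r = 2 * j + 3 := by
    have hodd : Odd r := (odd_two_mul_add_one i).of_dvd_nat (dvd_of_mul_right_dvd hdvd)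
    obtain ⟨e, rfl⟩ := hodd
    have := hr.two_le
    exact ⟨e - 1, by omega⟩
  rw [← sq] at hdvd
  have hj : j < R := by
    have hlt : (2 * j + 3) ^ 2 < (2 * R + 3) ^ 2 :=
      (Nat.le_of_dvd (by omega) hdvd).trans_lt (by omega)
    have := lt_of_pow_lt_pow_left₀ 2 (Nat.zero_le _) hlt
    omega
  rw [squarefreeMask, Nat.testBit_xor, testBit_nonSquarefreeMask hi hj hdvd,
    Nat.testBit_two_pow_sub_one] at h
  simp [hi] at h

/-- Pairs of odd primes which differ by a power of two, so that an odd prime cannot divide both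
`n - p` and `n - p'`. -/
def primePairs : List (ℕ × ℕ) :=
  [(3, 19), (5, 7), (29, 31), (13, 17), (59, 61), (71, 73), (43, 47), (37, 41), (3, 7), (3, 5)]

/-- The bit mask of those `t` for which some `(p, p')` in `l` has both `2 * t - p` and `2 * t - p'`
in the mask `S` of odd numbers. -/
def coveredMask (S : ℕ) (l : List (ℕ × ℕ)) : ℕ :=
  l.foldr (fun x acc ↦ S <<< ((x.1 + 1) / 2) &&& S <<< ((x.2 + 1) / 2) ||| acc) 0

theorem exists_mem_of_testBit_coveredMask {S t : ℕ} {l : List (ℕ × ℕ)}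
    (h : (coveredMask S l).testBit t = true) :
    ∃ x ∈ l, (x.1 + 1) / 2 ≤ t ∧ (x.2 + 1) / 2 ≤ t ∧
      S.testBit (t - (x.1 + 1) / 2) = true ∧ S.testBit (t - (x.2 + 1) / 2) = true := by
  induction l with
  | nil => simp [coveredMask] at h
  | cons x l ih =>
    rw [coveredMask, List.foldr_cons, Nat.testBit_or, Nat.testBit_and, Nat.testBit_shiftLeft,
      Nat.testBit_shiftLeft, Bool.or_eq_true] at h
    rcases h with h | h
    · simp only [Bool.and_eq_true, decide_eq_true_eq] at h
      exact ⟨x, List.mem_cons_self, h.1.1, h.2.1, h.1.2, h.2.2⟩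
    · obtain ⟨y, hy, hyt⟩ := ih h
      exact ⟨y, List.mem_cons_of_mem x hy, hyt⟩

theorem forall_mem_primePairs :
    ∀ x ∈ primePairs,
      (x.1.Prime ∧ Odd x.1) ∧ (x.2.Prime ∧ Odd x.2) ∧ ∃ e < 5, x.2 = x.1 + 2 ^ e := by
  simp only [primePairs, List.forall_mem_cons, List.not_mem_nil, false_imp_iff, implies_true,
    and_true]
  norm_num [Nat.odd_iff]
  decide

-- `7 = 1 + 2 + 4` is the mask of `{0, 1, 2}`.
theorem coveredMask_squarefreeMask :
    (coveredMask (squarefreeMask 500000 499) primePairs ||| 7) % 2 ^ 500000 = 2 ^ 500000 - 1 := by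
  decide +kernel

theorem coprime_or_coprime_of_eq_add_two_pow {q a b e : ℕ} (hq : q.Prime) (ha : Odd a)
    (hab : a = b + 2 ^ e) : a.Coprime q ∨ b.Coprime q := by
  simp only [Nat.coprime_comm (m := q), hq.coprime_iff_not_dvd]
  by_contra! hdvd
  have hq2 : q ∣ 2 ^ e := (Nat.dvd_add_right hdvd.2).1 (hab ▸ hdvd.1)
  obtain rfl := (Nat.prime_dvd_prime_iff_eq hq Nat.prime_two).1 (hq.dvd_of_dvd_pow hq2)
  exact Nat.not_even_iff_odd.2 ha (even_iff_two_dvd.2 hdvd.1)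

theorem isPrimeAddSquarefreeCoprime_two_mul_of_lt {q t : ℕ} (hq : q.Prime) (ht2 : 2 ≤ t)
    (ht : t < 500000) : IsPrimeAddSquarefreeCoprime q (2 * t) := by
  rcases eq_or_lt_of_le ht2 with rfl | ht3
  · exact ⟨3, 1, Nat.prime_three, squarefree_one, Nat.coprime_one_left q, rfl⟩
  have hbit := congrArg (Nat.testBit · t) coveredMask_squarefreeMask
  have h7 : Nat.testBit 7 t = false := Nat.testBit_lt_two_pow <|
    (show 7 < 2 ^ 3 by norm_num).trans_le (Nat.pow_le_pow_right two_pos ht3)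
  simp only [Nat.testBit_mod_two_pow, Nat.testBit_two_pow_sub_one, ht, decide_true, Bool.true_and,
    Nat.testBit_or, h7, Bool.or_false] at hbit
  obtain ⟨⟨p, p'⟩, hmem, hpt, hpt', hs, hs'⟩ := exists_mem_of_testBit_coveredMask hbit
  obtain ⟨⟨hp, hodd⟩, ⟨hp', hodd'⟩, e, -, he⟩ := forall_mem_primePairs _ hmem
  dsimp only at hp hp' hodd hodd' hpt hpt' he hs hs'
  set i := t - (p + 1) / 2
  set i' := t - (p' + 1) / 2
  have hsf := squarefree_of_testBit_squarefreeMask (by norm_num) (by grind) hs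
  have hsf' := squarefree_of_testBit_squarefreeMask (by norm_num) (by grind) hs'
  rcases coprime_or_coprime_of_eq_add_two_pow (e := e) hq (odd_two_mul_add_one i)
    (show 2 * i + 1 = 2 * i' + 1 + 2 ^ e by grind) with hcop | hcop
  · exact ⟨p, _, hp, hsf, hcop, by grind⟩
  · exact ⟨p', _, hp', hsf', hcop, by grind⟩

end Sieve

section ArithmeticProgression

open Finset Real

/-- The constant `log k + ∑ log p / (p - 1)`, the sum being over the primes dividing `k`, in the
Chebyshev-type upper bound for the primes in a residue class modulo `k`. -/
noncomputable def apConst (k : ℕ) : ℝ := log k + ∑ p ∈ k.primeFactors, log p / (p - 1 : ℝ)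

/-- The coefficient of `n` in the Chebyshev-type upper bound for `θ(n; k, s)`. -/
noncomputable def apDensity (k : ℕ) : ℝ := apConst k / (k - 1)

/-- Chebyshev's function `θ(n; k, s)`: the sum of `log p` over the primes `p ≤ n` which are
congruent to `s` modulo `k`. -/
noncomputable def thetaMod (k s n : ℕ) : ℝ := ∑ p ∈ Nat.primesLE n with p ≡ s [MOD k], log p

theorem log_div_sub_one_nonneg (p : ℕ) : 0 ≤ log p / (p - 1 : ℝ) := by
  rcases p.eq_zero_or_pos with rfl | hp
  · simp
  · exact div_nonneg (log_natCast_nonneg p) (sub_nonneg.2 (Nat.one_le_cast.2 hp))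

theorem apConst_nonneg (k : ℕ) : 0 ≤ apConst k :=
  add_nonneg (log_natCast_nonneg k) (sum_nonneg fun p _ ↦ log_div_sub_one_nonneg p)

theorem apDensity_nonneg {k : ℕ} (hk : k ≠ 0) : 0 ≤ apDensity k :=
  div_nonneg (apConst_nonneg k) (sub_nonneg.2 (Nat.one_le_cast.2 hk.pos))

theorem apConst_mul_of_coprime {a b : ℕ} (ha : a ≠ 0) (hb : b ≠ 0) (hab : a.Coprime b) :
    apConst (a * b) = apConst a + apConst b := by
  rw [apConst, hab.primeFactors_mul, sum_union hab.disjoint_primeFactors, Nat.cast_mul,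
    log_mul (Nat.cast_ne_zero.2 ha) (Nat.cast_ne_zero.2 hb), apConst, apConst]
  ring

theorem apConst_prime_pow {p m : ℕ} (hp : p.Prime) (hm : m ≠ 0) :
    apConst (p ^ m) = m * log p + log p / (p - 1) := by
  rw [apConst, Nat.primeFactors_prime_pow hm hp, sum_singleton, Nat.cast_pow, log_pow]

theorem apConst_prime {p : ℕ} (hp : p.Prime) : apConst p = log p + log p / (p - 1) := by
  rw [apConst, hp.primeFactors, sum_singleton]

theorem apConst_le_two_mul_log {k : ℕ} (hk : k ≠ 0) : apConst k ≤ 2 * log k := by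
  have hle : ∀ p ∈ k.primeFactors, log p / (p - 1 : ℝ) ≤ log p := fun p hp ↦ by
    have h2 : (2 : ℝ) ≤ p := by exact_mod_cast (Nat.prime_of_mem_primeFactors hp).two_le
    exact div_le_self (log_natCast_nonneg p) (by linarith)
  have hprod : ∑ p ∈ k.primeFactors, log p ≤ log k := by
    rw [← log_prod fun p hp ↦ Nat.cast_ne_zero.2 (Nat.prime_of_mem_primeFactors hp).ne_zero,
      ← Nat.cast_prod]
    refine log_le_log ?_ (Nat.cast_le.2 (Nat.le_of_dvd hk.pos k.prod_primeFactors_dvd))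
    exact Nat.cast_pos.2 (prod_pos fun p hp ↦ (Nat.prime_of_mem_primeFactors hp).pos)
  rw [apConst]
  linarith [sum_le_sum hle]

theorem dvd_prod_add_mul_of_dvd_factorial {k M J : ℕ} (hM : M.Coprime k) (hJ : M ∣ J.factorial)
    (s : ℕ) : M ∣ ∏ j ∈ range J, (s + k * j) := by
  have : NeZero M := ⟨ne_zero_of_dvd_ne_zero J.factorial_ne_zero hJ⟩
  let u := ZMod.unitOfCoprime k hM.symm
  obtain ⟨k', hk'⟩ : ∃ k' : ℕ, (k : ZMod M) * k' = 1 := by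
    refine ⟨((u⁻¹ : (ZMod M)ˣ) : ZMod M).val, ?_⟩
    rw [ZMod.natCast_zmod_val, ← ZMod.coe_unitOfCoprime k hM.symm, Units.mul_inv]
  have hprod : ((∏ j ∈ range J, (s + k * j) : ℕ) : ZMod M) =
      (k : ZMod M) ^ J * ((k' * s).ascFactorial J : ℕ) := by
    rw [Nat.ascFactorial_eq_prod_range]
    push_cast
    rw [← card_range J, ← prod_const, card_range, ← prod_mul_distrib]
    refine prod_congr rfl fun j _ ↦ ?_
    rw [mul_add, ← mul_assoc, hk', one_mul]
  rw [← ZMod.natCast_eq_zero_iff, hprod,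
    (ZMod.natCast_eq_zero_iff _ _).2 (hJ.trans (Nat.factorial_dvd_ascFactorial _ _)), mul_zero]

theorem factorization_factorial_mul_log_le {p : ℕ} (hp : p.Prime) (n : ℕ) :
    n.factorial.factorization p * log p ≤ n * (log p / (p - 1)) := by
  have : Fact p.Prime := ⟨hp⟩
  have h1 : (1 : ℝ) < p := Nat.one_lt_cast.2 hp.one_lt
  have hle : (p - 1) * n.factorial.factorization p ≤ n := by
    rw [Nat.factorization_def _ hp, sub_one_mul_padicValNat_factorial]
    exact Nat.sub_le _ _
  have hle' : ((p : ℝ) - 1) * n.factorial.factorization p ≤ n := by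
    rw [← Nat.cast_pred hp.pos]
    exact_mod_cast hle
  rw [mul_div_assoc', le_div_iff₀ (sub_pos.2 h1)]
  linarith [mul_le_mul_of_nonneg_right hle' (log_natCast_nonneg p)]

theorem exists_factorial_eq_mul_coprime {k : ℕ} (hk : k ≠ 0) (n : ℕ) :
    ∃ K M : ℕ, n.factorial = K * M ∧ M.Coprime k ∧ k ^ n * K ≤ exp (n * apConst k) := by
  set f := n.factorial.factorization
  set S := n.factorial.primeFactors
  have hS : ∀ p ∈ S, p.Prime := fun p ↦ Nat.prime_of_mem_primeFactors
  refine ⟨∏ p ∈ S with p ∣ k, p ^ f p, ∏ p ∈ S with ¬p ∣ k, p ^ f p, ?_, ?_, ?_⟩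
  · rw [prod_filter_mul_prod_filter_not]
    exact (Nat.prod_factorization_pow_eq_self n.factorial_ne_zero).symm
  · refine Nat.Coprime.prod_left fun p hp ↦ Nat.Coprime.pow_left _ ?_
    rw [mem_filter] at hp
    exact ((hS p hp.1).coprime_iff_not_dvd).2 hp.2
  · have hsub : {p ∈ S | p ∣ k} ⊆ k.primeFactors := fun p hp ↦ by
      rw [mem_filter] at hp
      exact Nat.mem_primeFactors.2 ⟨hS p hp.1, hp.2, hk⟩
    have hpos : ∀ p ∈ S.filter (· ∣ k), (0 : ℝ) < (p : ℝ) ^ f p := fun p hp ↦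
      pow_pos (Nat.cast_pos.2 (hS p (mem_filter.1 hp).1).pos) _
    have hk' : (0 : ℝ) < k := Nat.cast_pos.2 hk.pos
    push_cast
    rw [← log_le_iff_le_exp (mul_pos (pow_pos hk' n) (prod_pos hpos)),
      log_mul (pow_pos hk' n).ne' (prod_pos hpos).ne', log_pow, log_prod fun p hp ↦ (hpos p hp).ne',
      apConst, mul_add, mul_sum]
    gcongr
    refine (sum_le_sum fun p hp ↦ ?_).trans <| sum_le_sum_of_subset_of_nonneg hsub fun p _ _ ↦
      mul_nonneg n.cast_nonneg (log_div_sub_one_nonneg p)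
    rw [log_pow]
    exact factorization_factorial_mul_log_le (hS p (mem_filter.1 hp).1) n

-- The primes in `T` divide `∏ (s + k * j) ≤ k ^ J * J!`, and so does the part of `J!` prime to `k`.
theorem prod_primes_le_of_eq_add_mul {k s J K M : ℕ} {T : Finset ℕ} (hs : 0 < s) (hsk : s ≤ k)
    (hKM : J.factorial = K * M) (hM : M.Coprime k)
    (hT : ∀ p ∈ T, p.Prime ∧ J < p ∧ ∃ j < J, p = s + k * j) :
    ∏ p ∈ T, p ≤ k ^ J * K := by
  have hM_dvd : M ∣ J.factorial := ⟨K, by rw [hKM, mul_comm]⟩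
  have hT_dvd : ∏ p ∈ T, p ∣ ∏ j ∈ range J, (s + k * j) := by
    refine prod_primes_dvd _ (fun p hp ↦ (hT p hp).1.prime) fun p hp ↦ ?_
    obtain ⟨-, -, j, hj, rfl⟩ := hT p hp
    exact dvd_prod_of_mem _ (mem_range.2 hj)
  have hcop : Nat.Coprime (∏ p ∈ T, p) M := by
    refine Nat.Coprime.prod_left fun p hp ↦ ?_
    obtain ⟨hpp, hJp, -⟩ := hT p hp
    exact (hpp.coprime_iff_not_dvd).2 fun h ↦
      hJp.not_ge (hpp.dvd_factorial.1 (h.trans hM_dvd))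
  refine Nat.le_of_mul_le_mul_right ?_ (Nat.pos_of_dvd_of_pos hM_dvd J.factorial_pos)
  calc (∏ p ∈ T, p) * M ≤ ∏ j ∈ range J, (s + k * j) :=
        Nat.le_of_dvd (prod_pos fun j _ ↦ Nat.add_pos_left hs _) <|
          hcop.mul_dvd_of_dvd_of_dvd hT_dvd (dvd_prod_add_mul_of_dvd_factorial hM hM_dvd s)
    _ ≤ ∏ j ∈ range J, k * (j + 1) := prod_le_prod' fun j _ ↦ by linarith
    _ = k ^ J * K * M := by
        rw [prod_mul_distrib, prod_const, card_range, prod_range_add_one_eq_factorial, hKM,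
          mul_assoc]

theorem exists_eq_add_mul_of_modEq {k s J p n : ℕ} (hs : s ≤ k) (hp : 0 < p) (hpn : p ≤ n)
    (hn : n < s + k * J) (hps : p ≡ s [MOD k]) : ∃ j < J, p = s + k * j := by
  have hsp : s ≤ p := by
    by_contra! hlt
    have := Nat.le_of_dvd (by omega) ((Nat.modEq_iff_dvd' hlt.le).1 hps)
    omega
  obtain ⟨j, hj⟩ := (Nat.modEq_iff_dvd' hsp).1 hps.symm
  exact ⟨j, lt_of_mul_lt_mul_left (show k * j < k * J by omega) k.zero_le, by omega⟩

theorem thetaMod_le_add {k s n J : ℕ} (hs : 0 < s) (hsk : s ≤ k) (hn : n < s + k * J) :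
    thetaMod k s n ≤ thetaMod k s J + J * apConst k := by
  obtain ⟨K, M, hKM, hM, hK⟩ := exists_factorial_eq_mul_coprime (hs.trans_le hsk).ne' J
  set P := {p ∈ Nat.primesLE n | p ≡ s [MOD k]}
  set T := {p ∈ P | ¬p ≤ J}
  have hT : ∀ p ∈ T, p.Prime ∧ J < p ∧ ∃ j < J, p = s + k * j := fun p hp ↦ by
    simp only [T, P, mem_filter, Nat.mem_primesLE, not_le] at hp
    obtain ⟨⟨⟨hpn, hpp⟩, hps⟩, hJp⟩ := hp
    exact ⟨hpp, hJp, exists_eq_add_mul_of_modEq hsk hpp.pos hpn hn hps⟩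
  have hsmall : ∑ p ∈ P with p ≤ J, log p ≤ thetaMod k s J := by
    refine sum_le_sum_of_subset_of_nonneg (fun p hp ↦ ?_) fun p _ _ ↦ log_natCast_nonneg p
    simp only [P, mem_filter, Nat.mem_primesLE] at hp ⊢
    exact ⟨⟨hp.2, hp.1.1.2⟩, hp.1.2⟩
  have hlarge : ∑ p ∈ T, log p ≤ J * apConst k := by
    have hpos : (0 : ℝ) < ∏ p ∈ T, (p : ℝ) :=
      prod_pos fun p hp ↦ Nat.cast_pos.2 (hT p hp).1.pos
    rw [← log_prod fun p hp ↦ Nat.cast_ne_zero.2 (hT p hp).1.ne_zero, log_le_iff_le_exp hpos]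
    refine le_trans ?_ hK
    rw [← Nat.cast_prod]
    exact_mod_cast prod_primes_le_of_eq_add_mul hs hsk hKM hM hT
  rw [thetaMod, ← sum_filter_add_sum_filter_not P (· ≤ J)]
  exact add_le_add hsmall hlarge

theorem thetaMod_one (k s : ℕ) : thetaMod k s 1 = 0 := by
  simp [thetaMod, Nat.primesLE_one]

theorem thetaMod_succ_le {k s : ℕ} (hk : 2 ≤ k) (hs : 0 < s) (hsk : s ≤ k) (n : ℕ) :
    thetaMod k s (n + 1) ≤ apConst k * (n / (k - 1) + Nat.log k n + 1) := by
  induction n using Nat.strong_induction_on with | _ n ih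
  have hk' : (2 : ℝ) ≤ k := by exact_mod_cast hk
  have hg := apConst_nonneg k
  have hstep : thetaMod k s (n + 1) ≤ thetaMod k s (n / k + 1) + (n / k + 1 : ℕ) * apConst k :=
    thetaMod_le_add hs hsk (by have := Nat.lt_mul_div_succ n (show 0 < k by omega); omega)
  rcases lt_or_ge n k with hnk | hnk
  · have : 0 ≤ (n : ℝ) / (k - 1) := div_nonneg n.cast_nonneg (by linarith)
    rw [Nat.div_eq_of_lt hnk, zero_add, thetaMod_one] at hstep
    rw [Nat.log_of_lt hnk]
    push_cast at hstep ⊢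
    nlinarith
  · have hlog : (Nat.log k n : ℝ) = Nat.log k (n / k) + 1 := by
      rw [Nat.log_of_one_lt_of_le hk hnk]
      push_cast
      rfl
    have hdiv : ((n / k : ℕ) : ℝ) / (k - 1) + (n / k : ℕ) ≤ n / (k - 1) := by
      have hmul : ((n / k : ℕ) : ℝ) * k ≤ n := by exact_mod_cast Nat.div_mul_le_self n k
      rw [div_add' _ _ _ (by linarith)]
      gcongr
      · linarith
      · linarith
    have := ih (n / k) (Nat.div_lt_self (by omega) hk)
    rw [hlog]
    push_cast at hstep
    nlinarith

theorem thetaMod_le {k s n : ℕ} (hk : 2 ≤ k) (hs : 0 < s) (hsk : s ≤ k) (hn : n ≠ 0) :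
    thetaMod k s n ≤ apDensity k * n + 2 * (log n + log k) := by
  obtain ⟨m, rfl⟩ := Nat.exists_eq_succ_of_ne_zero hn
  have hlog : Nat.log k m * log k ≤ log (m + 1 : ℕ) := by
    rw [← log_pow]
    refine log_le_log (by positivity) ?_
    exact_mod_cast Nat.pow_log_le_add_one k m
  have hconst := mul_le_mul_of_nonneg_right (apConst_le_two_mul_log (k := k) (by omega))
    (show (0 : ℝ) ≤ Nat.log k m + 1 by positivity)
  have hmain : apDensity k * m ≤ apDensity k * (m + 1 : ℕ) :=
    mul_le_mul_of_nonneg_left (by simp) (apDensity_nonneg (by omega))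
  calc thetaMod k s (m + 1) ≤ apConst k * (m / (k - 1) + Nat.log k m + 1) :=
        thetaMod_succ_le hk hs hsk m
    _ = apDensity k * m + apConst k * (Nat.log k m + 1) := by rw [apDensity]; ring
    _ ≤ apDensity k * (m + 1 : ℕ) + 2 * (log (m + 1 : ℕ) + log k) := by linarith

theorem sum_log_le_of_forall_modEq {k n : ℕ} {T : Finset ℕ} (hk : 2 ≤ k) (hn : n ≠ 0)
    (hT : T ⊆ Nat.primesLE n) (hmod : ∀ p ∈ T, ∀ p' ∈ T, p ≡ p' [MOD k]) :
    ∑ p ∈ T, log p ≤ apDensity k * n + 2 * (log n + log k) := by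
  obtain ⟨s, hs, hsk, hTs⟩ : ∃ s, 0 < s ∧ s ≤ k ∧ ∀ p ∈ T, p ≡ s [MOD k] := by
    rcases T.eq_empty_or_nonempty with rfl | ⟨p₀, hp₀⟩
    · exact ⟨1, one_pos, by omega, by simp⟩
    · rcases (p₀ % k).eq_zero_or_pos with h0 | hpos
      · exact ⟨k, by omega, le_rfl, fun p hp ↦ (hmod p hp p₀ hp₀).trans (by simp [Nat.ModEq, h0])⟩
      · exact ⟨p₀ % k, hpos, (Nat.mod_lt _ (by omega)).le, fun p hp ↦
          (hmod p hp p₀ hp₀).trans (Nat.mod_modEq _ _).symm⟩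
  refine le_trans (sum_le_sum_of_subset_of_nonneg (fun p hp ↦ ?_) fun p _ _ ↦
    log_natCast_nonneg p) (thetaMod_le hk hs hsk hn)
  exact mem_filter.2 ⟨hT hp, hTs p hp⟩

end ArithmeticProgression

section Theta

open Finset Real Chebyshev
open ArithmeticFunction hiding log

theorem log_factorial_eq_sum_vonMangoldt {n N : ℕ} (hnN : n ≤ N) :
    log n.factorial = ∑ m ∈ Ioc 0 N, Λ m * (n / m : ℕ) := by
  have hfact : log n.factorial = ∑ m ∈ Ioc 0 n, log m := by
    rw [← log_prod fun m hm ↦ Nat.cast_ne_zero.2 (mem_Ioc.1 hm).1.ne', ← Nat.cast_prod,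
      ← prod_Ico_id_eq_factorial]
    rfl
  have hsum := sum_Ioc_mul_zeta_eq_sum (R := ℝ) Λ n
  rw [vonMangoldt_mul_zeta] at hsum
  simp only [ArithmeticFunction.log_apply] at hsum
  rw [hfact, hsum]
  refine sum_subset (Ioc_subset_Ioc_right hnN) fun m hm hmn ↦ ?_
  simp only [mem_Ioc] at hm hmn
  rw [Nat.div_eq_of_lt (by omega), Nat.cast_zero, mul_zero]

-- Chebyshev's combination: `⌊u⌋ - ⌊u / 2⌋ - ⌊u / 3⌋ - ⌊u / 5⌋ + ⌊u / 30⌋` is always `0` or `1`.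
theorem log_factorial_combination_le_psi (N : ℕ) :
    log N.factorial - log (N / 2).factorial - log (N / 3).factorial - log (N / 5).factorial +
      log (N / 30).factorial ≤ ψ N := by
  rw [log_factorial_eq_sum_vonMangoldt le_rfl, log_factorial_eq_sum_vonMangoldt (N.div_le_self 2),
    log_factorial_eq_sum_vonMangoldt (N.div_le_self 3),
    log_factorial_eq_sum_vonMangoldt (N.div_le_self 5),
    log_factorial_eq_sum_vonMangoldt (N.div_le_self 30), ← sum_sub_distrib, ← sum_sub_distrib,
    ← sum_sub_distrib, ← sum_add_distrib, psi, Nat.floor_natCast]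
  refine sum_le_sum fun m _ ↦ ?_
  simp only [Nat.div_right_comm N _ m]
  set u := N / m
  have hu : ((u + u / 30 : ℕ) : ℝ) ≤ (1 + u / 2 + u / 3 + u / 5 : ℕ) := Nat.cast_le.2 (by omega)
  push_cast at hu
  nlinarith [vonMangoldt_nonneg (n := m)]

theorem mul_log_sub_self_sub_le {a b : ℝ} (ha : 0 < a) (hb : 0 < b) :
    (a * log a - a) - (b * log b - b) ≤ (a - b) * log a := by
  have hlog := log_le_sub_one_of_pos (div_pos ha hb)
  rw [log_div ha.ne' hb.ne', div_sub_one hb.ne', le_div_iff₀ hb] at hlog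
  linarith

theorem mul_log_sub_self_le_log_factorial {n : ℕ} (hn : 1 ≤ n) :
    n * log n - n ≤ log n.factorial := by
  induction n, hn using Nat.le_induction with
  | base => simp
  | succ n hn ih =>
    have hn' : (0 : ℝ) < n := Nat.cast_pos.2 hn
    have hstep := mul_log_sub_self_sub_le (a := n + 1) (b := n) (by linarith) hn'
    rw [Nat.factorial_succ, Nat.cast_mul, log_mul (by positivity) (by positivity)]
    push_cast
    linarith [ih]

theorem log_factorial_le_mul_log_sub_self_add {n : ℕ} (hn : 1 ≤ n) :
    log n.factorial ≤ n * log n - n + 1 + log n := by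
  induction n, hn using Nat.le_induction with
  | base => simp
  | succ n hn ih =>
    have hn' : (0 : ℝ) < n := Nat.cast_pos.2 hn
    have hstep := mul_log_sub_self_sub_le (a := n) (b := n + 1) hn' (by linarith)
    rw [Nat.factorial_succ, Nat.cast_mul, log_mul (by positivity) (by positivity)]
    push_cast
    linarith [ih]

theorem mul_log_sub_self_le_log_factorial_floor {x : ℝ} (hx : 1 ≤ x) :
    x * log x - x - log x ≤ log ⌊x⌋₊.factorial := by
  have hpos : 0 < ⌊x⌋₊ := Nat.floor_pos.2 hx
  have hdiff := mul_log_sub_self_sub_le (by linarith : 0 < x) (Nat.cast_pos.2 hpos)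
  have hlog : (x - ⌊x⌋₊) * log x ≤ log x :=
    mul_le_of_le_one_left (log_nonneg hx) (by linarith [Nat.lt_floor_add_one x])
  linarith [mul_log_sub_self_le_log_factorial hpos]

theorem log_factorial_floor_le {x : ℝ} (hx : 1 ≤ x) :
    log ⌊x⌋₊.factorial ≤ x * log x - x + 1 + log x := by
  have hpos : 0 < ⌊x⌋₊ := Nat.floor_pos.2 hx
  have hpos' : (0 : ℝ) < ⌊x⌋₊ := Nat.cast_pos.2 hpos
  have hle : (⌊x⌋₊ : ℝ) ≤ x := Nat.floor_le (by linarith)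
  have hdiff := mul_log_sub_self_sub_le hpos' (by linarith : 0 < x)
  have hmono : (⌊x⌋₊ - x) * log ⌊x⌋₊ ≤ 0 :=
    mul_nonpos_of_nonpos_of_nonneg (by linarith) (log_natCast_nonneg _)
  linarith [log_factorial_le_mul_log_sub_self_add hpos, log_le_log hpos' hle]

theorem log_factorial_div_le {N d : ℕ} (hd : d ≠ 0) (hdN : d ≤ N) :
    log (N / d).factorial ≤ N / d * (log N - log d) - N / d + 1 + log N := by
  have hd' : (1 : ℝ) ≤ d := Nat.one_le_cast.2 hd.pos
  have hle := log_factorial_floor_le (x := N / d) <| by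
    rw [one_le_div (by linarith)]; exact_mod_cast hdN
  rw [Nat.floor_div_eq_div, log_div (Nat.cast_ne_zero.2 (by omega)) (Nat.cast_ne_zero.2 hd)] at hle
  linarith [log_nonneg hd']

theorem le_log_factorial_div {N d : ℕ} (hd : d ≠ 0) (hdN : d ≤ N) :
    N / d * (log N - log d) - N / d - log N ≤ log (N / d).factorial := by
  have hd' : (1 : ℝ) ≤ d := Nat.one_le_cast.2 hd.pos
  have hle := mul_log_sub_self_le_log_factorial_floor (x := N / d) <| by
    rw [one_le_div (by linarith)]; exact_mod_cast hdN
  rw [Nat.floor_div_eq_div, log_div (Nat.cast_ne_zero.2 (by omega)) (Nat.cast_ne_zero.2 hd)] at hle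
  linarith [log_nonneg hd']

theorem log_thirty : log 30 = log 2 + log 3 + log 5 := by
  rw [← log_mul (by norm_num) (by norm_num), ← log_mul (by norm_num) (by norm_num)]
  norm_num

theorem le_theta {N : ℕ} (hN : 30 ≤ N) :
    0.9212 * N - 4 * log N - 3 - 2 * √N * log N ≤ θ N := by
  have hN' : (30 : ℝ) ≤ N := by exact_mod_cast hN
  have hpsi := log_factorial_combination_le_psi N
  have h1 := mul_log_sub_self_le_log_factorial (n := N) (by omega)
  have h2 := log_factorial_div_le (N := N) (d := 2) (by norm_num) (by omega)
  have h3 := log_factorial_div_le (N := N) (d := 3) (by norm_num) (by omega)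
  have h5 := log_factorial_div_le (N := N) (d := 5) (by norm_num) (by omega)
  have h30 := le_log_factorial_div (N := N) (d := 30) (by norm_num) (by omega)
  have hconst : 0.9212 ≤ 7 / 15 * log 2 + 3 / 10 * log 3 + 1 / 6 * log 5 := by
    linarith [log_two_gt_d9, log_three_gt_d9, log_five_gt_d9]
  have hmain := mul_le_mul_of_nonneg_left hconst (by linarith : (0 : ℝ) ≤ N)
  push_cast at h2 h3 h5 h30
  rw [log_thirty] at h30
  linarith [psi_sub_theta_le (x := N) (by linarith)]

end Theta

section Densities

open Finset Real

theorem apConst_two_mul_sq {r : ℕ} (hr : r.Prime) (hr2 : r ≠ 2) :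
    apConst (2 * r ^ 2) = 2 * log 2 + 2 * log r + log r / (r - 1) := by
  have hcop : Nat.Coprime 2 (r ^ 2) :=
    Nat.Coprime.pow_right 2 ((Nat.coprime_primes Nat.prime_two hr).2 hr2.symm)
  rw [apConst_mul_of_coprime two_ne_zero (pow_ne_zero 2 hr.ne_zero) hcop,
    apConst_prime Nat.prime_two, apConst_prime_pow hr two_ne_zero]
  push_cast
  ring

theorem apConst_two_mul {p : ℕ} (hp : p.Prime) (hp2 : p ≠ 2) :
    apConst (2 * p) = 2 * log 2 + log p + log p / (p - 1) := by
  rw [apConst_mul_of_coprime two_ne_zero hp.ne_zero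
    ((Nat.coprime_primes Nat.prime_two hp).2 hp2.symm), apConst_prime Nat.prime_two,
    apConst_prime hp]
  push_cast
  ring

theorem apConst_six_mul_sq {r : ℕ} (hr : r.Prime) (hr3 : r ≠ 3) :
    apConst (6 * r ^ 2) = 3 / 2 * log 3 + apConst (2 * r ^ 2) := by
  have hcop : Nat.Coprime 3 (2 * r ^ 2) := Nat.Coprime.mul_right (by norm_num)
    (Nat.Coprime.pow_right 2 ((Nat.coprime_primes Nat.prime_three hr).2 hr3.symm))
  rw [show 6 * r ^ 2 = 3 * (2 * r ^ 2) by ring, apConst_mul_of_coprime three_ne_zero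
    (mul_ne_zero two_ne_zero (pow_ne_zero 2 hr.ne_zero)) hcop, apConst_prime Nat.prime_three]
  push_cast
  ring

theorem log_le_mul_sub_one {x : ℝ} (hx : 5 ≤ x) : log x ≤ 0.4025 * (x - 1) := by
  have hlog := log_le_sub_one_of_pos (show 0 < x / 5 by linarith)
  rw [log_div (by linarith) (by norm_num)] at hlog
  linarith [log_five_lt_d9]

theorem apConst_two_mul_sq_le {r : ℕ} (hr : r.Prime) (hr5 : 5 ≤ r) :
    apConst (2 * r ^ 2) ≤ 2 * log 2 + 2 * log r + 0.4025 := by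
  have hr5' : (5 : ℝ) ≤ r := by exact_mod_cast hr5
  have hdiv : log r / (r - 1) ≤ 0.4025 := by
    rw [div_le_iff₀ (by linarith)]
    exact log_le_mul_sub_one hr5'
  linarith [apConst_two_mul_sq hr (by omega)]

theorem apDensity_two_mul_sq_le {r : ℕ} (hr : r.Prime) (hr5 : 5 ≤ r) :
    apDensity (2 * r ^ 2) ≤ (log r + 1) / r ^ 2 := by
  have hr5' : (5 : ℝ) ≤ r := by exact_mod_cast hr5
  have hconst := apConst_two_mul_sq_le hr hr5
  have hlog := log_le_mul_sub_one hr5'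
  rw [apDensity]
  push_cast
  rw [div_le_div_iff₀ (by nlinarith) (by positivity)]
  nlinarith [log_two_lt_d9, sq_nonneg (r : ℝ)]

theorem apDensity_six_mul_sq_le {r : ℕ} (hr : r.Prime) (hr5 : 5 ≤ r) :
    apDensity (6 * r ^ 2) ≤ 1 / 2 * ((log r + 1) / r ^ 2) := by
  have hr5' : (5 : ℝ) ≤ r := by exact_mod_cast hr5
  have hconst := apConst_two_mul_sq_le hr hr5
  have hlog := log_le_mul_sub_one hr5'
  have hlogr : log 5 ≤ log r := log_le_log (by norm_num) hr5'
  rw [apDensity, apConst_six_mul_sq hr (by omega)]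
  push_cast
  rw [div_mul_div_comm, div_le_div_iff₀ (by nlinarith) (by positivity)]
  nlinarith [log_two_lt_d9, log_three_lt_d9, log_five_gt_d9, sq_nonneg (r : ℝ)]

theorem apDensity_eighteen_le : apDensity (2 * 3 ^ 2) ≤ 0.2433 := by
  rw [apDensity, apConst_two_mul_sq Nat.prime_three (by norm_num), div_le_iff₀ (by norm_num)]
  push_cast
  linarith [log_two_lt_d9, log_three_lt_d9]

theorem apDensity_six_le : apDensity (2 * 3) ≤ 0.6075 := by
  rw [apDensity, apConst_two_mul Nat.prime_three (by norm_num), div_le_iff₀ (by norm_num)]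
  push_cast
  linarith [log_two_lt_d9, log_three_lt_d9]

theorem apDensity_ten_le : apDensity (2 * 5) ≤ 0.378 := by
  rw [apDensity, apConst_two_mul Nat.prime_five (by norm_num), div_le_iff₀ (by norm_num)]
  push_cast
  linarith [log_two_lt_d9, log_five_lt_d9]

theorem log_seven_le : log 7 ≤ 1.9561 := by
  have h49 : log (7 ^ 2) ≤ log (2 * 5 ^ 2) := log_le_log (by norm_num) (by norm_num)
  rw [log_mul (by norm_num) (by norm_num), log_pow, log_pow] at h49
  push_cast at h49
  linarith [log_two_lt_d9, log_five_lt_d9]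

theorem apDensity_two_mul_le {q : ℕ} (hq : q.Prime) (hq7 : 7 ≤ q) : apDensity (2 * q) ≤ 0.284 := by
  have hq7' : (7 : ℝ) ≤ q := by exact_mod_cast hq7
  have hlog := log_le_sub_one_of_pos (show 0 < (q : ℝ) / 7 by linarith)
  rw [log_div (by linarith) (by norm_num)] at hlog
  have hdiv : log q / (q - 1) ≤ 0.3261 := by
    rw [div_le_iff₀ (by linarith)]
    linarith [log_seven_le]
  rw [apDensity, apConst_two_mul hq (by omega)]
  push_cast
  rw [div_le_iff₀ (by linarith)]
  linarith [log_two_lt_d9, log_seven_le]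

end Densities

section PrimeSquareTail

open Finset Real

theorem sum_le_of_forall_le_sub_succ {a d : ℕ} (hd : d ≠ 0) {f G : ℕ → ℝ} {S : Finset ℕ}
    (hS : ∀ r ∈ S, a ≤ r ∧ r ≡ a [MOD d]) (hf : ∀ j, 0 ≤ f (a + d * j))
    (hfG : ∀ j, f (a + d * j) ≤ G j - G (j + 1)) (hG : ∀ j, 0 ≤ G j) : ∑ r ∈ S, f r ≤ G 0 := by
  have hsub : S ⊆ (range (S.sup id + 1)).image (a + d * ·) := fun r hr ↦ by
    obtain ⟨har, hmod⟩ := hS r hr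
    obtain ⟨j, hj⟩ := (Nat.modEq_iff_dvd' har).1 hmod.symm
    have hjr : j ≤ r := (Nat.le_mul_of_pos_left j hd.pos).trans (by omega)
    exact mem_image.2 ⟨j, mem_range_succ_iff.2 (hjr.trans (le_sup (f := id) hr)), by omega⟩
  have hinj : Function.Injective (a + d * ·) := fun i j hij ↦
    Nat.eq_of_mul_eq_mul_left hd.pos (Nat.add_left_cancel hij)
  calc ∑ r ∈ S, f r ≤ ∑ r ∈ (range (S.sup id + 1)).image (a + d * ·), f r :=
        sum_le_sum_of_subset_of_nonneg hsub fun r hr _ ↦ by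
          obtain ⟨j, -, rfl⟩ := mem_image.1 hr
          exact hf j
    _ = ∑ j ∈ range (S.sup id + 1), f (a + d * j) := sum_image hinj.injOn
    _ ≤ ∑ j ∈ range (S.sup id + 1), (G j - G (j + 1)) := sum_le_sum fun j _ ↦ hfG j
    _ ≤ G 0 := by
        rw [sum_range_sub']
        linarith [hG (S.sup id + 1)]

theorem log_add_sub_log_sub_le {x a : ℝ} (ha : 0 ≤ a) (hax : a < x) :
    log (x + a) - log (x - a) ≤ 2 * a * x / (x ^ 2 - a ^ 2) := by
  have hx : 0 < x := ha.trans_lt hax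
  have hsub : x - a ≠ 0 := (sub_pos.2 hax).ne'
  have hsq : x ^ 2 - a ^ 2 ≠ 0 := (sub_pos.2 (pow_lt_pow_left₀ hax ha two_ne_zero)).ne'
  have h := log_div_le_sum_range_add (div_nonneg ha hx.le) ((div_lt_one hx).2 hax) 0
  have hquot : (1 + a / x) / (1 - a / x) = (x + a) / (x - a) := by field_simp
  have herr : (a / x) ^ (2 * 0 + 1) / (1 - (a / x) ^ 2) = a * x / (x ^ 2 - a ^ 2) := by
    have : 1 - (a / x) ^ 2 ≠ 0 := by
      rw [div_pow, one_sub_div (by positivity)]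
      exact div_ne_zero hsq (by positivity)
    rw [mul_zero, zero_add, pow_one]
    field_simp
  rw [hquot, herr, sum_range_zero, zero_add, log_div (by positivity) hsub] at h
  calc log (x + a) - log (x - a) ≤ 2 * (a * x / (x ^ 2 - a ^ 2)) := by linarith
    _ = 2 * a * x / (x ^ 2 - a ^ 2) := by ring

theorem two_mul_log_sub_le {x a : ℝ} (ha : 0 ≤ a) (hax : a < x) :
    2 * log x - a ^ 2 / (x ^ 2 - a ^ 2) ≤ log (x - a) + log (x + a) := by
  have hx : 0 < x := ha.trans_lt hax
  have hsq : 0 < x ^ 2 - a ^ 2 := sub_pos.2 (pow_lt_pow_left₀ hax ha two_ne_zero)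
  have h := one_sub_inv_le_log_of_pos (show 0 < (x ^ 2 - a ^ 2) / x ^ 2 by positivity)
  rw [log_div hsq.ne' (by positivity), log_pow, inv_div, one_sub_div hsq.ne', sub_sub_cancel_left,
    neg_div, show x ^ 2 - a ^ 2 = (x - a) * (x + a) by ring,
    log_mul (sub_pos.2 hax).ne' (by positivity)] at h
  rw [show x ^ 2 - a ^ 2 = (x - a) * (x + a) by ring]
  push_cast at h
  linarith

-- The right-hand side is the mean of `(log t + 1) / t ^ 2`, a convex function, on `[x - 3, x + 3]`.
theorem log_add_one_div_sq_le {x : ℝ} (hx : 7 ≤ x) :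
    (log x + 1) / x ^ 2 ≤
      (log (x - 3) + 2) / (6 * (x - 3)) - (log (x + 3) + 2) / (6 * (x + 3)) := by
  have hD : 40 ≤ x ^ 2 - 3 ^ 2 := by nlinarith
  have hlogx : 1.6 ≤ log x := by
    linarith [log_five_gt_d9, log_le_log (show (0 : ℝ) < 5 by norm_num) (by linarith : 5 ≤ x)]
  have hdiff := mul_le_mul_of_nonneg_left
    (log_add_sub_log_sub_le (x := x) zero_le_three (by linarith)) (by linarith : 0 ≤ x)
  have hsum := two_mul_log_sub_le (x := x) zero_le_three (by linarith)
  set D := x ^ 2 - 3 ^ 2 with hD_def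
  have hfrac : (log (x - 3) + 2) / (6 * (x - 3)) - (log (x + 3) + 2) / (6 * (x + 3)) =
      (3 * (log (x - 3) + log (x + 3)) - x * (log (x + 3) - log (x - 3)) + 12) / (6 * D) := by
    have h1 : x - 3 ≠ 0 := by linarith
    have h2 : x + 3 ≠ 0 := by linarith
    rw [show D = (x - 3) * (x + 3) by ring]
    field_simp
    ring
  have hgap : 0 ≤ (log x + 1) * D - 1.5 * x ^ 2 := by nlinarith
  rw [hfrac, div_le_div_iff₀ (by positivity) (by positivity)]
  calc (log x + 1) * (6 * D) ≤ (log x + 1) * (6 * D) + 54 * ((log x + 1) * D - 1.5 * x ^ 2) / D :=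
        le_add_of_nonneg_right (by positivity)
    _ = (3 * (2 * log x - 3 ^ 2 / D) - x * (2 * 3 * x / D) + 12) * x ^ 2 := by
        rw [show x ^ 2 = D + 9 by rw [hD_def]; ring, show x * (2 * 3 * x / D) = 6 * (D + 9) / D by
          rw [hD_def]; ring]
        field_simp
        ring
    _ ≤ _ := by
        gcongr

theorem sum_log_add_one_div_sq_le_of_modEq {a : ℕ} (ha : 7 ≤ a) {S : Finset ℕ}
    (hS : ∀ r ∈ S, a ≤ r ∧ r ≡ a [MOD 6]) :
    ∑ r ∈ S, (log r + 1) / (r : ℝ) ^ 2 ≤ (log (a - 3) + 2) / (6 * (a - 3)) := by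
  have ha' : (7 : ℝ) ≤ a := by exact_mod_cast ha
  have hcast : ∀ j : ℕ, (7 : ℝ) ≤ a + 6 * j := fun j ↦ by
    linarith [j.cast_nonneg (α := ℝ)]
  refine (sum_le_of_forall_le_sub_succ (G := fun j ↦
    (log (a + 6 * j - 3) + 2) / (6 * (a + 6 * j - 3))) (by norm_num) hS (fun j ↦ ?_)
    (fun j ↦ ?_) fun j ↦ ?_).trans_eq (by simp)
  · have := log_natCast_nonneg (a + 6 * j)
    positivity
  · push_cast
    convert log_add_one_div_sq_le (hcast j) using 3 <;> ring_nf
  · have := hcast j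
    have := log_nonneg (show 1 ≤ (a : ℝ) + 6 * j - 3 by linarith)
    exact div_nonneg (by linarith) (by linarith)

theorem sum_log_add_one_div_sq_le {S : Finset ℕ}
    (hS : ∀ r ∈ S, 7 ≤ r ∧ (r % 6 = 1 ∨ r % 6 = 5)) :
    ∑ r ∈ S, (log r + 1) / (r : ℝ) ^ 2 ≤ 0.2262 := by
  have h7 := sum_log_add_one_div_sq_le_of_modEq le_rfl (S := {r ∈ S | r % 6 = 1}) fun r hr ↦ by
    rw [mem_filter] at hr
    exact ⟨(hS r hr.1).1, hr.2⟩
  have h11 := sum_log_add_one_div_sq_le_of_modEq (a := 11) (by norm_num)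
    (S := {r ∈ S | ¬r % 6 = 1}) fun r hr ↦ by
      rw [mem_filter] at hr
      have := hS r hr.1
      exact ⟨by omega, (by omega : r % 6 = 5)⟩
  have h4 : log 4 = 2 * log 2 := by rw [← log_rpow two_pos]; norm_num
  have h8 : log 8 = 3 * log 2 := by rw [← log_rpow two_pos]; norm_num
  rw [← sum_filter_add_sum_filter_not S (· % 6 = 1)]
  norm_num [h4, h8] at h7 h11
  linarith [log_two_lt_d9]

theorem sum_le_add_of_le_mul_log_add_one_div_sq {R T : Finset ℕ} {f : ℕ → ℝ} {c : ℝ} (hc : 0 ≤ c)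
    (hR : ∀ r ∈ R, r ∈ T ∨ r.Prime ∧ 7 ≤ r) (hT : ∀ r ∈ T, 0 ≤ f r)
    (hf : ∀ r, r.Prime → 7 ≤ r → f r ≤ c * ((log r + 1) / r ^ 2)) :
    ∑ r ∈ R, f r ≤ ∑ r ∈ T, f r + c * 0.2262 := by
  have hlarge : ∀ r ∈ {r ∈ R | r ∉ T}, r.Prime ∧ 7 ≤ r := fun r hr ↦ by
    rw [mem_filter] at hr
    exact (hR r hr.1).resolve_left hr.2
  have htail : ∑ r ∈ R with r ∉ T, (log r + 1) / (r : ℝ) ^ 2 ≤ 0.2262 := by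
    refine sum_log_add_one_div_sq_le fun r hr ↦ ?_
    obtain ⟨hp, h7⟩ := hlarge r hr
    have h2 := (Nat.prime_dvd_prime_iff_eq Nat.prime_two hp).not.2 (by omega)
    have h3 := (Nat.prime_dvd_prime_iff_eq Nat.prime_three hp).not.2 (by omega)
    exact ⟨h7, by omega⟩
  rw [← sum_filter_add_sum_filter_not R (· ∈ T)]
  refine add_le_add (sum_le_sum_of_subset_of_nonneg (fun r hr ↦ (mem_filter.1 hr).2)
    fun r hr _ ↦ hT r hr) ?_
  calc ∑ r ∈ R with r ∉ T, f r ≤ ∑ r ∈ R with r ∉ T, c * ((log r + 1) / (r : ℝ) ^ 2) :=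
        sum_le_sum fun r hr ↦ hf r (hlarge r hr).1 (hlarge r hr).2
    _ ≤ c * 0.2262 := by
        rw [← mul_sum]
        exact mul_le_mul_of_nonneg_left htail hc

end PrimeSquareTail

section LargeEven

open Finset Real Chebyshev

/-- The primes `3 < p ≤ N` such that `d` divides `N - p`. -/
def primesDvdSub (N d : ℕ) : Finset ℕ := {p ∈ Nat.primesLE N | 3 < p ∧ d ∣ N - p}

/-- The primes whose squares may divide an odd number up to `N` which is not divisible by `q`. -/
def squareDivisorPrimes (q N : ℕ) : Finset ℕ := {r ∈ Nat.primesLE (Nat.sqrt N) | r ≠ 2 ∧ r ≠ q}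

theorem mem_primesDvdSub {N d p : ℕ} :
    p ∈ primesDvdSub N d ↔ (p ≤ N ∧ p.Prime) ∧ 3 < p ∧ d ∣ N - p := by
  rw [primesDvdSub, mem_filter, Nat.mem_primesLE]

theorem mem_squareDivisorPrimes {q N r : ℕ} :
    r ∈ squareDivisorPrimes q N ↔ (r ≤ Nat.sqrt N ∧ r.Prime) ∧ r ≠ 2 ∧ r ≠ q := by
  rw [squareDivisorPrimes, mem_filter, Nat.mem_primesLE]

theorem not_mem_primesDvdSub_self {N d : ℕ} (hN : Even N) : N ∉ primesDvdSub N d := by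
  rw [mem_primesDvdSub]
  rintro ⟨⟨-, hp⟩, h3, -⟩
  have := hp.even_iff.1 hN
  omega

theorem odd_of_mem_primesDvdSub {N d p : ℕ} (hp : p ∈ primesDvdSub N d) : Odd p := by
  obtain ⟨⟨-, hprime⟩, h3, -⟩ := mem_primesDvdSub.1 hp
  exact hprime.odd_of_ne_two (by omega)

theorem primesDvdSub_eq_empty {N d : ℕ} (hd : d ≤ 3) (hd1 : d ≠ 1) (hdN : d ∣ N) :
    primesDvdSub N d = ∅ := by
  refine eq_empty_of_forall_notMem fun p hp ↦ ?_
  obtain ⟨⟨hpN, hprime⟩, h3, hdvd⟩ := mem_primesDvdSub.1 hp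
  rcases (Nat.dvd_prime hprime).1 ((Nat.dvd_sub_iff_right hpN hdN).1 hdvd) with h | h <;> omega

theorem modEq_of_mem_primesDvdSub {N d p p' : ℕ} (hp : p ∈ primesDvdSub N d)
    (hp' : p' ∈ primesDvdSub N d) : p ≡ p' [MOD d] := by
  rw [mem_primesDvdSub] at hp hp'
  exact ((Nat.modEq_iff_dvd' hp.1.1).2 hp.2.2).trans ((Nat.modEq_iff_dvd' hp'.1.1).2 hp'.2.2).symm

theorem modEq_two_mul_of_mem_primesDvdSub {N d p p' : ℕ} (hd : Odd d)
    (hp : p ∈ primesDvdSub N d) (hp' : p' ∈ primesDvdSub N d) : p ≡ p' [MOD 2 * d] :=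
  (Nat.modEq_and_modEq_iff_modEq_mul hd.coprime_two_left).1
    ⟨(Nat.odd_iff.1 (odd_of_mem_primesDvdSub hp)).trans
      (Nat.odd_iff.1 (odd_of_mem_primesDvdSub hp')).symm, modEq_of_mem_primesDvdSub hp hp'⟩

-- Neither `p`, `N - p` nor `N` is divisible by `3`, which leaves one class for `p` modulo `3`.
theorem modEq_six_mul_of_mem_primesDvdSub {N d p p' : ℕ} (hd : Odd d) (hd3 : Nat.Coprime 3 d)
    (hN : ¬3 ∣ N) (hp : p ∈ primesDvdSub N d) (hp' : p' ∈ primesDvdSub N d)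
    (h : ¬3 ∣ N - p) (h' : ¬3 ∣ N - p') : p ≡ p' [MOD 6 * d] := by
  have hthree : ∀ {x}, x ∈ primesDvdSub N d → x ≤ N ∧ ¬3 ∣ x := fun {x} hx ↦ by
    obtain ⟨⟨hxN, hprime⟩, h3, -⟩ := mem_primesDvdSub.1 hx
    exact ⟨hxN, (Nat.prime_dvd_prime_iff_eq Nat.prime_three hprime).not.2 h3.ne⟩
  have hmod3 : p ≡ p' [MOD 3] := by
    obtain ⟨hpN, hp3⟩ := hthree hp
    obtain ⟨hpN', hp3'⟩ := hthree hp'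
    change p % 3 = p' % 3
    omega
  rw [show 6 * d = 3 * (2 * d) by ring]
  exact (Nat.modEq_and_modEq_iff_modEq_mul (Nat.Coprime.mul_right (by norm_num) hd3)).1
    ⟨hmod3, modEq_two_mul_of_mem_primesDvdSub hd hp hp'⟩

theorem sum_log_le_of_subset_primesDvdSub {N d k : ℕ} {T : Finset ℕ} (hN : 36 ≤ N)
    (hN2 : Even N) (hk : 2 ≤ k) (hkd : k ≤ 6 * d) (hT : T ⊆ primesDvdSub N d)
    (hmod : ∀ p ∈ T, ∀ p' ∈ T, p ≡ p' [MOD k]) :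
    ∑ p ∈ T, log p ≤ apDensity k * N + 5 * log N := by
  rcases T.eq_empty_or_nonempty with rfl | ⟨p, hp⟩
  · have := apDensity_nonneg (k := k) (by omega)
    have := log_natCast_nonneg N
    rw [sum_empty]
    positivity
  have hkN : k ≤ 6 * N := by
    obtain ⟨⟨hpN, -⟩, -, hdvd⟩ := mem_primesDvdSub.1 (hT hp)
    have hne : p ≠ N := fun h ↦ not_mem_primesDvdSub_self hN2 (h ▸ hT hp)
    have := Nat.le_of_dvd (by omega) hdvd
    omega
  have hlog : 2 * log k ≤ 3 * log N := by
    have hsq : (k : ℝ) ^ 2 ≤ (N : ℝ) ^ 3 := by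
      exact_mod_cast show k ^ 2 ≤ N ^ 3 by
        calc k ^ 2 ≤ (6 * N) ^ 2 := Nat.pow_le_pow_left hkN 2
          _ = 36 * N ^ 2 := by ring
          _ ≤ N * N ^ 2 := Nat.mul_le_mul_right _ hN
          _ = N ^ 3 := by ring
    simpa using log_le_log (by positivity) hsq
  have hsum := sum_log_le_of_forall_modEq hk (by omega)
    (hT.trans (filter_subset _ _)) hmod
  linarith

theorem sum_log_primesDvdSub_le {N d : ℕ} (hN : 36 ≤ N) (hN2 : Even N) (hd : Odd d) :
    ∑ p ∈ primesDvdSub N d, log p ≤ apDensity (2 * d) * N + 5 * log N :=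
  have := hd.pos
  sum_log_le_of_subset_primesDvdSub hN hN2 (by omega) (by omega) subset_rfl fun _ hp _ hp' ↦
    modEq_two_mul_of_mem_primesDvdSub hd hp hp'

theorem sum_log_primesDvdSub_filter_le {N d : ℕ} (q : ℕ) (hN : 36 ≤ N) (hN2 : Even N)
    (hd : Odd d) :
    ∑ p ∈ primesDvdSub N d with ¬q ∣ N - p, log p ≤ apDensity (2 * d) * N + 5 * log N :=
  (sum_le_sum_of_subset_of_nonneg (filter_subset _ _) fun p _ _ ↦ log_natCast_nonneg p).trans
    (sum_log_primesDvdSub_le hN hN2 hd)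

theorem sum_log_primesDvdSub_filter_three_le {N d : ℕ} (hN : 36 ≤ N) (hN2 : Even N)
    (hN3 : ¬3 ∣ N) (hd : Odd d) (hd3 : Nat.Coprime 3 d) :
    ∑ p ∈ primesDvdSub N d with ¬3 ∣ N - p, log p ≤ apDensity (6 * d) * N + 5 * log N := by
  have := hd.pos
  refine sum_log_le_of_subset_primesDvdSub hN hN2 (by omega) le_rfl (filter_subset _ _)
    fun p hp p' hp' ↦ ?_
  rw [mem_filter] at hp hp'
  exact modEq_six_mul_of_mem_primesDvdSub hd hd3 hN3 hp.1 hp'.1 hp.2 hp'.2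

theorem mem_primesDvdSub_or_of_not_isPrimeAddSquarefreeCoprime {q N p : ℕ} (hq : q.Prime)
    (hN : Even N) (hnot : ¬IsPrimeAddSquarefreeCoprime q N) (hp : p.Prime) (hp3 : 3 < p)
    (hpN : p ≤ N) :
    p ∈ primesDvdSub N q ∨
      ∃ r ∈ squareDivisorPrimes q N, p ∈ {p ∈ primesDvdSub N (r ^ 2) | ¬q ∣ N - p} := by
  by_cases hqdvd : q ∣ N - p
  · exact Or.inl (mem_primesDvdSub.2 ⟨⟨hpN, hp⟩, hp3, hqdvd⟩)
  have hsf : ¬Squarefree (N - p) := fun hsf ↦ hnot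
    ⟨p, N - p, hp, hsf, (hq.coprime_iff_not_dvd.2 hqdvd).symm, (Nat.add_sub_of_le hpN).symm⟩
  rw [Nat.squarefree_iff_prime_squarefree] at hsf
  push Not at hsf
  obtain ⟨r, hr, hrdvd⟩ := hsf
  have hrdvd' : r ∣ N - p := dvd_of_mul_right_dvd hrdvd
  have hne : N - p ≠ 0 := fun h ↦ hqdvd (h ▸ dvd_zero q)
  have hodd : Odd (N - p) := Nat.Even.sub_odd hpN hN (hp.odd_of_ne_two (by omega))
  have hr2 : r ≠ 2 := by
    rintro rfl
    exact Nat.not_even_iff_odd.2 hodd (even_iff_two_dvd.2 hrdvd')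
  have hrN : r ≤ Nat.sqrt N :=
    Nat.le_sqrt.2 ((Nat.le_of_dvd hne.pos hrdvd).trans (Nat.sub_le N p))
  exact Or.inr ⟨r, mem_squareDivisorPrimes.2 ⟨⟨hrN, hr⟩, hr2, fun h ↦ hqdvd (h ▸ hrdvd')⟩,
    mem_filter.2 ⟨mem_primesDvdSub.2 ⟨⟨hpN, hp⟩, hp3, by rwa [sq]⟩, hqdvd⟩⟩

theorem sum_union_le {ι : Type*} [DecidableEq ι] {f : ι → ℝ} (hf : ∀ i, 0 ≤ f i)
    (s t : Finset ι) : ∑ i ∈ s ∪ t, f i ≤ ∑ i ∈ s, f i + ∑ i ∈ t, f i := by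
  rw [← sum_union_inter]
  exact le_add_of_nonneg_right (sum_nonneg fun i _ ↦ hf i)

theorem sum_biUnion_le {ι κ : Type*} [DecidableEq ι] {f : ι → ℝ} (hf : ∀ i, 0 ≤ f i)
    (s : Finset κ) (t : κ → Finset ι) : ∑ i ∈ s.biUnion t, f i ≤ ∑ j ∈ s, ∑ i ∈ t j, f i := by
  rw [← sup_eq_biUnion]
  exact s.apply_sup_le_sum (f := fun u ↦ ∑ i ∈ u, f i) sum_empty (sum_union_le hf _ _)

theorem theta_le_of_not_isPrimeAddSquarefreeCoprime {q N : ℕ} (hq : q.Prime) (hN : Even N)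
    (hnot : ¬IsPrimeAddSquarefreeCoprime q N) :
    θ N ≤ log 2 + log 3 + ∑ p ∈ primesDvdSub N q, log p +
      ∑ r ∈ squareDivisorPrimes q N, ∑ p ∈ primesDvdSub N (r ^ 2) with ¬q ∣ N - p, log p := by
  have hlog : ∀ p : ℕ, 0 ≤ log p := log_natCast_nonneg
  have hcover : Nat.primesLE N ⊆ {2, 3} ∪ primesDvdSub N q ∪ (squareDivisorPrimes q N).biUnion
      fun r ↦ {p ∈ primesDvdSub N (r ^ 2) | ¬q ∣ N - p} := fun p hp ↦ by
    obtain ⟨hpN, hp⟩ := Nat.mem_primesLE.1 hp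
    rw [mem_union, mem_union, mem_biUnion]
    rcases le_or_gt p 3 with hp3 | hp3
    · have := hp.two_le
      exact Or.inl (Or.inl (by grind))
    · exact (mem_primesDvdSub_or_of_not_isPrimeAddSquarefreeCoprime hq hN hnot hp hp3 hpN).imp
        Or.inr id
  calc θ N = ∑ p ∈ Nat.primesLE N, log p := theta_eq_sum_primesLE_log N
    _ ≤ _ := sum_le_sum_of_subset_of_nonneg hcover fun p _ _ ↦ hlog p
    _ ≤ _ := sum_union_le hlog _ _
    _ ≤ _ := add_le_add (sum_union_le hlog _ _) (sum_biUnion_le hlog _ _)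
    _ = _ := by rw [sum_pair (by norm_num), Nat.cast_ofNat, Nat.cast_ofNat]

theorem card_squareDivisorPrimes_le (q N : ℕ) : (#(squareDivisorPrimes q N) : ℝ) ≤ √N / 2 := by
  have hhalf : ∀ r ∈ squareDivisorPrimes q N, 2 * (r / 2) + 1 = r ∧ r / 2 ∈ Ioc 0 (N.sqrt / 2) := by
    intro r hr
    obtain ⟨⟨hrN, hprime⟩, hr2, -⟩ := mem_squareDivisorPrimes.1 hr
    have := Nat.odd_iff.1 (hprime.odd_of_ne_two hr2)
    have := hprime.two_le
    rw [mem_Ioc]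
    omega
  have hcard : #(squareDivisorPrimes q N) ≤ N.sqrt / 2 := by
    simpa using card_le_card_of_injOn (· / 2) (fun r hr ↦ (hhalf r hr).2) fun r hr r' hr' h ↦ by
      have := (hhalf r hr).1
      have := (hhalf r' hr').1
      dsimp only at h
      omega
  calc (#(squareDivisorPrimes q N) : ℝ) ≤ (N.sqrt / 2 : ℕ) := Nat.cast_le.2 hcard
    _ ≤ (N.sqrt : ℝ) / 2 := Nat.cast_div_le
    _ ≤ √N / 2 := by
      gcongr
      exact nat_sqrt_le_real_sqrt

theorem log_error_lt {N : ℝ} (hN : 10 ^ 6 ≤ N) :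
    4.5 * √N * log N + 9 * log N + 5 < 0.0632 * N := by
  have hs : 1000 ≤ √N := le_sqrt_of_sq_le (by linarith)
  have hN' : √N ^ 2 = N := sq_sqrt (by linarith)
  have hlog : log N ≤ 0.01382 * √N := by
    have h1000 : log 1000 = 3 * (log 2 + log 5) := by
      rw [← log_mul two_ne_zero (by norm_num), ← log_rpow (by norm_num)]
      norm_num
    have htangent := log_le_sub_one_of_pos (show 0 < √N / 1000 by positivity)
    rw [log_div (by positivity) (by norm_num)] at htangent
    have hhalf := log_sqrt (x := N) (by linarith)
    linarith [log_two_lt_d9, log_five_lt_d9]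
  nlinarith [sqrt_nonneg N]

theorem isPrimeAddSquarefreeCoprime_of_density_le {q N : ℕ} (hq : q.Prime) (hN : 10 ^ 6 ≤ N)
    (hN2 : Even N) {a : ℝ} {b : ℕ → ℝ}
    (hA : ∑ p ∈ primesDvdSub N q, log p ≤ a * N + 5 * log N)
    (hB : ∀ r ∈ squareDivisorPrimes q N,
      ∑ p ∈ primesDvdSub N (r ^ 2) with ¬q ∣ N - p, log p ≤ b r * N + 5 * log N)
    (hab : a + ∑ r ∈ squareDivisorPrimes q N, b r ≤ 0.858) :
    IsPrimeAddSquarefreeCoprime q N := by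
  by_contra hnot
  have hN' : (10 : ℝ) ^ 6 ≤ N := by exact_mod_cast hN
  have hupper := theta_le_of_not_isPrimeAddSquarefreeCoprime hq hN2 hnot
  have hlower := le_theta (N := N) (by omega)
  have hsquares : ∑ r ∈ squareDivisorPrimes q N, ∑ p ∈ primesDvdSub N (r ^ 2) with ¬q ∣ N - p,
      log p ≤ (∑ r ∈ squareDivisorPrimes q N, b r) * N + 2.5 * √N * log N := by
    have hcard := mul_le_mul_of_nonneg_right (card_squareDivisorPrimes_le q N)
      (log_natCast_nonneg N)
    refine (sum_le_sum hB).trans ?_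
    rw [sum_add_distrib, ← sum_mul, sum_const, nsmul_eq_mul]
    linarith
  have hdensity : (a + ∑ r ∈ squareDivisorPrimes q N, b r) * N ≤ 0.858 * N := by gcongr
  linarith [log_error_lt hN', log_two_lt_d9, log_three_lt_d9]

theorem odd_sq_of_mem_squareDivisorPrimes {q N r : ℕ} (hr : r ∈ squareDivisorPrimes q N) :
    Odd (r ^ 2) := by
  obtain ⟨⟨-, hprime⟩, hr2, -⟩ := mem_squareDivisorPrimes.1 hr
  exact (hprime.odd_of_ne_two hr2).pow

theorem mem_or_seven_le_of_mem_squareDivisorPrimes {q N r : ℕ}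
    (hr : r ∈ squareDivisorPrimes q N) : r ∈ ({3, 5} : Finset ℕ).erase q ∨ r.Prime ∧ 7 ≤ r := by
  obtain ⟨⟨-, hprime⟩, hr2, hrq⟩ := mem_squareDivisorPrimes.1 hr
  by_cases h7 : 7 ≤ r
  · exact Or.inr ⟨hprime, h7⟩
  · left
    have := hprime.two_le
    interval_cases r <;> simp_all +decide

theorem apDensity_fifty_le : apDensity (2 * 5 ^ 2) ≤ 0.1044 := by
  refine (apDensity_two_mul_sq_le Nat.prime_five le_rfl).trans ?_
  norm_num
  linarith [log_five_lt_d9]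

theorem sum_apDensity_two_mul_sq_le_add (q N : ℕ) :
    ∑ r ∈ squareDivisorPrimes q N, apDensity (2 * r ^ 2) ≤
      ∑ r ∈ ({3, 5} : Finset ℕ).erase q, apDensity (2 * r ^ 2) + 0.2262 := by
  have hT : ∀ r ∈ ({3, 5} : Finset ℕ).erase q, 0 ≤ apDensity (2 * r ^ 2) := fun r hr ↦
    apDensity_nonneg (by grind)
  simpa using sum_le_add_of_le_mul_log_add_one_div_sq zero_le_one
    (fun r ↦ mem_or_seven_le_of_mem_squareDivisorPrimes) hT
    fun r hr h7 ↦ (apDensity_two_mul_sq_le hr (by omega)).trans_eq (one_mul _).symm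

theorem sum_apDensity_two_mul_sq_le (q N : ℕ) :
    ∑ r ∈ squareDivisorPrimes q N, apDensity (2 * r ^ 2) ≤ 0.5739 := by
  have herase : ∑ r ∈ ({3, 5} : Finset ℕ).erase q, apDensity (2 * r ^ 2) ≤
      ∑ r ∈ {3, 5}, apDensity (2 * r ^ 2) :=
    sum_le_sum_of_subset_of_nonneg (erase_subset _ _) fun r hr _ ↦ apDensity_nonneg (by grind)
  have hpair : ∑ r ∈ {3, 5}, apDensity (2 * r ^ 2) =
      apDensity (2 * 3 ^ 2) + apDensity (2 * 5 ^ 2) := sum_pair (by norm_num)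
  grw [sum_apDensity_two_mul_sq_le_add, herase, hpair, apDensity_eighteen_le, apDensity_fifty_le]
  norm_num

theorem sum_apDensity_two_mul_sq_five_le (N : ℕ) :
    ∑ r ∈ squareDivisorPrimes 5 N, apDensity (2 * r ^ 2) ≤ 0.4695 := by
  have hsum := sum_apDensity_two_mul_sq_le_add 5 N
  rw [show ({3, 5} : Finset ℕ).erase 5 = {3} by decide, sum_singleton] at hsum
  linarith [apDensity_eighteen_le]

theorem sum_apDensity_six_mul_sq_three_le (N : ℕ) :
    ∑ r ∈ squareDivisorPrimes 3 N, apDensity (6 * r ^ 2) ≤ 0.1653 := by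
  have hsum := sum_le_add_of_le_mul_log_add_one_div_sq (f := fun r ↦ apDensity (6 * r ^ 2))
    (c := 1 / 2) (R := squareDivisorPrimes 3 N) (by norm_num)
    (fun r ↦ mem_or_seven_le_of_mem_squareDivisorPrimes)
    (fun r hr ↦ apDensity_nonneg (by grind))
    fun r hr h7 ↦ apDensity_six_mul_sq_le hr (by omega)
  rw [show ({3, 5} : Finset ℕ).erase 3 = {5} by decide, sum_singleton] at hsum
  have hfive := apDensity_six_mul_sq_le Nat.prime_five le_rfl
  norm_num at hfive hsum ⊢
  linarith [log_five_lt_d9]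

theorem isPrimeAddSquarefreeCoprime_three_of_not_dvd {N : ℕ} (hN : 10 ^ 6 ≤ N) (hN2 : Even N)
    (hN3 : ¬3 ∣ N) : IsPrimeAddSquarefreeCoprime 3 N := by
  refine isPrimeAddSquarefreeCoprime_of_density_le Nat.prime_three hN hN2
    (sum_log_primesDvdSub_le (by omega) hN2 (by decide))
    (b := fun r ↦ apDensity (6 * r ^ 2)) (fun r hr ↦ ?_)
    (by linarith [apDensity_six_le, sum_apDensity_six_mul_sq_three_le N])
  obtain ⟨⟨-, hprime⟩, -, hr3⟩ := mem_squareDivisorPrimes.1 hr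
  exact sum_log_primesDvdSub_filter_three_le (by omega) hN2 hN3
    (odd_sq_of_mem_squareDivisorPrimes hr)
    (Nat.Coprime.pow_right 2 ((Nat.coprime_primes Nat.prime_three hprime).2 hr3.symm))

theorem isPrimeAddSquarefreeCoprime_of_le {q N : ℕ} (hq : q.Prime) (hN : 10 ^ 6 ≤ N)
    (hN2 : Even N) : IsPrimeAddSquarefreeCoprime q N := by
  have hreduce {a : ℝ} (hA : ∑ p ∈ primesDvdSub N q, log p ≤ a * N + 5 * log N)
      (hab : a + ∑ r ∈ squareDivisorPrimes q N, apDensity (2 * r ^ 2) ≤ 0.858) :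
      IsPrimeAddSquarefreeCoprime q N :=
    isPrimeAddSquarefreeCoprime_of_density_le hq hN hN2 hA (fun r hr ↦
      sum_log_primesDvdSub_filter_le q (by omega) hN2 (odd_sq_of_mem_squareDivisorPrimes hr)) hab
  by_cases hempty : q ≤ 3 ∧ q ∣ N
  · refine hreduce (a := 0) ?_ (by linarith [sum_apDensity_two_mul_sq_le q N])
    rw [primesDvdSub_eq_empty hempty.1 hq.ne_one hempty.2, sum_empty, zero_mul, zero_add]
    have := log_natCast_nonneg N
    positivity
  have hq2 : q ≠ 2 := by
    rintro rfl
    exact hempty ⟨by norm_num, hN2.two_dvd⟩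
  have hA := sum_log_primesDvdSub_le (by omega) hN2 (hq.odd_of_ne_two hq2)
  rcases lt_or_ge q 7 with hq7 | hq7
  · obtain rfl | rfl : q = 3 ∨ q = 5 := by
      have := hq.two_le
      interval_cases q <;> simp_all +decide
    · exact isPrimeAddSquarefreeCoprime_three_of_not_dvd hN hN2 fun h ↦ hempty ⟨le_rfl, h⟩
    · exact hreduce hA (by linarith [apDensity_ten_le, sum_apDensity_two_mul_sq_five_le N])
  · exact hreduce hA (by linarith [apDensity_two_mul_le hq hq7, sum_apDensity_two_mul_sq_le q N])

end LargeEven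

theorem isPrimeAddSquarefreeCoprime_of_even {q N : ℕ} (hq : q.Prime) (hN : Even N) (hN4 : 4 ≤ N) :
    IsPrimeAddSquarefreeCoprime q N := by
  rcases lt_or_ge N (10 ^ 6) with hlt | hge
  · obtain ⟨t, rfl⟩ := hN.two_dvd
    exact isPrimeAddSquarefreeCoprime_two_mul_of_lt hq (by omega) (by omega)
  · exact isPrimeAddSquarefreeCoprime_of_le hq hge hN

theorem two_primes_add_squarefree_coprime_general (q : ℕ) (hq : q.Prime) (n : ℕ) (hn : 4 < n) :
    ∃ p₁ p₂ k : ℕ, p₁.Prime ∧ p₂.Prime ∧ Squarefree k ∧ Nat.gcd k q = 1 ∧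
      n = p₁ + p₂ + k := by
  rcases eq_or_ne n 5 with rfl | hn5
  · exact ⟨2, 2, 1, Nat.prime_two, Nat.prime_two, squarefree_one, Nat.gcd_one_left q, rfl⟩
  obtain ⟨p₁, hp₁, hle, heven⟩ : ∃ p₁, p₁.Prime ∧ p₁ + 4 ≤ n ∧ Even (n - p₁) := by
    rcases n.even_or_odd with h | h
    · exact ⟨2, Nat.prime_two, by grind, h.tsub even_two⟩
    · exact ⟨3, Nat.prime_three, by grind, Nat.Odd.sub_odd h (by decide)⟩
  obtain ⟨p₂, k, hp₂, hk, hkq, hsum⟩ :=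
    isPrimeAddSquarefreeCoprime_of_even hq heven (by omega)
  exact ⟨p₁, p₂, k, hp₁, hp₂, hk, hkq, by omega⟩

/-- For every prime `q` with `2 ≤ q < 10^5`, every integer greater than four can be
written as the sum of two primes and a square-free number co-prime to `q`. -/
theorem two_primes_add_squarefree_coprime (q : ℕ) (hq : q.Prime) (hq2 : 2 ≤ q)
    (hq5 : q < 10 ^ 5) (n : ℕ) (hn : 4 < n) :
    ∃ p₁ p₂ k : ℕ, p₁.Prime ∧ p₂.Prime ∧ Squarefree k ∧ Nat.gcd k q = 1 ∧
      n = p₁ + p₂ + k :=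
  two_primes_add_squarefree_coprime_general q hq n hn
end

section
/- Artin's constant exceeds 0.37395; that is, ∏_p (1 − 1/(p(p−1))) > 0.37395, where the product runs over all primes p. -/
/-!
The product converges too slowly for its partial products to be of use, so it is multiplied by the
Euler product `∏_p (1 - p⁻²)⁻¹ = π² / 6`. The factors become `1 - 1 / ((p - 1)² (p + 1))`, and by
Weierstrass's inequality `∏ (1 - aᵢ) ≥ 1 - ∑ aᵢ` together with a telescoping bound the primes
`p ≥ N` change the new product by a factor of at least `1 - 1 / (2 (N - 1) (N - 2))`.
Taking `N = 200` and `π < 3.141593` is enough.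
-/

open Filter Finset

section Weierstrass

variable {ι R : Type*} [CommRing R] [PartialOrder R] [IsOrderedRing R] {f : ι → R}

theorem one_sub_sum_le_prod_one_sub {s : Finset ι} (hf₀ : ∀ i ∈ s, 0 ≤ f i)
    (hf₁ : ∀ i ∈ s, f i ≤ 1) : 1 - ∑ i ∈ s, f i ≤ ∏ i ∈ s, (1 - f i) := by
  classical
  induction s using Finset.induction_on with
  | empty => simp
  | insert j s hj ih =>
    simp only [forall_mem_insert] at hf₀ hf₁
    rw [sum_insert hj, prod_insert hj]
    have hcross : 0 ≤ f j * ∑ i ∈ s, f i := mul_nonneg hf₀.1 (sum_nonneg hf₀.2)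
    calc 1 - (f j + ∑ i ∈ s, f i)
        ≤ 1 - (f j + ∑ i ∈ s, f i) + f j * ∑ i ∈ s, f i := le_add_of_nonneg_right hcross
      _ = (1 - f j) * (1 - ∑ i ∈ s, f i) := by ring
      _ ≤ (1 - f j) * ∏ i ∈ s, (1 - f i) :=
        mul_le_mul_of_nonneg_left (ih hf₀.2 hf₁.2) (sub_nonneg.2 hf₁.1)

theorem prod_one_sub_mul_le_of_hasProd [TopologicalSpace R] [ClosedIciTopology R] {P c : R}
    (hP : HasProd (fun i ↦ 1 - f i) P) (hf₀ : ∀ i, 0 ≤ f i) (hf₁ : ∀ i, f i ≤ 1) (s : Finset ι)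
    (hc : ∀ t : Finset ι, Disjoint t s → ∑ i ∈ t, f i ≤ c) :
    (∏ i ∈ s, (1 - f i)) * (1 - c) ≤ P := by
  classical
  refine ge_of_tendsto hP ?_
  filter_upwards [eventually_ge_atTop s] with t hst
  have htail : 1 - c ≤ ∏ i ∈ t \ s, (1 - f i) :=
    (sub_le_sub_left (hc _ sdiff_disjoint) 1).trans
      (one_sub_sum_le_prod_one_sub (fun i _ ↦ hf₀ i) fun i _ ↦ hf₁ i)
  rw [← prod_sdiff hst, mul_comm]
  exact mul_le_mul_of_nonneg_right htail (prod_nonneg fun i _ ↦ sub_nonneg.2 (hf₁ i))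

end Weierstrass

theorem sum_le_of_le_sub_succ {G : Type*} [AddCommGroup G] [PartialOrder G] [IsOrderedAddMonoid G]
    {a b : ℕ → G} {N : ℕ} (ha : ∀ n ≥ N, 0 ≤ a n) (hb : ∀ n ≥ N, 0 ≤ b n)
    (hab : ∀ n ≥ N, a n ≤ b n - b (n + 1)) {t : Finset ℕ} (ht : ∀ n ∈ t, N ≤ n) :
    ∑ n ∈ t, a n ≤ b N := by
  obtain ⟨M, hM⟩ := exists_nat_subset_range t
  have hsub : t ⊆ Ico N (N + M) := fun n hn ↦
    mem_Ico.2 ⟨ht n hn, (mem_range.1 (hM hn)).trans_le (Nat.le_add_left M N)⟩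
  calc ∑ n ∈ t, a n
      ≤ ∑ n ∈ Ico N (N + M), a n :=
        sum_le_sum_of_subset_of_nonneg hsub fun n hn _ ↦ ha n (mem_Ico.1 hn).1
    _ ≤ ∑ n ∈ Ico N (N + M), (b n - b (n + 1)) :=
        sum_le_sum fun n hn ↦ hab n (mem_Ico.1 hn).1
    _ = b N - b (N + M) := by
        rw [sum_Ico_eq_sum_range, Nat.add_sub_cancel_left]
        exact sum_range_sub' (fun k ↦ b (N + k)) M
    _ ≤ b N := sub_le_self _ (hb _ (Nat.le_add_right N M))

theorem summable_primes_one_div_mul_sub_one :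
    Summable fun p : Nat.Primes ↦ 1 / ((p : ℝ) * ((p : ℝ) - 1)) := by
  have hsq : Summable fun p : Nat.Primes ↦ 2 * (1 / (p : ℝ) ^ 2) :=
    ((Real.summable_one_div_nat_pow.2 one_lt_two).comp_injective
      Nat.Primes.coe_nat_injective).mul_left 2
  refine hsq.of_nonneg_of_le (fun p ↦ ?_) fun p ↦ ?_ <;>
    have hp : (2 : ℝ) ≤ p := mod_cast p.2.two_le
  · exact one_div_nonneg.2 (mul_nonneg (by linarith) (by linarith))
  · rw [mul_one_div, div_le_div_iff₀ (by nlinarith) (by positivity)]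
    nlinarith

theorem multipliable_artin_factors :
    Multipliable fun p : Nat.Primes ↦ 1 - 1 / ((p : ℝ) * ((p : ℝ) - 1)) := by
  simpa only [sub_eq_add_neg] using
    Real.multipliable_one_add_of_summable summable_primes_one_div_mul_sub_one.neg

theorem hasProd_primes_one_sub_inv_pow_inv {k : ℕ} (hk : 1 < k) :
    HasProd (fun p : Nat.Primes ↦ (1 - ((p : ℝ) ^ k)⁻¹)⁻¹) (∑' n : ℕ, 1 / (n : ℝ) ^ k) := by
  let f : ℕ →*₀ ℝ := (invMonoidWithZeroHom.comp (powMonoidWithZeroHom (by omega : k ≠ 0))).comp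
    (Nat.castRingHom ℝ).toMonoidWithZeroHom
  have hf (n : ℕ) : f n = ((n : ℝ) ^ k)⁻¹ := rfl
  have hsum : Summable fun n ↦ ‖f n‖ := by
    simpa only [hf] using (Real.summable_nat_pow_inv.2 hk).norm
  simpa only [hf, one_div] using EulerProduct.eulerProduct_completely_multiplicative_hasProd hsum

theorem one_sub_one_div_mul_one_sub_inv_sq_inv {K : Type*} [Field K] {x : K} (h₀ : x ≠ 0)
    (h₁ : x - 1 ≠ 0) (h₂ : x + 1 ≠ 0) :
    (1 - 1 / (x * (x - 1))) * (1 - (x ^ 2)⁻¹)⁻¹ = 1 - 1 / ((x - 1) ^ 2 * (x + 1)) := by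
  have heuler : 1 - (x ^ 2)⁻¹ = (x - 1) * (x + 1) / x ^ 2 := by
    field_simp
    ring
  rw [heuler, inv_div]
  field_simp
  ring

theorem hasProd_artin_mul_zeta_two {A : ℝ}
    (hA : HasProd (fun p : Nat.Primes ↦ 1 - 1 / ((p : ℝ) * ((p : ℝ) - 1))) A) :
    HasProd (fun p : Nat.Primes ↦ 1 - 1 / (((p : ℝ) - 1) ^ 2 * ((p : ℝ) + 1)))
      (A * (Real.pi ^ 2 / 6)) := by
  have hprod := hA.mul (hasProd_primes_one_sub_inv_pow_inv one_lt_two)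
  rw [hasSum_zeta_two.tsum_eq] at hprod
  convert hprod using 2 with p
  have hp : (2 : ℝ) ≤ p := mod_cast p.2.two_le
  symm
  apply one_sub_one_div_mul_one_sub_inv_sq_inv <;> linarith

theorem one_div_sq_mul_le_sub {x : ℝ} (hx : 2 < x) :
    1 / ((x - 1) ^ 2 * (x + 1)) ≤
      1 / (2 * (x - 1) * (x - 2)) - 1 / (2 * (x + 1 - 1) * (x + 1 - 2)) := by
  have : 0 < x := by linarith
  have h₁ : 0 < x - 1 := by linarith
  have h₂ : 0 < x - 2 := by linarith
  calc 1 / ((x - 1) ^ 2 * (x + 1))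
      ≤ 1 / ((x - 1) * (x * (x - 2))) := by
        refine one_div_le_one_div_of_le (by positivity) ?_
        rw [sq, mul_assoc]
        exact mul_le_mul_of_nonneg_left (by nlinarith) h₁.le
    _ = 1 / (2 * (x - 1) * (x - 2)) - 1 / (2 * (x + 1 - 1) * (x + 1 - 2)) := by
        rw [add_sub_cancel_right, show x + 1 - 2 = x - 1 by ring]
        field_simp
        ring

theorem sum_one_div_sq_mul_le {N : ℕ} (hN : 2 < N) {t : Finset ℕ} (ht : ∀ n ∈ t, N ≤ n) :
    ∑ n ∈ t, 1 / (((n : ℝ) - 1) ^ 2 * ((n : ℝ) + 1)) ≤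
      1 / (2 * ((N : ℝ) - 1) * ((N : ℝ) - 2)) := by
  have htwo_lt {n : ℕ} (hn : n ≥ N) : (2 : ℝ) < n := mod_cast hN.trans_le hn
  refine sum_le_of_le_sub_succ (b := fun n ↦ 1 / (2 * ((n : ℝ) - 1) * ((n : ℝ) - 2)))
    (fun n _ ↦ by positivity) (fun n hn ↦ ?_) (fun n hn ↦ ?_) ht
  · have := htwo_lt hn
    exact one_div_nonneg.2 (mul_nonneg (by linarith) (by linarith))
  · simpa only [Nat.cast_succ] using one_div_sq_mul_le_sub (htwo_lt hn)

theorem prod_primesBelow_mul_le_artin_mul_zeta_two {A : ℝ}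
    (hA : HasProd (fun p : Nat.Primes ↦ 1 - 1 / ((p : ℝ) * ((p : ℝ) - 1))) A)
    {N : ℕ} (hN : 2 < N) :
    (∏ p ∈ N.primesBelow, (1 - 1 / (((p : ℝ) - 1) ^ 2 * ((p : ℝ) + 1)))) *
      (1 - 1 / (2 * ((N : ℝ) - 1) * ((N : ℝ) - 2))) ≤ A * (Real.pi ^ 2 / 6) := by
  rw [Nat.primesBelow, ← prod_subtype_eq_prod_filter]
  refine prod_one_sub_mul_le_of_hasProd (hasProd_artin_mul_zeta_two hA)
    (fun p ↦ by positivity) (fun p ↦ ?_) _ fun t ht ↦ ?_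
  · have hp : (2 : ℝ) ≤ p := mod_cast p.2.two_le
    exact div_le_one_of_le₀ (by nlinarith) (by positivity)
  · have hmap := sum_one_div_sq_mul_le hN (t := t.map ⟨(↑), Nat.Primes.coe_nat_injective⟩)
    rw [sum_map] at hmap
    refine hmap fun n hn ↦ ?_
    obtain ⟨p, hp, rfl⟩ := mem_map.1 hn
    by_contra! hlt
    exact disjoint_left.1 ht hp (mem_subtype.2 (mem_range.2 hlt))

set_option maxRecDepth 10000 in
theorem lt_prod_primesBelow_two_hundred :
    0.615133 <
      ∏ p ∈ Nat.primesBelow 200, (1 - 1 / (((p : ℝ) - 1) ^ 2 * ((p : ℝ) + 1))) := by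
  simp only [Nat.primesBelow, prod_filter, prod_range_succ, prod_range_zero]
  norm_num

/-- Artin's constant `∏_p (1 − 1/(p(p−1)))`, the product running over all primes,
converges and exceeds `0.37395`. -/
theorem artin_constant_gt :
    Multipliable (fun p : Nat.Primes => (1 - 1 / ((p : ℝ) * ((p : ℝ) - 1)))) ∧
      (∏' p : Nat.Primes, (1 - 1 / ((p : ℝ) * ((p : ℝ) - 1)))) > 0.37395 := by
  have hbound := prod_primesBelow_mul_le_artin_mul_zeta_two (N := 200)
    multipliable_artin_factors.hasProd (by norm_num)
  rw [Nat.cast_ofNat] at hbound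
  refine ⟨multipliable_artin_factors,
    lt_of_mul_lt_mul_right (a := Real.pi ^ 2 / 6) ?_ (by positivity)⟩
  calc 0.37395 * (Real.pi ^ 2 / 6)
      ≤ 0.37395 * (3.141593 ^ 2 / 6) := by
        gcongr
        exact Real.pi_lt_d6.le
    _ < 0.615133 * (1 - 1 / (2 * (200 - 1) * (200 - 2))) := by norm_num
    _ ≤ (∏ p ∈ Nat.primesBelow 200, (1 - 1 / (((p : ℝ) - 1) ^ 2 * ((p : ℝ) + 1)))) *
          (1 - 1 / (2 * (200 - 1) * (200 - 2))) :=
        mul_le_mul_of_nonneg_right lt_prod_primesBelow_two_hundred.le (by norm_num)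
    _ ≤ _ := hbound
end

section
/- The sum over all square-free integers a > 316 of 1/φ(a²) is less than 0.0096; that is, ∑_{a > 316} μ²(a)/φ(a²) < 0.0096. -/
/-!
The function `μ²(a)/φ(a²)` is multiplicative, so its partial sums over `a < N` are at most the
Euler product of `1 + 1/(p(p-1))` over the primes `p < N`. The factors with `p ≥ M` are bounded by
enlarging primes to all integers `n ≥ M` and `1/(n(n-1))` to `1/(n(n-2))`, after which the product
telescopes to at most `(M-1)/(M-2)`. With `M = 317` this bounds the full series by `1.949`,
while its terms with `a ≤ 316` already sum to more than `1.9403`.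
-/

section EulerBound

open Finset Nat

lemma hasSum_prime_pow_of_squarefree_support {R : Type*} [AddCommMonoid R] [One R]
    [TopologicalSpace R] {f : ℕ → R} (h_one : f 1 = 1) (h_sqf : ∀ n, ¬Squarefree n → f n = 0)
    {p : ℕ} (hp : p.Prime) :
    HasSum (fun e : ℕ ↦ f (p ^ e)) (1 + f p) := by
  have h_sum : ∑ e ∈ range 2, f (p ^ e) = 1 + f p := by simp [sum_range_succ, h_one]
  rw [← h_sum]
  refine hasSum_sum_of_ne_finset_zero fun e he ↦ h_sqf _ fun h ↦ he ?_
  rcases eq_or_ne e 0 with rfl | he₀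
  · simp
  · simp [((Nat.squarefree_pow_iff hp.ne_one he₀).mp h).2]

lemma sum_range_le_prod_primesBelow_one_add {f : ℕ → ℝ} (h_one : f 1 = 1)
    (h_mul : ∀ {m n : ℕ}, m.Coprime n → f (m * n) = f m * f n) (h_nonneg : ∀ n, 0 ≤ f n)
    (h_sqf : ∀ n, ¬Squarefree n → f n = 0) (N : ℕ) :
    ∑ n ∈ range N, f n ≤ ∏ p ∈ N.primesBelow, (1 + f p) := by
  have h_pow {p : ℕ} (hp : p.Prime) := hasSum_prime_pow_of_squarefree_support h_one h_sqf hp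
  have h_euler := (EulerProduct.summable_and_hasSum_smoothNumbers_prod_primesBelow_tsum
    h_one h_mul (fun hp ↦ (h_pow hp).summable.norm) N).2
  rw [prod_congr rfl fun p hp ↦ (h_pow (prime_of_mem_primesBelow hp)).tsum_eq] at h_euler
  have h_smooth := (hasSum_subtype_iff_indicator (f := f)).mp h_euler
  refine le_trans (sum_le_sum fun n hn ↦ ?_) <|
    sum_le_hasSum (range N) (fun n _ ↦ Set.indicator_nonneg (fun n _ ↦ h_nonneg n) n) h_smooth
  rcases n.eq_zero_or_pos with rfl | hn₀
  · exact (h_sqf 0 not_squarefree_zero).trans_le (Set.indicator_nonneg (fun n _ ↦ h_nonneg n) 0)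
  · rw [Set.indicator_of_mem (mem_smoothNumbers_of_lt hn₀ (mem_range.mp hn))]

end EulerBound

section Telescoping

open Finset

variable {K : Type*} [Field K] [LinearOrder K] [IsStrictOrderedRing K]

lemma prod_Ico_one_add_one_div_mul_sub_two {M N : ℕ} (hM : 2 < M) (hMN : M ≤ N) :
    ∏ n ∈ Ico M N, (1 + 1 / (n * (n - 2)) : K) = (M - 1) / (M - 2) * ((N - 2) / (N - 1)) := by
  have hM' : (2 : K) < M := mod_cast hM
  induction N, hMN using Nat.le_induction with
  | base =>
    have h₁ : (M - 1 : K) ≠ 0 := by linarith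
    have h₂ : (M - 2 : K) ≠ 0 := by linarith
    simp [field]
  | succ N hMN ih =>
    have hN : (M : K) ≤ N := mod_cast hMN
    have h₀ : (N : K) ≠ 0 := by linarith
    have h₁ : (N - 1 : K) ≠ 0 := by linarith
    have h₂ : (N - 2 : K) ≠ 0 := by linarith
    have h_step : (N - 2) / (N - 1) * (1 + 1 / (N * (N - 2)) : K) = (N - 1) / N := by
      field_simp
      ring
    rw [prod_Ico_succ_top hMN, ih, mul_assoc, h_step]
    push_cast
    congr 2 <;> ring

lemma prod_Ico_one_add_one_div_mul_sub_one_le {M : ℕ} (hM : 2 < M) (N : ℕ) :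
    ∏ n ∈ Ico M N, (1 + 1 / (n * (n - 1)) : K) ≤ (M - 1) / (M - 2) := by
  have hM' : (2 : K) < M := mod_cast hM
  have h_nonneg : (0 : K) ≤ (M - 1) / (M - 2) := div_nonneg (by linarith) (by linarith)
  rcases le_total M N with hMN | hNM
  · have hN : (M : K) ≤ N := mod_cast hMN
    calc
      _ ≤ ∏ n ∈ Ico M N, (1 + 1 / (n * (n - 2)) : K) := by
        refine prod_le_prod (fun n hn ↦ ?_) fun n hn ↦ ?_ <;>
          have hn : (M : K) ≤ n := mod_cast (mem_Ico.mp hn).1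
        · have : (0 : K) < n - 1 := by linarith
          positivity
        · have h_pos : (0 : K) < n * (n - 2) := mul_pos (by linarith) (by linarith)
          gcongr
          norm_num
      _ = (M - 1) / (M - 2) * ((N - 2) / (N - 1)) := prod_Ico_one_add_one_div_mul_sub_two hM hMN
      _ ≤ (M - 1) / (M - 2) :=
        mul_le_of_le_one_right h_nonneg (div_le_one_of_le₀ (by linarith) (by linarith))
  · rw [Ico_eq_empty_of_le hNM, prod_empty, one_le_div₀ (by linarith)]
    linarith

lemma prod_primesBelow_le_mul {M : ℕ} (hM : 2 < M) (N : ℕ) :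
    ∏ p ∈ N.primesBelow, (1 + 1 / (p * (p - 1)) : K) ≤
      (∏ p ∈ M.primesBelow, (1 + 1 / (p * (p - 1)) : K)) * ((M - 1) / (M - 2)) := by
  have h_one_le (n : ℕ) : (1 : K) ≤ 1 + 1 / (n * (n - 1)) := by
    rw [le_add_iff_nonneg_right]
    rcases n.eq_zero_or_pos with rfl | hn
    · simp
    · have : (0 : K) ≤ n - 1 := sub_nonneg.mpr (mod_cast hn)
      positivity
  have h_disj : Disjoint M.primesBelow (Ico M N) := disjoint_left.mpr fun p hp hp' ↦
    (Nat.lt_of_mem_primesBelow hp).not_ge (mem_Ico.mp hp').1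
  have h_subset : N.primesBelow ⊆ M.primesBelow ∪ Ico M N := fun p hp ↦ by
    simp only [mem_union, mem_Ico, Nat.mem_primesBelow] at hp ⊢
    grind
  have h_nonneg (n : ℕ) := zero_le_one.trans (h_one_le n)
  calc
    _ ≤ ∏ p ∈ M.primesBelow ∪ Ico M N, (1 + 1 / (p * (p - 1)) : K) :=
      prod_le_prod_of_subset_of_one_le h_subset (fun p _ ↦ h_nonneg p) fun p _ _ ↦ h_one_le p
    _ = (∏ p ∈ M.primesBelow, (1 + 1 / (p * (p - 1)) : K)) *
        ∏ n ∈ Ico M N, (1 + 1 / (n * (n - 1)) : K) := prod_union h_disj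
    _ ≤ _ := mul_le_mul_of_nonneg_left (prod_Ico_one_add_one_div_mul_sub_one_le hM N)
      (prod_nonneg fun p _ ↦ h_nonneg p)

end Telescoping

lemma totient_sq (a : ℕ) : (a ^ 2).totient = a * a.totient := by
  rcases a.eq_zero_or_pos with rfl | ha
  · simp
  · have h_gcd := Nat.totient_gcd_mul_totient_mul a a
    rw [Nat.gcd_self, mul_assoc, mul_comm a.totient a] at h_gcd
    rw [sq, Nat.eq_of_mul_eq_mul_left (Nat.totient_pos.mpr ha) h_gcd]

/-- The summand `μ²(a)/φ(a²)`; the factor `μ²(a)` is encoded as a case distinction, which gives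
the value `0` at `a = 0`. -/
noncomputable def squarefreeInvTotientSq (a : ℕ) : ℝ :=
  if Squarefree a then 1 / (a ^ 2).totient else 0

namespace squarefreeInvTotientSq

open Finset

lemma of_squarefree {a : ℕ} (ha : Squarefree a) :
    squarefreeInvTotientSq a = 1 / (a ^ 2).totient :=
  if_pos ha

lemma of_not_squarefree {a : ℕ} (ha : ¬Squarefree a) : squarefreeInvTotientSq a = 0 :=
  if_neg ha

lemma nonneg (a : ℕ) : 0 ≤ squarefreeInvTotientSq a := by
  unfold squarefreeInvTotientSq
  positivity

lemma map_one : squarefreeInvTotientSq 1 = 1 := by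
  simp [of_squarefree]

lemma map_mul_of_coprime {a b : ℕ} (hab : a.Coprime b) :
    squarefreeInvTotientSq (a * b) = squarefreeInvTotientSq a * squarefreeInvTotientSq b := by
  simp only [squarefreeInvTotientSq, Nat.squarefree_mul hab, mul_pow,
    Nat.totient_mul (hab.pow 2 2), Nat.cast_mul, ite_and]
  split_ifs <;> ring

lemma map_prime {p : ℕ} (hp : p.Prime) : squarefreeInvTotientSq p = 1 / (p * (p - 1)) := by
  rw [of_squarefree hp.prime.squarefree, totient_sq, Nat.totient_prime hp, Nat.cast_mul,
    Nat.cast_pred hp.pos]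

lemma sum_range_le {M : ℕ} (hM : 2 < M) (N : ℕ) :
    ∑ a ∈ range N, squarefreeInvTotientSq a ≤
      (∏ p ∈ M.primesBelow, (1 + 1 / (p * (p - 1)) : ℝ)) * ((M - 1) / (M - 2)) :=
  calc
    _ ≤ ∏ p ∈ N.primesBelow, (1 + squarefreeInvTotientSq p) :=
      sum_range_le_prod_primesBelow_one_add map_one map_mul_of_coprime nonneg
        (fun _ ↦ of_not_squarefree) N
    _ = ∏ p ∈ N.primesBelow, (1 + 1 / (p * (p - 1)) : ℝ) :=
      prod_congr rfl fun p hp ↦ by rw [map_prime (Nat.prime_of_mem_primesBelow hp)]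
    _ ≤ _ := prod_primesBelow_le_mul hM N

protected lemma summable : Summable squarefreeInvTotientSq :=
  summable_of_sum_range_le nonneg (sum_range_le (M := 3) (by norm_num))

lemma tsum_le {M : ℕ} (hM : 2 < M) :
    ∑' a, squarefreeInvTotientSq a ≤
      (∏ p ∈ M.primesBelow, (1 + 1 / (p * (p - 1)) : ℝ)) * ((M - 1) / (M - 2)) :=
  Real.tsum_le_of_sum_range_le nonneg (sum_range_le hM)

lemma sum_eq_cast_sum_rat (s : Finset ℕ) :
    ∑ a ∈ s, squarefreeInvTotientSq a =
      ((∑ a ∈ s with Squarefree a, 1 / (a * a.totient) : ℚ) : ℝ) := by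
  simp only [squarefreeInvTotientSq, totient_sq, ← sum_filter]
  push_cast
  rfl

lemma tsum_lt : ∑' a, squarefreeInvTotientSq a < 1.949 := by
  have h_rat : ∏ p ∈ Nat.primesBelow 317, (1 + 1 / (p * (p - 1)) : ℚ) ≤ 1.9428 := by
    decide +kernel
  have h_real := (Rat.cast_le (K := ℝ)).mpr h_rat
  push_cast at h_real
  have h_tsum := tsum_le (M := 317) (by norm_num)
  norm_num at h_tsum h_real ⊢
  linarith

lemma lt_sum_range : 1.9403 < ∑ a ∈ range 317, squarefreeInvTotientSq a := by
  have h_rat : (1.9403 : ℚ) < ∑ a ∈ range 317 with Squarefree a, 1 / (a * a.totient : ℚ) := by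
    decide +kernel
  have h_real := (Rat.cast_lt (K := ℝ)).mpr h_rat
  rw [← sum_eq_cast_sum_rat] at h_real
  norm_num at h_real ⊢
  exact h_real

end squarefreeInvTotientSq

/-- The sum over all square-free integers `a > 316` of `1/φ(a²)` is less than `0.0096`:
`∑_{a > 316} μ²(a)/φ(a²) < 0.0096`. -/
theorem tsum_squarefree_inv_totient_sq_lt :
    Summable (fun a : ℕ =>
        if 316 < a ∧ Squarefree a then (1 : ℝ) / (Nat.totient (a ^ 2)) else 0) ∧
    (∑' a : ℕ, if 316 < a ∧ Squarefree a then (1 : ℝ) / (Nat.totient (a ^ 2)) else 0)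
      < 0.0096 := by
  have h_indicator :
      (fun a : ℕ ↦ if 316 < a ∧ Squarefree a then (1 : ℝ) / (Nat.totient (a ^ 2)) else 0) =
        (↑(Finset.range 317) : Set ℕ)ᶜ.indicator squarefreeInvTotientSq := by
    ext a
    simp [Set.indicator_apply, squarefreeInvTotientSq, ite_and, Nat.succ_le_iff]
  rw [h_indicator]
  refine ⟨squarefreeInvTotientSq.summable.indicator _, ?_⟩
  rw [← tsum_subtype]
  have h_split := squarefreeInvTotientSq.summable.sum_add_tsum_compl (s := Finset.range 317)
  linarith [squarefreeInvTotientSq.tsum_lt, squarefreeInvTotientSq.lt_sum_range]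
end
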